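/- arXiv:2205.06211 — 2 statements merged into one kernel-verified Lean document; each statement's English description precedes it below -/
import Mathlib

section
/- Let ω be a modulus of continuity of order n ∈ ℕ, let D ⊂ ℝ^d be a bounded Lipschitz domain, and let T be a homogeneous C^{n+1}-smooth Calderón–Zygmund operator. If the restricted operator T_D is bounded on 𝒞_ω(D) (there exists C′ such that every f ∈ 𝒞_ω(D) satisfies T_D f ∈ 𝒞_ω(D) and ‖T_D f‖_{ω,D} + ‖T_D f‖_{L¹(D)} ≤ C′·(‖f‖_{ω,D} + ‖f‖_{L¹(D)})), then: (i) for every polynomial P ∈ 𝒫_n one has T_D(P·χ_D) ∈ 𝒞_ω(D); and (ii) there exists a constant C such that for every cube Q ⊂ D centered at x₀ and every polynomial P that is homogeneous of degree n with respect to x − x₀ there exists a polynomial S_Q ∈ 𝒫_n with (1/|Q|)∫_Q |T_D(P·χ_D) − S_Q| dx ≤ C·‖P‖_{L^∞(D)}·ω̃(ℓ(Q)). -/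
open MeasureTheory Filter Set Metric
open scoped ENNReal Topology InnerProductSpace

noncomputable section

/-- The axis-parallel closed cube in `ℝ^d` with center `x₀` and side length `l`. -/
def cube {d : ℕ} (x₀ : EuclideanSpace ℝ (Fin d)) (l : ℝ) : Set (EuclideanSpace ℝ (Fin d)) :=
  {x | ∀ i, |x i - x₀ i| ≤ l / 2}

/-- `𝒫_n`: functions on `ℝ^d` given by polynomials of total degree at most `n`. -/
def PolyLE (d n : ℕ) : Set (EuclideanSpace ℝ (Fin d) → ℝ) :=
  {P | ∃ p : MvPolynomial (Fin d) ℝ, p.totalDegree ≤ n ∧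
    ∀ x, MvPolynomial.eval (fun i => x i) p = P x}

/-- The Campanato-type Zygmund seminorm `‖f‖_{ω,D}` (valued in `ℝ≥0∞`). -/
def zygSeminorm {d : ℕ} (ω : ℝ → ℝ) (n : ℕ) (D : Set (EuclideanSpace ℝ (Fin d)))
    (f : EuclideanSpace ℝ (Fin d) → ℝ) : ℝ≥0∞ :=
  ⨆ (x₀ : EuclideanSpace ℝ (Fin d)) (l : ℝ) (_ : 0 < l) (_ : cube x₀ l ⊆ D),
    ⨅ (P : EuclideanSpace ℝ (Fin d) → ℝ) (_ : P ∈ PolyLE d n),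
      (ENNReal.ofReal (ω l * l ^ d))⁻¹ * ∫⁻ x in cube x₀ l, ENNReal.ofReal |f x - P x|

/-- The `L¹(D)` norm (valued in `ℝ≥0∞`). -/
def l1Norm {d : ℕ} (D : Set (EuclideanSpace ℝ (Fin d)))
    (f : EuclideanSpace ℝ (Fin d) → ℝ) : ℝ≥0∞ :=
  ∫⁻ x in D, ENNReal.ofReal |f x|

/-- The two regularity conditions of order `m` for a modulus of continuity:
`ω(t)/t^q` almost decreasing for some `m ≤ q < m+1`, and `ω(t)/t^r` almost
increasing for some `m-1 < r < m`. -/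
def ModulusConds (ω : ℝ → ℝ) (m : ℕ) : Prop :=
  (∃ q : ℝ, (m : ℝ) ≤ q ∧ q < (m : ℝ) + 1 ∧ ∃ C : ℝ, 0 < C ∧
      ∀ s t : ℝ, 1 < s → 0 < t → ω (s * t) ≤ C * s ^ q * ω t) ∧
  (∃ r : ℝ, (m : ℝ) - 1 < r ∧ r < (m : ℝ) ∧ ∃ C : ℝ, 0 < C ∧
      ∀ s t : ℝ, 0 < s → s < 1 → 0 < t → ω (s * t) ≤ C * s ^ r * ω t)

/-- `ω` is a modulus of continuity of order `n`: continuous, increasing, `ω(0)=0`,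
nonnegative, and `n` is the smallest positive integer satisfying the two
regularity conditions. -/
structure IsModulusOfOrder (ω : ℝ → ℝ) (n : ℕ) : Prop where
  continuousOn : ContinuousOn ω (Set.Ici 0)
  monotoneOn : MonotoneOn ω (Set.Ici 0)
  nonneg : ∀ t, 0 ≤ t → 0 ≤ ω t
  map_zero : ω 0 = 0
  npos : 0 < n
  conds : ModulusConds ω n
  minimal : ∀ m : ℕ, 0 < m → ModulusConds ω m → n ≤ m

/-- `ξ(r) = ∫_r^1 ω(t) t^{-n-1} dt`. -/
def xi (ω : ℝ → ℝ) (n : ℕ) (r : ℝ) : ℝ :=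
  ∫ t in Set.Ioc r 1, ω t / t ^ (n + 1)

/-- The associated modulus of continuity `ω̃(x) = ω(x)/max{1, ξ(x)}`. -/
def omegaTilde (ω : ℝ → ℝ) (n : ℕ) (x : ℝ) : ℝ :=
  ω x / max 1 (xi ω n x)

/-- `D ⊂ ℝ^d` is a bounded Lipschitz domain: it is open, connected, bounded, and near
every boundary point, after a rigid motion, it coincides inside an `R`-window with the
region above the graph of a Lipschitz function (with Lipschitz constant at most `δ`). -/
def IsLipschitzDomain {d : ℕ} (D : Set (EuclideanSpace ℝ (Fin d))) : Prop :=
  IsOpen D ∧ IsConnected D ∧ Bornology.IsBounded D ∧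
  ∃ δ R : ℝ, 0 < δ ∧ 0 < R ∧
    ∀ a ∈ frontier D,
      ∃ (g : EuclideanSpace ℝ (Fin d) ≃ᵢ EuclideanSpace ℝ (Fin d)) (j : Fin d)
        (A : EuclideanSpace ℝ (Fin d) → ℝ),
        g a = 0 ∧
        LipschitzWith (Real.toNNReal δ) A ∧
        (∀ x y : EuclideanSpace ℝ (Fin d), (∀ i, i ≠ j → x i = y i) → A x = A y) ∧
        (g '' D) ∩ cube 0 R = {x ∈ cube (0 : EuclideanSpace ℝ (Fin d)) R | A x < x j}

/-- `Ω` is the density of a `C^k`-smooth homogeneous Calderón–Zygmund kernel: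
homogeneous of degree `0`, `C^k` away from the origin, with zero mean on the
unit sphere. -/
structure IsCZDensity (d : ℕ) (k : ℕ∞) (Ω : EuclideanSpace ℝ (Fin d) → ℝ) : Prop where
  homog : ∀ c : ℝ, 0 < c → ∀ x : EuclideanSpace ℝ (Fin d), Ω (c • x) = Ω x
  smooth : ContDiffOn ℝ k Ω {x : EuclideanSpace ℝ (Fin d) | x ≠ 0}
  meanZero : ∫ x : Metric.sphere (0 : EuclideanSpace ℝ (Fin d)) 1,
      Ω x ∂((volume : Measure (EuclideanSpace ℝ (Fin d))).toSphere) = 0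

/-- `g = T_D f`: `g` vanishes off `D` and, for a.e. `y ∈ D`, `g y` is the principal
value `lim_{ε→0+} ∫_{x ∈ D, |y-x|>ε} f(x) K(y-x) dx` (here `f` is implicitly
multiplied by `χ_D`). -/
def IsRestrictedCZ {d : ℕ} (D : Set (EuclideanSpace ℝ (Fin d)))
    (K : EuclideanSpace ℝ (Fin d) → ℝ) (f g : EuclideanSpace ℝ (Fin d) → ℝ) : Prop :=
  (∀ y, y ∉ D → g y = 0) ∧
  ∀ᵐ y ∂(volume.restrict D),
    Tendsto (fun ε : ℝ => ∫ x in {x ∈ D | ε < dist y x}, f x * K (y - x))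
      (𝓝[>] (0 : ℝ)) (𝓝 (g y))

/-- `P` is a polynomial of near best approximation (with constant `C₀`) for `f`
on the cube with center `x₀` and side length `l`. -/
def IsNearBestApprox {d : ℕ} (ω : ℝ → ℝ) (n : ℕ) (D : Set (EuclideanSpace ℝ (Fin d)))
    (f : EuclideanSpace ℝ (Fin d) → ℝ) (C₀ : ℝ) (x₀ : EuclideanSpace ℝ (Fin d)) (l : ℝ)
    (P : EuclideanSpace ℝ (Fin d) → ℝ) : Prop :=
  P ∈ PolyLE d n ∧
    (ENNReal.ofReal (l ^ d))⁻¹ * ∫⁻ x in cube x₀ l, ENNReal.ofReal |f x - P x| ≤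
      ENNReal.ofReal (C₀ * ω l) * zygSeminorm ω n D f

/-!
Fix a cube `Q` of side length `l ≈ 2⁻ᵐ` centered at `x₀` and a polynomial `P`, homogeneous of
degree `n` in `x - x₀`, with `|P| ≤ M` on `D`. With a smooth cutoff `χ`, put
`h(x) = ∑ k < m, ω(2⁻ᵏ) 2ᵏⁿ χ(2ᵏ (x - x₀))`. By homogeneity `h P` is a sum of dilates
`ω(2⁻ᵏ) ψ(2ᵏ (x - x₀))` of the single profile `ψ = χ P(x₀ + ·)`, and the growth conditions on `ω`
bound the norm of this sum in `𝒞_ω(D)` by `C M`, uniformly in `m`. On `Q` the function `h` equals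
the constant `H = ∑ k < m, ω(2⁻ᵏ) 2ᵏⁿ`, so there
`H T_D P = T_D (h P) - ∫_D (h(x) - H) P(x) K(· - x) dx`.
The boundedness of `T_D` controls the first term. In the second one the density vanishes near `Q`,
and Taylor expansion of `K` of order `n` approximates it by a polynomial up to `C M ω(l)`.
Dividing by `H`, which dominates a multiple of `max 1 (ξ(l))`, gives the decay `ω̃(l)`.
-/

local notation "𝔼" d:max => EuclideanSpace ℝ (Fin d)

/-! ### Polynomials of bounded degree -/

lemma totalDegree_bind₁_le {σ τ R : Type*} [CommSemiring R] {f : σ → MvPolynomial τ R}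
    (hf : ∀ i, (f i).totalDegree ≤ 1) (p : MvPolynomial σ R) :
    (MvPolynomial.bind₁ f p).totalDegree ≤ p.totalDegree := by
  rw [← MvPolynomial.aeval_eq_bind₁, MvPolynomial.aeval_def, MvPolynomial.eval₂_eq]
  refine MvPolynomial.totalDegree_finsetSum_le fun α hα => ?_
  refine (MvPolynomial.totalDegree_mul _ _).trans ?_
  rw [MvPolynomial.algebraMap_eq, MvPolynomial.totalDegree_C, zero_add]
  refine (MvPolynomial.totalDegree_finsetProd _ _).trans ?_
  refine le_trans (Finset.sum_le_sum fun i _ => ?_) (MvPolynomial.le_totalDegree hα)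
  exact (MvPolynomial.totalDegree_pow _ _).trans (mul_le_of_le_one_right (Nat.zero_le _) (hf i))

/-- The vector space `𝒫_n` of polynomial functions, i.e. `PolyLE d n` with its linear structure. -/
def polyLESubmodule (d n : ℕ) : Submodule ℝ (𝔼 d → ℝ) where
  carrier := PolyLE d n
  zero_mem' := ⟨0, by simp, by simp⟩
  add_mem' := by
    rintro P Q ⟨p, hp, hpP⟩ ⟨q, hq, hqQ⟩
    exact ⟨p + q, (MvPolynomial.totalDegree_add p q).trans (max_le hp hq),
      fun x => by simp [hpP, hqQ]⟩
  smul_mem' := by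
    rintro c P ⟨p, hp, hpP⟩
    exact ⟨c • p, (MvPolynomial.totalDegree_smul_le c p).trans hp, fun x => by simp [hpP]⟩

namespace PolyLE

variable {d n : ℕ} {P Q : 𝔼 d → ℝ}

lemma sub (hP : P ∈ PolyLE d n) (hQ : Q ∈ PolyLE d n) : P - Q ∈ PolyLE d n :=
  (polyLESubmodule d n).sub_mem hP hQ

lemma smul (c : ℝ) (hP : P ∈ PolyLE d n) : c • P ∈ PolyLE d n :=
  (polyLESubmodule d n).smul_mem c hP

lemma sum {ι : Type*} {s : Finset ι} {F : ι → 𝔼 d → ℝ} (hF : ∀ i ∈ s, F i ∈ PolyLE d n) :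
    ∑ i ∈ s, F i ∈ PolyLE d n :=
  (polyLESubmodule d n).sum_mem hF

lemma contDiff {k : WithTop ℕ∞} (hP : P ∈ PolyLE d n) : ContDiff ℝ k P := by
  obtain ⟨p, -, hpP⟩ := hP
  rw [← funext hpP]
  exact (AnalyticOnNhd.eval_mvPolynomial p).contDiff.comp (by fun_prop)

lemma continuous (hP : P ∈ PolyLE d n) : Continuous P := (contDiff (k := 0) hP).continuous

lemma comp_smul_sub (hP : P ∈ PolyLE d n) (c : ℝ) (b : 𝔼 d) :
    (fun x => P (c • (x - b))) ∈ PolyLE d n := by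
  obtain ⟨p, hp, hpP⟩ := hP
  let f (i : Fin d) : MvPolynomial (Fin d) ℝ := .C c * (.X i - .C (b i))
  have hf (i : Fin d) : (f i).totalDegree ≤ 1 := by
    refine (MvPolynomial.totalDegree_mul _ _).trans ?_
    rw [MvPolynomial.totalDegree_C, zero_add]
    exact (MvPolynomial.totalDegree_sub_C_le _ _).trans (MvPolynomial.totalDegree_X i).le
  refine ⟨MvPolynomial.bind₁ f p, (totalDegree_bind₁_le hf p).trans hp, fun x => ?_⟩
  simpa [f, hpP, MvPolynomial.aeval_eq_eval, ← hpP (c • (x - b))] using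
    MvPolynomial.aeval_bind₁ (R := ℝ) (fun i => x i) f p

lemma multilinear_diag {k : ℕ} (hk : k ≤ n) (m : MultilinearMap ℝ (fun _ : Fin k => 𝔼 d) ℝ) :
    (fun y => m fun _ => y) ∈ PolyLE d n := by
  let e (i : Fin d) : 𝔼 d := EuclideanSpace.single i 1
  have expand (y : 𝔼 d) : m (fun _ => y) =
      ∑ r : Fin k → Fin d, (∏ j, y (r j)) * m (fun j => e (r j)) := by
    have hy : y = ∑ i, y i • e i := by ext j; simp [e, Pi.single_apply]
    conv_lhs => rw [hy]
    rw [m.map_sum fun _ i => y i • e i]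
    exact Finset.sum_congr rfl fun r _ => by rw [m.map_smul_univ, smul_eq_mul]
  refine ⟨∑ r : Fin k → Fin d, (∏ j, .X (r j)) * .C (m fun j => e (r j)), ?_, fun y => ?_⟩
  · refine MvPolynomial.totalDegree_finsetSum_le fun r _ => ?_
    refine (MvPolynomial.totalDegree_mul _ _).trans ?_
    rw [MvPolynomial.totalDegree_C, add_zero]
    refine (MvPolynomial.totalDegree_finsetProd _ _).trans ?_
    simpa [MvPolynomial.totalDegree_X] using hk
  · simp [expand]

end PolyLE

/-! ### Cubes -/

section Cube

variable {d : ℕ} {x x₀ : 𝔼 d} {l : ℝ}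

lemma self_mem_cube (hl : 0 ≤ l) : x₀ ∈ cube x₀ l := fun i => by
  rw [sub_self, abs_zero]; positivity

lemma norm_le_sum_abs (x : 𝔼 d) : ‖x‖ ≤ ∑ i, |x i| := by
  rw [EuclideanSpace.norm_eq]
  refine Real.sqrt_le_iff.2 ⟨Finset.sum_nonneg fun _ _ => abs_nonneg _, ?_⟩
  simpa only [Real.norm_eq_abs] using Finset.sum_sq_le_sq_sum_of_nonneg fun _ _ => abs_nonneg _

lemma norm_sub_le_of_mem_cube (hx : x ∈ cube x₀ l) : ‖x - x₀‖ ≤ d * (l / 2) :=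
  calc ‖x - x₀‖ ≤ ∑ i, |(x - x₀) i| := norm_le_sum_abs _
    _ ≤ ∑ _ : Fin d, l / 2 := Finset.sum_le_sum fun i _ => hx i
    _ = d * (l / 2) := by simp

lemma cube_eq_preimage_Icc (x₀ : 𝔼 d) (l : ℝ) :
    cube x₀ l = WithLp.ofLp ⁻¹' Icc (fun i => x₀ i - l / 2) (fun i => x₀ i + l / 2) := by
  ext x
  simp only [cube, mem_ofPred_eq, mem_preimage, mem_Icc, Pi.le_def, ← forall_and,
    abs_sub_le_iff, sub_le_iff_le_add]
  exact forall_congr' fun i => by constructor <;> rintro ⟨h₁, h₂⟩ <;> constructor <;> linarith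

lemma volume_cube (x₀ : 𝔼 d) (hl : 0 ≤ l) : volume (cube x₀ l) = ENNReal.ofReal (l ^ d) := by
  rw [cube_eq_preimage_Icc, (PiLp.volume_preserving_ofLp (Fin d)).measure_preimage
    measurableSet_Icc.nullMeasurableSet, Real.volume_Icc_pi]
  simp [← ENNReal.ofReal_pow hl]

lemma isClosed_cube (x₀ : 𝔼 d) (l : ℝ) : IsClosed (cube x₀ l) := by
  rw [cube_eq_preimage_Icc]
  exact isClosed_Icc.preimage (by fun_prop)

lemma isCompact_cube (x₀ : 𝔼 d) (l : ℝ) : IsCompact (cube x₀ l) :=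
  isCompact_of_isClosed_isBounded (isClosed_cube x₀ l) <|
    isBounded_closedBall.subset fun _ hx => mem_closedBall_iff_norm.2 (norm_sub_le_of_mem_cube hx)

lemma exists_cube_subset {D : Set (𝔼 d)} (hD : IsOpen D) (hx : x ∈ D) :
    ∃ l > 0, cube x l ⊆ D := by
  obtain ⟨ρ, hρ, hball⟩ := Metric.isOpen_iff.1 hD x hx
  have hd : (0 : ℝ) < d + 1 := by positivity
  refine ⟨ρ / (d + 1), by positivity, fun y hy => hball ?_⟩
  rw [mem_ball, dist_eq_norm]
  calc ‖y - x‖ ≤ d * (ρ / (d + 1) / 2) := norm_sub_le_of_mem_cube hy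
    _ < (d + 1) * (ρ / (d + 1)) := by nlinarith [div_pos hρ hd, Nat.cast_nonneg (α := ℝ) d]
    _ = ρ := mul_div_cancel₀ ρ hd.ne'

end Cube

/-! ### Taylor expansion -/

/-- The Taylor polynomial of `F` of degree `n` at `a`, as a function of the increment `v`. -/
def taylorPoly {E G : Type*} [NormedAddCommGroup E] [NormedSpace ℝ E] [NormedAddCommGroup G]
    [NormedSpace ℝ G] (n : ℕ) (F : E → G) (a v : E) : G :=
  ∑ k ∈ Finset.range (n + 1), (k.factorial : ℝ)⁻¹ • iteratedFDeriv ℝ k F a fun _ => v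

lemma norm_sub_taylorPoly_le {E G : Type*} [NormedAddCommGroup E] [NormedSpace ℝ E]
    [NormedAddCommGroup G] [NormedSpace ℝ G] [CompleteSpace G] {n : ℕ} {F : E → G} {a v : E} {B : ℝ}
    (hF : ∀ t ∈ Icc (0 : ℝ) 1, ContDiffAt ℝ (n + 1) F (a + t • v))
    (hB : ∀ t ∈ Icc (0 : ℝ) 1, ‖iteratedFDeriv ℝ (n + 1) F (a + t • v)‖ ≤ B) :
    ‖F (a + v) - taylorPoly n F a v‖ ≤ B * ‖v‖ ^ (n + 1) := by
  rw [taylorPoly, map_add_eq_sum_add_integral_iteratedFDeriv hF, add_sub_cancel_left, norm_smul]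
  have factorial_inv_le : ‖(n.factorial : ℝ)⁻¹‖ ≤ 1 := by
    rw [norm_inv, RCLike.norm_natCast]
    exact inv_le_one_of_one_le₀ (mod_cast n.factorial_pos)
  have integrand_le (t : ℝ) (ht : t ∈ uIoc (0 : ℝ) 1) :
      ‖(1 - t) ^ n • iteratedFDeriv ℝ (n + 1) F (a + t • v) fun _ => v‖ ≤ B * ‖v‖ ^ (n + 1) := by
    rw [uIoc_of_le zero_le_one] at ht
    have one_sub_le : ‖(1 - t) ^ n‖ ≤ 1 := by
      rw [norm_pow, Real.norm_of_nonneg (sub_nonneg.2 ht.2)]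
      exact pow_le_one₀ (sub_nonneg.2 ht.2) (by linarith [ht.1])
    have deriv_le : ‖iteratedFDeriv ℝ (n + 1) F (a + t • v) fun _ => v‖ ≤ B * ‖v‖ ^ (n + 1) := by
      refine (ContinuousMultilinearMap.le_opNorm _ _).trans ?_
      simp only [Finset.prod_const, Finset.card_univ, Fintype.card_fin]
      gcongr
      exact hB t ⟨ht.1.le, ht.2⟩
    rw [norm_smul]
    exact (mul_le_of_le_one_left (norm_nonneg _) one_sub_le).trans deriv_le
  refine (mul_le_of_le_one_left (norm_nonneg _) factorial_inv_le).trans ?_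
  simpa using intervalIntegral.norm_integral_le_of_norm_le_const integrand_le

lemma taylorPoly_mem_polyLE {d : ℕ} (n : ℕ) (F : 𝔼 d → ℝ) (a : 𝔼 d) :
    taylorPoly n F a ∈ PolyLE d n := by
  have : taylorPoly n F a = ∑ k ∈ Finset.range (n + 1),
      (k.factorial : ℝ)⁻¹ • fun v => iteratedFDeriv ℝ k F a fun _ => v := by
    ext v
    simp [taylorPoly]
  rw [this]
  exact PolyLE.sum fun k hk => PolyLE.smul _ <|
    PolyLE.multilinear_diag (Nat.lt_succ_iff.1 (Finset.mem_range.1 hk)) _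

/-! ### Moduli of continuity -/

/-- A nonnegative increasing function on `[0, ∞)` with the two growth conditions of order `n > 0`.
Unlike in `IsModulusOfOrder`, the order `n` may be any one for which these conditions hold. -/
structure IsRegularModulus (ω : ℝ → ℝ) (n : ℕ) : Prop where
  monotoneOn : MonotoneOn ω (Ici 0)
  nonneg : ∀ t, 0 ≤ t → 0 ≤ ω t
  npos : 0 < n
  conds : ModulusConds ω n

lemma IsModulusOfOrder.isRegularModulus {ω : ℝ → ℝ} {n : ℕ} (hω : IsModulusOfOrder ω n) :
    IsRegularModulus ω n :=
  ⟨hω.monotoneOn, hω.nonneg, hω.npos, hω.conds⟩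

lemma sum_rpow_of_le_one_le {β s : ℝ} (hβ : 0 < β) (hs : 0 < s) (m : ℕ) :
    ∑ k ∈ Finset.range m, (if 2 ^ k * s ≤ 1 then (2 ^ k * s) ^ β else 0)
      ≤ 2 ^ β / (2 ^ β - 1) := by
  have two_rpow_sub_pos : (0 : ℝ) < 2 ^ β - 1 := sub_pos.2 (Real.one_lt_rpow one_lt_two hβ)
  suffices partial_sum_le : ∑ k ∈ Finset.range m, (if 2 ^ k * s ≤ 1 then (2 ^ k * s) ^ β else 0)
      ≤ min (2 ^ m * s) 2 ^ β / (2 ^ β - 1) by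
    refine partial_sum_le.trans ?_
    gcongr
    exact min_le_right _ _
  induction m with
  | zero => simp only [Finset.range_zero, Finset.sum_empty]; positivity
  | succ m ih =>
    have double : 2 ^ (m + 1) * s = 2 * (2 ^ m * s) := by ring
    have hx : 0 < 2 ^ m * s := by positivity
    rw [Finset.sum_range_succ, double]
    generalize 2 ^ m * s = x at *
    split_ifs with h
    · rw [min_eq_left (by linarith)] at ih ⊢
      rw [Real.mul_rpow zero_le_two hx.le]
      rw [le_div_iff₀ two_rpow_sub_pos] at ih ⊢
      linarith
    · rw [add_zero]
      refine ih.trans ?_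
      gcongr
      linarith

lemma sum_rpow_neg_of_one_lt_le {r s : ℝ} (hr : 0 < r) (hs : 0 < s) (m : ℕ) :
    ∑ k ∈ Finset.range m, (if 2 ^ k * s ≤ 1 then 0 else (2 ^ k * s) ^ (-r))
      ≤ 1 / (1 - 2 ^ (-r)) := by
  have two_rpow_neg_lt : (2 : ℝ) ^ (-r) < 1 :=
    Real.rpow_lt_one_of_one_lt_of_neg one_lt_two (neg_lt_zero.2 hr)
  have one_sub_pos := sub_pos.2 two_rpow_neg_lt
  suffices partial_sum_le :
      ∑ k ∈ Finset.range m, (if 2 ^ k * s ≤ 1 then 0 else (2 ^ k * s) ^ (-r))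
        ≤ (1 - min 1 ((2 ^ m * s) ^ (-r))) / (1 - 2 ^ (-r)) by
    refine partial_sum_le.trans ?_
    gcongr
    exact sub_le_self _ (by positivity)
  induction m with
  | zero =>
    simp only [Finset.range_zero, Finset.sum_empty]
    exact div_nonneg (sub_nonneg.2 (min_le_left _ _)) one_sub_pos.le
  | succ m ih =>
    have hx : 0 < 2 ^ m * s := by positivity
    have double : (2 ^ (m + 1) * s) ^ (-r) = 2 ^ (-r) * (2 ^ m * s) ^ (-r) := by
      rw [← Real.mul_rpow zero_le_two hx.le]; congr 1; ring
    rw [Finset.sum_range_succ, double]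
    have double_le : 2 ^ (-r) * (2 ^ m * s) ^ (-r) ≤ (2 ^ m * s) ^ (-r) :=
      mul_le_of_le_one_left (by positivity) two_rpow_neg_lt.le
    split_ifs with h
    · rw [add_zero]
      refine ih.trans ?_
      gcongr
    · have rpow_lt_one : (2 ^ m * s) ^ (-r) < 1 :=
        Real.rpow_lt_one_of_one_lt_of_neg (not_le.1 h) (neg_lt_zero.2 hr)
      rw [min_eq_right rpow_lt_one.le] at ih
      rw [min_eq_right (double_le.trans rpow_lt_one.le)]
      rw [le_div_iff₀ one_sub_pos] at ih ⊢
      linarith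

namespace IsRegularModulus

variable {ω : ℝ → ℝ} {n : ℕ}

lemma pos_or_eq_zero (hω : IsRegularModulus ω n) :
    (∀ t, 0 < t → 0 < ω t) ∨ ∀ t, 0 < t → ω t = 0 := by
  by_contra! ⟨⟨t, ht, hωt⟩, s, hs, hωs⟩
  refine hωs (le_antisymm ?_ (hω.nonneg s hs.le))
  rcases le_or_gt s t with hst | hts
  · exact (hω.monotoneOn hs.le ht.le hst).trans hωt
  · obtain ⟨⟨q, -, -, C, hC, growth⟩, -⟩ := hω.conds
    have := growth (s / t) t ((one_lt_div ht).2 hts) ht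
    rw [div_mul_cancel₀ _ ht.ne'] at this
    exact this.trans (mul_nonpos_of_nonneg_of_nonpos (by positivity) hωt)

lemma exists_mul_pow_le (hω : IsRegularModulus ω n) :
    ∃ β > 0, ∃ C > 0, ∀ x s, 0 < x → x ≤ 1 → 0 < s →
      ω (x⁻¹ * s) * x ^ (n + 1) ≤ C * ω s * x ^ (β : ℝ) := by
  obtain ⟨⟨q, -, hq, C, hC, growth⟩, -⟩ := hω.conds
  refine ⟨n + 1 - q, by linarith, max C 1, by positivity, fun x s hx hx1 hs => ?_⟩
  have hωs := hω.nonneg s hs.le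
  have upper : ω (x⁻¹ * s) ≤ max C 1 * x⁻¹ ^ q * ω s := by
    rcases hx1.lt_or_eq with hx1 | rfl
    · refine (growth _ _ (one_lt_inv_iff₀.2 ⟨hx, hx1⟩) hs).trans ?_
      gcongr
      exact le_max_left _ _
    · simpa using le_mul_of_one_le_left hωs (le_max_right C 1)
  calc ω (x⁻¹ * s) * x ^ (n + 1) ≤ max C 1 * x⁻¹ ^ q * ω s * x ^ (n + 1) := by gcongr
    _ = max C 1 * ω s * (x ^ (-q) * x ^ ((n + 1 : ℕ) : ℝ)) := by
      rw [Real.inv_rpow hx.le, ← Real.rpow_neg hx.le, Real.rpow_natCast]; ring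
    _ = max C 1 * ω s * x ^ (n + 1 - q) := by
      rw [← Real.rpow_add hx]; congr 2; push_cast; ring

lemma exists_le_rpow_neg (hω : IsRegularModulus ω n) :
    ∃ r > 0, ∃ C > 0, ∀ x s, 1 < x → 0 < s → ω (x⁻¹ * s) ≤ C * ω s * x ^ (-r : ℝ) := by
  obtain ⟨-, r, hr, -, C, hC, decay⟩ := hω.conds
  have one_le_n : (1 : ℝ) ≤ n := mod_cast hω.npos
  refine ⟨r, by linarith, C, hC, fun x s hx hs => ?_⟩
  have hx0 := zero_lt_one.trans hx
  refine (decay _ _ (inv_pos.2 hx0) (inv_lt_one_of_one_lt₀ hx) hs).trans_eq ?_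
  rw [Real.inv_rpow hx0.le, ← Real.rpow_neg hx0.le]
  ring

lemma exists_sum_mul_min_le (hω : IsRegularModulus ω n) :
    ∃ C > 0, ∀ s, 0 < s → ∀ m : ℕ,
      ∑ k ∈ Finset.range m, ω (2 ^ k)⁻¹ * min 1 ((2 ^ k * s) ^ (n + 1)) ≤ C * ω s := by
  obtain ⟨β, hβ, C₁, hC₁, small⟩ := hω.exists_mul_pow_le
  obtain ⟨r, hr, C₂, hC₂, large⟩ := hω.exists_le_rpow_neg
  have two_rpow_sub_pos : (0 : ℝ) < 2 ^ β - 1 := sub_pos.2 (Real.one_lt_rpow one_lt_two hβ)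
  have one_sub_pos : (0 : ℝ) < 1 - 2 ^ (-r) :=
    sub_pos.2 (Real.rpow_lt_one_of_one_lt_of_neg one_lt_two (neg_lt_zero.2 hr))
  refine ⟨C₁ * (2 ^ β / (2 ^ β - 1)) + C₂ * (1 / (1 - 2 ^ (-r))), by positivity,
    fun s hs m => ?_⟩
  have hωs := hω.nonneg s hs.le
  have term_le (k : ℕ) : ω (2 ^ k)⁻¹ * min 1 ((2 ^ k * s) ^ (n + 1)) ≤
      C₁ * ω s * (if 2 ^ k * s ≤ 1 then (2 ^ k * s) ^ β else 0) +
      C₂ * ω s * (if 2 ^ k * s ≤ 1 then 0 else (2 ^ k * s) ^ (-r)) := by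
    have hx : 0 < 2 ^ k * s := by positivity
    rw [show ((2 : ℝ) ^ k)⁻¹ = (2 ^ k * s)⁻¹ * s by field_simp]
    generalize 2 ^ k * s = x at *
    have hωx := hω.nonneg (x⁻¹ * s) (by positivity)
    split_ifs with h
    · rw [mul_zero, add_zero]
      exact (mul_le_mul_of_nonneg_left (min_le_right _ _) hωx).trans (small x s hx h hs)
    · rw [mul_zero, zero_add]
      exact (mul_le_of_le_one_right hωx (min_le_left _ _)).trans (large x s (not_le.1 h) hs)
  refine (Finset.sum_le_sum fun k _ => term_le k).trans ?_
  rw [Finset.sum_add_distrib, ← Finset.mul_sum, ← Finset.mul_sum, add_mul,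
    mul_right_comm C₁, mul_right_comm C₂]
  gcongr
  exacts [sum_rpow_of_le_one_le hβ hs m, sum_rpow_neg_of_one_lt_le hr hs m]

lemma exists_sum_le (hω : IsRegularModulus ω n) :
    ∃ C, ∀ m : ℕ, ∑ k ∈ Finset.range m, ω (2 ^ k)⁻¹ ≤ C := by
  obtain ⟨C, -, sum_le⟩ := hω.exists_sum_mul_min_le
  refine ⟨C * ω 1, fun m => (Finset.sum_le_sum fun k _ => ?_).trans (sum_le 1 one_pos m)⟩
  rw [mul_one, min_eq_left (one_le_pow₀ (one_le_pow₀ one_le_two)), mul_one]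

lemma integrableOn_div_pow (hω : IsRegularModulus ω n) {a b : ℝ} (ha : 0 < a) (j : ℕ) :
    IntegrableOn (fun t => ω t / t ^ j) (Ioc a b) := by
  have hωint : IntegrableOn ω (Icc a b) :=
    (hω.monotoneOn.mono fun t ht => ha.le.trans ht.1).integrableOn_isCompact isCompact_Icc
  refine IntegrableOn.mono_set ?_ Ioc_subset_Icc_self
  simp only [div_eq_mul_inv]
  refine hωint.mul_continuousOn ?_ isCompact_Icc
  exact ContinuousOn.inv₀ (by fun_prop) fun t ht => pow_ne_zero _ (ha.trans_le ht.1).ne'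

end IsRegularModulus

/-! ### The dyadic form of `ξ` -/

/-- The dyadic counterpart `∑_{k < m} ω(2⁻ᵏ) 2ᵏⁿ` of `ξ(2⁻ᵐ) = ∫_{2⁻ᵐ}^1 ω(t) t⁻ⁿ⁻¹ dt`. -/
def dyadicXi (ω : ℝ → ℝ) (n m : ℕ) : ℝ :=
  ∑ k ∈ Finset.range m, ω (2 ^ k)⁻¹ * (2 ^ k) ^ n

lemma exists_dyadic_scale {l : ℝ} (hl : 0 < l) (hl1 : l < 1) :
    ∃ m : ℕ, 0 < m ∧ (2 ^ m)⁻¹ ≤ l ∧ ∀ k < m, 2 ^ k * l ≤ 1 := by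
  classical
  have hex : ∃ m : ℕ, ((2 : ℝ) ^ m)⁻¹ ≤ l := by
    obtain ⟨m, hm⟩ := exists_pow_lt_of_lt_one hl (by norm_num : (2⁻¹ : ℝ) < 1)
    exact ⟨m, by rw [← inv_pow]; exact hm.le⟩
  refine ⟨Nat.find hex, ?_, Nat.find_spec hex, fun k hk => ?_⟩
  · rw [Nat.find_pos]
    simpa using hl1
  · have l_lt : l < (2 ^ k)⁻¹ := not_le.1 (Nat.find_min hex hk)
    calc 2 ^ k * l ≤ 2 ^ k * (2 ^ k)⁻¹ := by gcongr
      _ = 1 := mul_inv_cancel₀ (by positivity)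

lemma xi_of_one_le (ω : ℝ → ℝ) (n : ℕ) {l : ℝ} (hl : 1 ≤ l) : xi ω n l = 0 := by
  simp [xi, Ioc_eq_empty_of_le hl]

namespace IsRegularModulus

variable {ω : ℝ → ℝ} {n : ℕ}

lemma setIntegral_div_pow_le (hω : IsRegularModulus ω n) {a : ℝ} (ha : 0 < a) :
    ∫ t in Ioc a (2 * a), ω t / t ^ (n + 1) ≤ 2 ^ n * (ω (2 * a) * ((2 * a)⁻¹) ^ n) := by
  have integrand_le (t : ℝ) (ht : t ∈ Ioc a (2 * a)) :
      ω t / t ^ (n + 1) ≤ ω (2 * a) / a ^ (n + 1) := by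
    have ht0 := ha.trans ht.1
    have hωa := hω.nonneg (2 * a) (by positivity)
    gcongr
    exacts [hω.monotoneOn ht0.le (mem_Ici.2 (by positivity)) ht.2, ht.1.le]
  calc ∫ t in Ioc a (2 * a), ω t / t ^ (n + 1)
      ≤ ∫ _ in Ioc a (2 * a), ω (2 * a) / a ^ (n + 1) :=
        setIntegral_mono_on (hω.integrableOn_div_pow ha _) (integrableOn_const (by simp))
          measurableSet_Ioc integrand_le
    _ = a * (ω (2 * a) / a ^ (n + 1)) := by
        rw [setIntegral_const, smul_eq_mul, measureReal_def, Real.volume_Ioc,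
          ENNReal.toReal_ofReal (by linarith), two_mul, add_sub_cancel_right]
    _ = 2 ^ n * (ω (2 * a) * ((2 * a)⁻¹) ^ n) := by
        rw [inv_pow, mul_pow, pow_succ]
        field_simp

lemma xi_two_pow_inv_le (hω : IsRegularModulus ω n) (m : ℕ) :
    xi ω n (2 ^ m)⁻¹ ≤ 2 ^ n * dyadicXi ω n m := by
  induction m with
  | zero => simp [xi, dyadicXi]
  | succ m ih =>
    have ha : (0 : ℝ) < (2 ^ (m + 1))⁻¹ := by positivity
    have double : 2 * ((2 : ℝ) ^ (m + 1))⁻¹ = (2 ^ m)⁻¹ := by rw [pow_succ]; field_simp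
    have inv_le_one : ((2 : ℝ) ^ m)⁻¹ ≤ 1 := inv_le_one_of_one_le₀ (one_le_pow₀ one_le_two)
    have last_le := hω.setIntegral_div_pow_le ha
    rw [double, inv_inv] at last_le
    rw [xi] at ih ⊢
    rw [← Ioc_union_Ioc_eq_Ioc (by linarith) inv_le_one,
      setIntegral_union (Ioc_disjoint_Ioc_of_le le_rfl) measurableSet_Ioc
        (hω.integrableOn_div_pow ha _) (hω.integrableOn_div_pow (by positivity) _),
      dyadicXi, Finset.sum_range_succ, mul_add, add_comm]
    exact add_le_add ih last_le

lemma xi_le (hω : IsRegularModulus ω n) {m : ℕ} {l : ℝ} (hl : (2 ^ m)⁻¹ ≤ l) :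
    xi ω n l ≤ 2 ^ n * dyadicXi ω n m := by
  refine le_trans ?_ (hω.xi_two_pow_inv_le m)
  have hp : (0 : ℝ) < (2 ^ m)⁻¹ := by positivity
  refine setIntegral_mono_set (hω.integrableOn_div_pow hp _) ?_
    (Ioc_subset_Ioc_left hl).eventuallyLE
  filter_upwards [ae_restrict_mem measurableSet_Ioc] with t ht
  have ht0 : 0 < t := hp.trans ht.1
  exact div_nonneg (hω.nonneg _ ht0.le) (by positivity)

lemma le_dyadicXi (hω : IsRegularModulus ω n) {m : ℕ} (hm : 0 < m) :
    ω 1 ≤ dyadicXi ω n m := by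
  have term_nonneg (k : ℕ) : 0 ≤ ω (2 ^ k)⁻¹ * (2 ^ k) ^ n :=
    mul_nonneg (hω.nonneg _ (by positivity)) (by positivity)
  simpa [dyadicXi] using Finset.single_le_sum (fun k _ => term_nonneg k) (Finset.mem_range.2 hm)

lemma exists_max_one_xi_le (hω : IsRegularModulus ω n) (hω1 : 0 < ω 1) :
    ∃ C > 0, ∀ m l, 0 < m → (2 ^ m)⁻¹ ≤ l → max 1 (xi ω n l) ≤ C * dyadicXi ω n m := by
  refine ⟨max (ω 1)⁻¹ (2 ^ n), by positivity, fun m l hm hl => ?_⟩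
  have mass_ge := hω.le_dyadicXi hm
  have mass_pos := hω1.trans_le mass_ge
  refine max_le ?_ ((hω.xi_le hl).trans (by gcongr; exact le_max_right _ _))
  calc 1 = (ω 1)⁻¹ * ω 1 := (inv_mul_cancel₀ hω1.ne').symm
    _ ≤ max (ω 1)⁻¹ (2 ^ n) * dyadicXi ω n m := by gcongr; exact le_max_left _ _

end IsRegularModulus

/-! ### Singular kernels -/

section Homogeneous

variable {E F : Type*} [NormedAddCommGroup E] [NormedSpace ℝ E] [NormedAddCommGroup F]
  [NormedSpace ℝ F]

lemma norm_iteratedFDeriv_comp_smul_le (K : E → F) {c : ℝ} (hc : 0 < c) (m : ℕ) (z : E) :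
    ‖iteratedFDeriv ℝ m (fun w => K (c • w)) z‖ ≤ ‖iteratedFDeriv ℝ m K (c • z)‖ * c ^ m := by
  let g : E ≃L[ℝ] E := ContinuousLinearEquiv.smulLeft (Units.mk0 c hc.ne')
  have norm_g_le : ‖(g : E →L[ℝ] E)‖ ≤ c :=
    ContinuousLinearMap.opNorm_le_bound _ hc.le fun w =>
      ((norm_smul c w).trans (by rw [Real.norm_of_nonneg hc.le])).le
  have chain : iteratedFDeriv ℝ m (fun w => K (c • w)) z =
      (iteratedFDeriv ℝ m K (c • z)).compContinuousLinearMap fun _ => (g : E →L[ℝ] E) := by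
    have := g.iteratedFDerivWithin_comp_right K uniqueDiffOn_univ (mem_univ (g z)) m
    rwa [preimage_univ, iteratedFDerivWithin_univ, iteratedFDerivWithin_univ] at this
  rw [chain]
  refine (ContinuousMultilinearMap.norm_compContinuousLinearMap_le _ _).trans ?_
  rw [Finset.prod_const, Finset.card_univ, Fintype.card_fin]
  gcongr

lemma exists_norm_iteratedFDeriv_le_of_homogeneous [ProperSpace E] {K : E → F} {a m : ℕ}
    (hom : ∀ c : ℝ, 0 < c → ∀ z, K (c • z) = (c ^ a)⁻¹ • K z)
    (hK : ∀ z ≠ 0, ContDiffAt ℝ m K z) :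
    ∃ C > 0, ∀ z ≠ 0, ‖iteratedFDeriv ℝ m K z‖ ≤ C * (‖z‖ ^ (a + m))⁻¹ := by
  have hcont : ContinuousOn (iteratedFDeriv ℝ m K) (sphere 0 1) := fun z hz =>
    ((hK z (ne_of_mem_sphere hz one_ne_zero)).iteratedFDeriv_right (i := m) (m := 0)
      (by simp)).continuousAt.continuousWithinAt
  obtain ⟨B, hB⟩ := (isCompact_sphere (0 : E) 1).exists_bound_of_continuousOn hcont
  refine ⟨max B 1, by positivity, fun z hz => ?_⟩
  have hc : 0 < ‖z‖⁻¹ := inv_pos.2 (norm_pos_iff.2 hz)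
  generalize hcz : ‖z‖⁻¹ = c at hc
  have hz_sphere : c • z ∈ sphere (0 : E) 1 := by
    rw [mem_sphere_zero_iff_norm, norm_smul, Real.norm_of_nonneg hc.le, ← hcz]
    exact inv_mul_cancel₀ (norm_ne_zero_iff.2 hz)
  have hK_rescaled : K = fun w => c ^ a • K (c • w) := by
    funext w
    rw [hom c hc, smul_inv_smul₀ (by positivity)]
  have hcd : ContDiffAt ℝ m (fun w => K (c • w)) z :=
    (hK _ (ne_of_mem_sphere hz_sphere one_ne_zero)).comp z (contDiff_const_smul c).contDiffAt
  calc ‖iteratedFDeriv ℝ m K z‖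
      = c ^ a * ‖iteratedFDeriv ℝ m (fun w => K (c • w)) z‖ := by
        conv_lhs => rw [hK_rescaled]
        rw [iteratedFDeriv_const_smul_apply' hcd, norm_smul, Real.norm_of_nonneg (by positivity)]
    _ ≤ c ^ a * (max B 1 * c ^ m) := by
        gcongr
        refine (norm_iteratedFDeriv_comp_smul_le K hc m z).trans ?_
        gcongr
        exact (hB _ hz_sphere).trans (le_max_left _ _)
    _ = max B 1 * (‖z‖ ^ (a + m))⁻¹ := by
        rw [← inv_pow, hcz]; ring

end Homogeneous

/-- A `C^k` convolution kernel with the size and smoothness bounds, but not necessarily the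
cancellation, of a Calderón–Zygmund kernel. -/
structure IsSingularKernel {d : ℕ} (k : ℕ) (K : 𝔼 d → ℝ) : Prop where
  contDiffAt : ∀ z ≠ 0, ContDiffAt ℝ k K z
  exists_bound : ∀ m ≤ k, ∃ C > 0, ∀ z ≠ 0, ‖iteratedFDeriv ℝ m K z‖ ≤ C * (‖z‖ ^ (d + m))⁻¹

lemma IsCZDensity.isSingularKernel {d k : ℕ} {Ω : 𝔼 d → ℝ} (hΩ : IsCZDensity d k Ω) :
    IsSingularKernel k fun x => Ω x / ‖x‖ ^ d := by
  have hcd (z : 𝔼 d) (hz : z ≠ 0) : ContDiffAt ℝ k (fun x => Ω x / ‖x‖ ^ d) z :=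
    ContDiffAt.div (by exact_mod_cast (hΩ.smooth z hz).contDiffAt (isOpen_ne.mem_nhds hz))
      ((contDiffAt_norm ℝ hz).pow d) (pow_ne_zero _ (norm_ne_zero_iff.2 hz))
  refine ⟨hcd, fun m hm => exists_norm_iteratedFDeriv_le_of_homogeneous (fun c hc z => ?_)
    fun z hz => (hcd z hz).of_le (by exact_mod_cast hm)⟩
  rw [hΩ.homog c hc z, norm_smul, Real.norm_of_nonneg hc.le, mul_pow, smul_eq_mul]
  field_simp

namespace IsSingularKernel

variable {d k : ℕ} {K : 𝔼 d → ℝ}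

lemma exists_abs_le (hK : IsSingularKernel k K) :
    ∃ C > 0, ∀ z ≠ 0, |K z| ≤ C * (‖z‖ ^ d)⁻¹ := by
  obtain ⟨C, hC, bound⟩ := hK.exists_bound 0 k.zero_le
  exact ⟨C, hC, fun z hz => by simpa using bound z hz⟩

lemma measurable (hK : IsSingularKernel k K) : Measurable K :=
  measurable_of_continuousOn_compl_singleton 0 fun z hz =>
    (hK.contDiffAt z hz).continuousAt.continuousWithinAt

lemma continuousOn_iteratedFDeriv (hK : IsSingularKernel k K) {m : ℕ} (hm : m ≤ k) :
    ContinuousOn (iteratedFDeriv ℝ m K) {0}ᶜ := fun z hz =>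
  ((hK.contDiffAt z hz).iteratedFDeriv_right (i := m) (m := 0)
    (by simpa using hm)).continuousAt.continuousWithinAt

end IsSingularKernel

section PowerIntegrals

open Module (finrank)

variable {E : Type*} [NormedAddCommGroup E] [NormedSpace ℝ E] [FiniteDimensional ℝ E]
  [MeasurableSpace E] [BorelSpace E] (μ : Measure E) [μ.IsAddHaarMeasure]

lemma integrable_tail_norm_pow_inv :
    Integrable ({u : E | 1 ≤ ‖u‖}.indicator fun u => (‖u‖ ^ (finrank ℝ E + 1))⁻¹) μ := by
  set j := finrank ℝ E + 1
  have bracket_integrable : Integrable (fun u : E => 2 ^ j * ((1 + ‖u‖) ^ j)⁻¹) μ := by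
    refine Integrable.const_mul ?_ _
    have := integrable_one_add_norm (μ := μ) (E := E) (r := j) (by simp [j])
    exact this.congr (ae_of_all _ fun u => by
      simp only
      rw [Real.rpow_neg (by positivity), Real.rpow_natCast])
  refine bracket_integrable.mono' ?_ (ae_of_all _ fun u => ?_)
  · exact (Measurable.indicator (by fun_prop)
      (measurableSet_le measurable_const (by fun_prop))).aestronglyMeasurable
  rw [norm_indicator_eq_indicator_norm]
  refine indicator_apply_le' (fun hu => ?_) fun _ => by positivity
  replace hu : 1 ≤ ‖u‖ := hu
  rw [norm_inv, norm_pow, norm_norm, inv_le_iff_one_le_mul₀ (by positivity), mul_right_comm,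
    ← mul_pow, ← div_eq_mul_inv, one_le_div (by positivity)]
  gcongr
  linarith

lemma exists_tail_integral_le : ∃ C > 0, ∀ (x₀ : E) (r : ℝ), 0 < r →
    IntegrableOn (fun x => (‖x - x₀‖ ^ (finrank ℝ E + 1))⁻¹) {x | r ≤ ‖x - x₀‖} μ ∧
    ∫ x in {x | r ≤ ‖x - x₀‖}, (‖x - x₀‖ ^ (finrank ℝ E + 1))⁻¹ ∂μ ≤ C * r⁻¹ := by
  have tail_integrable := integrable_tail_norm_pow_inv μ
  set j := finrank ℝ E + 1
  set tail := {u : E | 1 ≤ ‖u‖}.indicator fun u => (‖u‖ ^ j)⁻¹ with tail_def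
  refine ⟨max (∫ u, tail u ∂μ) 1, by positivity, fun x₀ r hr => ?_⟩
  have hmeas : MeasurableSet {x : E | r ≤ ‖x - x₀‖} :=
    measurableSet_le measurable_const (by fun_prop)
  have rescale : {x | r ≤ ‖x - x₀‖}.indicator (fun x => (‖x - x₀‖ ^ j)⁻¹) =
      fun x => (r ^ j)⁻¹ * tail (r⁻¹ • (x - x₀)) := by
    ext x
    have norm_eq : ‖r⁻¹ • (x - x₀)‖ = r⁻¹ * ‖x - x₀‖ := by
      rw [norm_smul, norm_inv, Real.norm_of_nonneg hr.le]
    simp only [tail_def, indicator, mem_ofPred_eq, norm_eq, ← div_eq_inv_mul, one_le_div hr]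
    split_ifs
    · rw [div_pow]; field_simp
    · rw [zero_div]
  rw [← integrable_indicator_iff hmeas, ← integral_indicator hmeas, rescale, integral_const_mul,
    integral_sub_right_eq_self (fun x => tail (r⁻¹ • x)) x₀,
    Measure.integral_comp_inv_smul_of_nonneg _ _ hr.le]
  refine ⟨((tail_integrable.comp_smul (inv_ne_zero hr.ne')).comp_sub_right x₀).const_mul _, ?_⟩
  calc (r ^ j)⁻¹ * (r ^ finrank ℝ E • ∫ u, tail u ∂μ) = (∫ u, tail u ∂μ) * r⁻¹ := by
        rw [smul_eq_mul, pow_succ]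
        field_simp
    _ ≤ max (∫ u, tail u ∂μ) 1 * r⁻¹ := by gcongr; exact le_max_left _ _

lemma integrableOn_ball_norm_mul_norm_pow_inv (y : E) (R : ℝ) :
    IntegrableOn (fun x => ‖x - y‖ * (‖x - y‖ ^ finrank ℝ E)⁻¹) (ball y R) μ := by
  rcases subsingleton_or_nontrivial E with _ | _
  · simp [Subsingleton.elim _ (0 : E)]
  have at_zero : IntegrableOn (fun x : E => ‖x‖ * (‖x‖ ^ finrank ℝ E)⁻¹) (ball 0 R) μ := by
    rw [integrableOn_fun_norm_addHaar μ (f := fun t => t * (t ^ finrank ℝ E)⁻¹)]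
    refine IntegrableOn.congr_fun (integrableOn_const (C := (1 : ℝ)) (by simp)) (fun t ht => ?_)
      measurableSet_Ioo
    obtain ⟨m, hm⟩ := Nat.exists_eq_succ_of_ne_zero (Module.finrank_pos (R := ℝ) (M := E)).ne'
    have ht0 : t ≠ 0 := ht.1.ne'
    rw [hm, Nat.succ_sub_one, Nat.succ_eq_add_one, pow_succ, smul_eq_mul]
    field_simp
  rw [← integrable_indicator_iff measurableSet_ball] at at_zero ⊢
  refine (at_zero.comp_sub_right y).congr (ae_of_all _ fun x => ?_)
  simp [indicator, dist_eq_norm]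

end PowerIntegrals

/-! ### Equivalence of norms on polynomials of bounded degree -/

lemma exists_norm_map_le_of_injective {V E F : Type*} [AddCommGroup V] [Module ℝ V]
    [FiniteDimensional ℝ V] [NormedAddCommGroup E] [NormedSpace ℝ E] [NormedAddCommGroup F]
    [NormedSpace ℝ F] {J : V →ₗ[ℝ] E} (hJ : Function.Injective J) (L : V →ₗ[ℝ] F) :
    ∃ C > 0, ∀ v, ‖L v‖ ≤ C * ‖J v‖ := by
  let e := LinearEquiv.ofInjective J hJ
  obtain ⟨C, hC, hbound⟩ := (L ∘ₗ e.symm.toLinearMap).toContinuousLinearMap.bound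
  exact ⟨C, hC, fun v => by simpa [e] using hbound (e v)⟩

instance (d n : ℕ) : FiniteDimensional ℝ (polyLESubmodule d n) := by
  let evaluation : MvPolynomial (Fin d) ℝ →ₗ[ℝ] 𝔼 d → ℝ :=
    LinearMap.pi fun x => (MvPolynomial.aeval fun i => x i).toLinearMap
  have map_eq :
      (MvPolynomial.restrictTotalDegree (Fin d) ℝ n).map evaluation = polyLESubmodule d n := by
    ext P
    simp only [Submodule.mem_map, MvPolynomial.mem_restrictTotalDegree, funext_iff]
    rfl
  rw [← map_eq]
  infer_instance

namespace PolyLE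

variable {d n : ℕ} {D : Set (𝔼 d)}

lemma eq_zero_of_eqOn_cube {P : 𝔼 d → ℝ} (hP : P ∈ PolyLE d n) {x₀ : 𝔼 d} {l : ℝ} (hl : 0 < l)
    (hzero : EqOn P 0 (cube x₀ l)) : P = 0 := by
  obtain ⟨p, -, hpP⟩ := hP
  have p_eq_zero : p = 0 := by
    refine MvPolynomial.funext_set (fun i => Icc (x₀ i - l / 2) (x₀ i + l / 2))
      (fun i => Icc_infinite (by linarith)) fun v hv => ?_
    rw [map_zero]
    refine (hpP (WithLp.toLp 2 v)).trans (hzero fun i => abs_sub_le_iff.2 ?_)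
    constructor <;> linarith [(hv i trivial).1, (hv i trivial).2]
  ext x
  simp [← hpP, p_eq_zero]

lemma exists_norm_map_le {F : Type*} [NormedAddCommGroup F] [NormedSpace ℝ F] (hD : IsOpen D)
    (hne : D.Nonempty) (L : polyLESubmodule d n →ₗ[ℝ] F) :
    ∃ C > 0, ∀ (P : polyLESubmodule d n) (M : ℝ), (∀ x ∈ D, |P.1 x| ≤ M) → ‖L P‖ ≤ C * M := by
  obtain ⟨z, hz⟩ := hne
  obtain ⟨l, hl, hcube⟩ := exists_cube_subset hD hz
  have : CompactSpace (cube z l) := isCompact_iff_compactSpace.1 (isCompact_cube z l)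
  let J : polyLESubmodule d n →ₗ[ℝ] C(cube z l, ℝ) :=
    { toFun := fun P =>
        ⟨(cube z l).domRestrict P.1, (PolyLE.continuous P.2).continuousOn.domRestrict⟩
      map_add' := fun _ _ => rfl
      map_smul' := fun _ _ => rfl }
  have hJ : Function.Injective J := (injective_iff_map_eq_zero J).2 fun P hP =>
    Subtype.ext (eq_zero_of_eqOn_cube P.2 hl fun x hx => DFunLike.congr_fun hP ⟨x, hx⟩)
  obtain ⟨C, hC, hbound⟩ := exists_norm_map_le_of_injective hJ L
  refine ⟨C, hC, fun P M hM => (hbound P).trans ?_⟩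
  gcongr
  exact (ContinuousMap.norm_le _ ((abs_nonneg _).trans (hM z hz))).2 fun x => hM x (hcube x.2)

lemma exists_norm_map_le_of_isCompact {X F : Type*} [TopologicalSpace X] [NormedAddCommGroup F]
    [NormedSpace ℝ F] (hD : IsOpen D) (hne : D.Nonempty) {A : Set X} (hA : IsCompact A)
    (L : X → polyLESubmodule d n →ₗ[ℝ] F) (hL : ∀ P, ContinuousOn (fun a => L a P) A) :
    ∃ C > 0, ∀ (P : polyLESubmodule d n) (M : ℝ), (∀ x ∈ D, |P.1 x| ≤ M) →
      ∀ a ∈ A, ‖L a P‖ ≤ C * M := by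
  let b := Module.finBasis ℝ (polyLESubmodule d n)
  choose B hB using fun i => hA.exists_bound_of_continuousOn (hL (b i))
  obtain ⟨C, hC, hcoord⟩ := exists_norm_map_le hD hne b.equivFun.toLinearMap
  refine ⟨C * (∑ i, |B i| + 1), by positivity, fun P M hM a ha => ?_⟩
  obtain ⟨z, hz⟩ := hne
  have M_nonneg : 0 ≤ M := (abs_nonneg _).trans (hM z hz)
  calc ‖L a P‖ = ‖∑ i, b.equivFun P i • L a (b i)‖ := by
        simp_rw [← map_smul, ← map_sum, b.sum_equivFun]
    _ ≤ ∑ i, ‖b.equivFun P i • L a (b i)‖ := norm_sum_le _ _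
    _ ≤ ∑ i, C * M * |B i| := Finset.sum_le_sum fun i _ => by
        rw [norm_smul]
        have coord_le := (norm_le_pi_norm (b.equivFun P) i).trans (hcoord P M hM)
        gcongr
        exact (hB i a ha).trans (le_abs_self _)
    _ ≤ C * (∑ i, |B i| + 1) * M := by
        rw [← Finset.mul_sum]
        nlinarith [mul_nonneg hC.le M_nonneg]

lemma exists_abs_le_of_isBounded (n : ℕ) (hD : IsOpen D) (hne : D.Nonempty) {A : Set (𝔼 d)}
    (hA : Bornology.IsBounded A) :
    ∃ C > 0, ∀ P ∈ PolyLE d n, ∀ M, (∀ x ∈ D, |P x| ≤ M) → ∀ x ∈ A, |P x| ≤ C * M := by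
  obtain ⟨C, hC, hbound⟩ := exists_norm_map_le_of_isCompact hD hne hA.isCompact_closure
    (fun x => LinearMap.proj x ∘ₗ (polyLESubmodule d n).subtype)
    fun P => (PolyLE.continuous P.2).continuousOn
  exact ⟨C, hC, fun P hP M hM x hx => hbound ⟨P, hP⟩ M hM x (subset_closure hx)⟩

lemma exists_norm_iteratedFDeriv_mul_le (n : ℕ) {m : ℕ} (hD : IsOpen D) (hne : D.Nonempty)
    {φ : 𝔼 d → ℝ} (hφ : ContDiff ℝ m φ) (hφc : HasCompactSupport φ) :
    ∃ C > 0, ∀ P ∈ PolyLE d n, ∀ M, (∀ x ∈ D, |P x| ≤ M) →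
      ∀ x, ‖iteratedFDeriv ℝ m (P * φ) x‖ ≤ C * M := by
  have contDiff_mul (P : polyLESubmodule d n) : ContDiff ℝ m (P.1 * φ) :=
    (PolyLE.contDiff P.2).mul hφ
  let L (x : 𝔼 d) : polyLESubmodule d n →ₗ[ℝ] (𝔼 d) [×m]→L[ℝ] ℝ :=
    { toFun := fun P => iteratedFDeriv ℝ m (P.1 * φ) x
      map_add' := fun P Q => by
        rw [Submodule.coe_add, add_mul, iteratedFDeriv_add_apply (contDiff_mul P).contDiffAt
          (contDiff_mul Q).contDiffAt]
      map_smul' := fun c P => by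
        rw [Submodule.coe_smul, smul_mul_assoc,
          iteratedFDeriv_const_smul_apply (contDiff_mul P).contDiffAt, RingHom.id_apply] }
  obtain ⟨C, hC, hbound⟩ := exists_norm_map_le_of_isCompact hD hne hφc L
    fun P => ((contDiff_mul P).continuous_iteratedFDeriv le_rfl).continuousOn
  refine ⟨C, hC, fun P hP M hM x => ?_⟩
  by_cases hx : x ∈ tsupport φ
  · exact hbound ⟨P, hP⟩ M hM x hx
  · have deriv_eq_zero : iteratedFDeriv ℝ m (P * φ) x = 0 := Function.notMem_support.1 fun h =>
      hx (tsupport_mul_subset_right (support_iteratedFDeriv_subset m h))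
    obtain ⟨z, hz⟩ := hne
    rw [deriv_eq_zero, norm_zero]
    exact mul_nonneg hC.le ((abs_nonneg _).trans (hM z hz))

end PolyLE

lemma eval_smul_of_isHomogeneous {σ R : Type*} [CommSemiring R] {p : MvPolynomial σ R} {n : ℕ}
    (hp : p.IsHomogeneous n) (c : R) (v : σ → R) :
    MvPolynomial.eval (c • v) p = c ^ n * MvPolynomial.eval v p := by
  rw [MvPolynomial.eval_eq, MvPolynomial.eval_eq, Finset.mul_sum]
  refine Finset.sum_congr rfl fun α hα => ?_
  have degree_eq : ∑ i ∈ α.support, α i = n := by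
    simpa [Finsupp.weight_apply, Finsupp.sum] using hp (MvPolynomial.mem_support_iff.1 hα)
  simp only [Pi.smul_apply, smul_eq_mul, mul_pow, Finset.prod_mul_distrib,
    Finset.prod_pow_eq_pow_sum, degree_eq]
  ring

lemma abs_le_mul_norm_pow_of_homogeneous {E : Type*} [NormedAddCommGroup E] [NormedSpace ℝ E]
    {n : ℕ} {q : E → ℝ} (hq : ∀ (c : ℝ) x, q (c • x) = c ^ n * q x) {M : ℝ}
    (hM : ∀ x, ‖x‖ ≤ 1 → |q x| ≤ M) (x : E) : |q x| ≤ M * ‖x‖ ^ n := by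
  obtain rfl | hx := eq_or_ne x 0
  · have q_zero : |q 0| = |q 0| * 0 ^ n := by
      simpa [abs_mul, mul_comm] using congrArg abs (hq 0 0)
    rw [norm_zero, q_zero]
    gcongr
    exact hM 0 (by simp)
  · have hx' := norm_ne_zero_iff.2 hx
    calc |q x| = |q (‖x‖ • ‖x‖⁻¹ • x)| := by rw [smul_inv_smul₀ hx']
      _ = ‖x‖ ^ n * |q (‖x‖⁻¹ • x)| := by rw [hq, abs_mul, abs_pow, abs_norm]
      _ ≤ M * ‖x‖ ^ n := by
        rw [mul_comm]
        gcongr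
        exact hM _ (by rw [norm_smul, norm_inv, norm_norm, inv_mul_cancel₀ hx'])

/-! ### Zygmund spaces -/

/-- The mean over the cube with center `x₀` and side length `l` of `|f - S|`, the quantity
which both the Zygmund seminorm and the conclusion of the theorem control. -/
def cubeMeanDist {d : ℕ} (x₀ : 𝔼 d) (l : ℝ) (f S : 𝔼 d → ℝ) : ℝ≥0∞ :=
  (ENNReal.ofReal (l ^ d))⁻¹ * ∫⁻ x in cube x₀ l, ENNReal.ofReal |f x - S x|

/-- The restricted operator `T_D` with kernel `K` is bounded on `𝒞_ω(D)`. As `T_D` is only given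
through principal values, it is encoded by its graph `IsRestrictedCZ D K`. -/
def IsBoundedOnZygmund {d : ℕ} (ω : ℝ → ℝ) (n : ℕ) (D : Set (𝔼 d)) (K : 𝔼 d → ℝ) : Prop :=
  ∃ C' : ℝ, 0 < C' ∧
    ∀ f g : 𝔼 d → ℝ,
      LocallyIntegrableOn f D → zygSeminorm ω n D f < ⊤ → l1Norm D f < ⊤ →
      IsRestrictedCZ D K f g →
      LocallyIntegrableOn g D ∧
        zygSeminorm ω n D g + l1Norm D g ≤
          ENNReal.ofReal C' * (zygSeminorm ω n D f + l1Norm D f)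

section Zygmund

variable {d n : ℕ} {ω : ℝ → ℝ} {D : Set (𝔼 d)} {f : 𝔼 d → ℝ}

lemma zygSeminorm_le {A : ℝ} (hω : ∀ t, 0 < t → 0 ≤ ω t)
    (happrox : ∀ x₀ l, 0 < l →
      ∃ P ∈ PolyLE d n, ∀ x ∈ cube x₀ l, |f x - P x| ≤ A * ω l) :
    zygSeminorm ω n D f ≤ ENNReal.ofReal A := by
  refine iSup₂_le fun x₀ l => iSup₂_le fun hl _ => ?_
  obtain ⟨P, hP, hfP⟩ := happrox x₀ l hl
  refine (iInf₂_le P hP).trans ?_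
  rw [mul_comm, ← div_eq_mul_inv]
  refine ENNReal.div_le_of_le_mul ?_
  calc ∫⁻ x in cube x₀ l, ENNReal.ofReal |f x - P x|
      ≤ ∫⁻ _ in cube x₀ l, ENNReal.ofReal (A * ω l) :=
        setLIntegral_mono measurable_const fun x hx => ENNReal.ofReal_le_ofReal (hfP x hx)
    _ = ENNReal.ofReal A * ENNReal.ofReal (ω l * l ^ d) := by
        rw [setLIntegral_const, volume_cube x₀ hl.le, ENNReal.ofReal_mul' (hω l hl),
          ENNReal.ofReal_mul (hω l hl), mul_assoc]

lemma zygSeminorm_eq_zero_of_mem_polyLE (ω : ℝ → ℝ) (D : Set (𝔼 d)) {P : 𝔼 d → ℝ}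
    (hP : P ∈ PolyLE d n) : zygSeminorm ω n D P = 0 := by
  refine nonpos_iff_eq_zero.1 (iSup₂_le fun x₀ l => iSup₂_le fun _ _ => ?_)
  exact (iInf₂_le P hP).trans (by simp)

lemma exists_cubeMeanDist_le_of_zygSeminorm_lt {X : ℝ}
    (hX : zygSeminorm ω n D f < ENNReal.ofReal X) {x₀ : 𝔼 d} {l : ℝ} (hl : 0 < l)
    (hcube : cube x₀ l ⊆ D) (hωl : 0 ≤ ω l) :
    ∃ S ∈ PolyLE d n, cubeMeanDist x₀ l f S ≤ ENNReal.ofReal (X * ω l) := by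
  have inf_lt : (⨅ (P : 𝔼 d → ℝ) (_ : P ∈ PolyLE d n), (ENNReal.ofReal (ω l * l ^ d))⁻¹ *
      ∫⁻ x in cube x₀ l, ENNReal.ofReal |f x - P x|) < ENNReal.ofReal X := by
    refine lt_of_le_of_lt ?_ hX
    rw [zygSeminorm]
    exact le_iSup_of_le x₀ <| le_iSup_of_le l <| le_iSup_of_le hl <| le_iSup_of_le hcube le_rfl
  simp only [iInf_lt_iff] at inf_lt
  obtain ⟨S, hS, hlt⟩ := inf_lt
  refine ⟨S, hS, ?_⟩
  rw [mul_comm, ← div_eq_mul_inv] at hlt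
  rw [cubeMeanDist, mul_comm, ← div_eq_mul_inv, ENNReal.ofReal_mul' hωl]
  refine ENNReal.div_le_of_le_mul ?_
  rw [mul_assoc, ← ENNReal.ofReal_mul hωl]
  exact (ENNReal.div_le_iff_le_mul (.inr ENNReal.ofReal_ne_top) (.inl ENNReal.ofReal_ne_top)).1
    hlt.le

lemma l1Norm_le (hD : MeasurableSet D) {A : ℝ} (hf : ∀ x ∈ D, |f x| ≤ A) :
    l1Norm D f ≤ ENNReal.ofReal A * volume D := by
  rw [l1Norm, ← setLIntegral_const]
  exact setLIntegral_mono' hD fun x hx => ENNReal.ofReal_le_ofReal (hf x hx)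

lemma IsBoundedOnZygmund.exists_zygSeminorm_lt {K : 𝔼 d → ℝ} (hT : IsBoundedOnZygmund ω n D K)
    (hD : MeasurableSet D) (hDb : Bornology.IsBounded D) :
    ∃ C > 0, ∀ f g A, 0 < A → Continuous f → zygSeminorm ω n D f ≤ ENNReal.ofReal A →
      (∀ x ∈ D, |f x| ≤ A) → IsRestrictedCZ D K f g →
      LocallyIntegrableOn g D ∧ zygSeminorm ω n D g < ENNReal.ofReal (C * A) := by
  obtain ⟨C, hC, hbound⟩ := hT
  have volume_eq : volume D = ENNReal.ofReal (volume.real D) :=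
    (ofReal_measureReal hDb.measure_lt_top.ne).symm
  refine ⟨C * (1 + volume.real D) + 1, by positivity, fun f g A hA hf hzyg hsup hg => ?_⟩
  have l1_le := l1Norm_le hD hsup
  rw [volume_eq, ← ENNReal.ofReal_mul hA.le] at l1_le
  obtain ⟨hg_int, hg_le⟩ := hbound f g (hf.locallyIntegrable.locallyIntegrableOn D)
    (hzyg.trans_lt ENNReal.ofReal_lt_top) (l1_le.trans_lt ENNReal.ofReal_lt_top) hg
  refine ⟨hg_int, ?_⟩
  calc zygSeminorm ω n D g ≤ ENNReal.ofReal C * (zygSeminorm ω n D f + l1Norm D f) :=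
        le_self_add.trans hg_le
    _ ≤ ENNReal.ofReal C * (ENNReal.ofReal A + ENNReal.ofReal (A * volume.real D)) := by gcongr
    _ = ENNReal.ofReal (C * (A + A * volume.real D)) := by
        rw [← ENNReal.ofReal_add hA.le (by positivity), ← ENNReal.ofReal_mul hC.le]
    _ < ENNReal.ofReal ((C * (1 + volume.real D) + 1) * A) :=
        (ENNReal.ofReal_lt_ofReal_iff (by positivity)).2 (by linarith)

end Zygmund

/-! ### Superpositions of dyadic dilates -/

/-- The superposition `∑_{k < m} ω(2⁻ᵏ) ψ(2ᵏ x)` of dyadic dilates of a profile `ψ`. -/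
def dyadicSum {d : ℕ} (ω : ℝ → ℝ) (ψ : 𝔼 d → ℝ) (m : ℕ) (x : 𝔼 d) : ℝ :=
  ∑ k ∈ Finset.range m, ω (2 ^ k)⁻¹ * ψ ((2 ^ k : ℝ) • x)

lemma exists_polyLE_approx_dilate {d n : ℕ} {ψ : 𝔼 d → ℝ} {A : ℝ} (hψ : ContDiff ℝ (n + 1) ψ)
    (hsup : ∀ u, |ψ u| ≤ A) (hderiv : ∀ u, ‖iteratedFDeriv ℝ (n + 1) ψ u‖ ≤ A) {c s : ℝ}
    (hc : 0 ≤ c) (hs : 0 ≤ s) (x₀ a : 𝔼 d) :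
    ∃ T ∈ PolyLE d n, ∀ x ∈ cube a s,
      |ψ (c • (x - x₀)) - T x| ≤ (d + 1) ^ (n + 1) * A * min 1 ((c * s) ^ (n + 1)) := by
  have hA : 0 ≤ A := (abs_nonneg _).trans (hsup 0)
  obtain hcs | hcs := le_total (c * s) 1
  · refine ⟨fun x => taylorPoly n ψ (c • (a - x₀)) (c • (x - a)),
      PolyLE.comp_smul_sub (taylorPoly_mem_polyLE n ψ _) c a, fun x hx => ?_⟩
    have norm_le : ‖c • (x - a)‖ ≤ (d + 1) * (c * s) := by
      have := norm_sub_le_of_mem_cube hx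
      rw [norm_smul, Real.norm_of_nonneg hc]
      calc c * ‖x - a‖ ≤ c * (d * (s / 2)) := by gcongr
        _ ≤ (d + 1) * (c * s) := by nlinarith [mul_nonneg hc hs, Nat.cast_nonneg (α := ℝ) d]
    have taylor_le := norm_sub_taylorPoly_le (a := c • (a - x₀)) (v := c • (x - a))
      (fun _ _ => hψ.contDiffAt) fun _ _ => hderiv _
    rw [← smul_add, add_comm, sub_add_sub_cancel] at taylor_le
    calc _ ≤ A * ‖c • (x - a)‖ ^ (n + 1) := taylor_le
      _ ≤ A * ((d + 1) * (c * s)) ^ (n + 1) := by gcongr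
      _ = (d + 1) ^ (n + 1) * A * min 1 ((c * s) ^ (n + 1)) := by
          rw [min_eq_right (pow_le_one₀ (by positivity) hcs), mul_pow]
          ring
  · refine ⟨0, (polyLESubmodule d n).zero_mem, fun x _ => ?_⟩
    rw [min_eq_left (one_le_pow₀ hcs), mul_one, Pi.zero_apply, sub_zero]
    have one_le : (1 : ℝ) ≤ (d + 1) ^ (n + 1) := one_le_pow₀ (by simp)
    exact (hsup _).trans (le_mul_of_one_le_left hA one_le)

namespace IsRegularModulus

variable {ω : ℝ → ℝ} {n : ℕ}

lemma exists_dyadicSum_approx (hω : IsRegularModulus ω n) (d : ℕ) :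
    ∃ C > 0, ∀ (ψ : 𝔼 d → ℝ) (A : ℝ), ContDiff ℝ (n + 1) ψ → (∀ u, |ψ u| ≤ A) →
      (∀ u, ‖iteratedFDeriv ℝ (n + 1) ψ u‖ ≤ A) → ∀ (m : ℕ) (x₀ a : 𝔼 d) (s : ℝ), 0 < s →
      ∃ P ∈ PolyLE d n, ∀ x ∈ cube a s, |dyadicSum ω ψ m (x - x₀) - P x| ≤ C * A * ω s := by
  obtain ⟨C, hC, hsum⟩ := hω.exists_sum_mul_min_le
  refine ⟨(d + 1) ^ (n + 1) * C, by positivity, fun ψ A hψ hsup hderiv m x₀ a s hs => ?_⟩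
  have hA : 0 ≤ A := (abs_nonneg _).trans (hsup 0)
  have ω_nonneg (k : ℕ) : 0 ≤ ω (2 ^ k)⁻¹ := hω.nonneg _ (by positivity)
  choose T hT hψT using fun k : ℕ =>
    exists_polyLE_approx_dilate hψ hsup hderiv (pow_nonneg zero_le_two k) hs.le x₀ a
  refine ⟨∑ k ∈ Finset.range m, ω (2 ^ k)⁻¹ • T k,
    PolyLE.sum fun k _ => PolyLE.smul _ (hT k), fun x hx => ?_⟩
  simp only [dyadicSum, Finset.sum_apply, Pi.smul_apply, smul_eq_mul, ← Finset.sum_sub_distrib,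
    ← mul_sub]
  calc _ ≤ ∑ k ∈ Finset.range m, |ω (2 ^ k)⁻¹ * (ψ ((2 ^ k : ℝ) • (x - x₀)) - T k x)| :=
        Finset.abs_sum_le_sum_abs _ _
    _ ≤ ∑ k ∈ Finset.range m,
          ω (2 ^ k)⁻¹ * ((d + 1) ^ (n + 1) * A * min 1 ((2 ^ k * s) ^ (n + 1))) := by
        gcongr with k
        rw [abs_mul, abs_of_nonneg (ω_nonneg k)]
        exact mul_le_mul_of_nonneg_left (hψT k x hx) (ω_nonneg k)
    _ = (d + 1) ^ (n + 1) * A *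
          ∑ k ∈ Finset.range m, ω (2 ^ k)⁻¹ * min 1 ((2 ^ k * s) ^ (n + 1)) := by
        rw [Finset.mul_sum]
        exact Finset.sum_congr rfl fun k _ => by ring
    _ ≤ (d + 1) ^ (n + 1) * A * (C * ω s) := by
        gcongr
        exact hsum s hs m
    _ = (d + 1) ^ (n + 1) * C * A * ω s := by ring

lemma exists_abs_dyadicSum_le (hω : IsRegularModulus ω n) (d : ℕ) :
    ∃ C, ∀ (ψ : 𝔼 d → ℝ) (A : ℝ), (∀ u, |ψ u| ≤ A) → ∀ m x, |dyadicSum ω ψ m x| ≤ C * A := by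
  obtain ⟨C, hsum⟩ := hω.exists_sum_le
  refine ⟨C, fun ψ A hsup m x => ?_⟩
  have hA : 0 ≤ A := (abs_nonneg _).trans (hsup 0)
  have ω_nonneg (k : ℕ) : 0 ≤ ω (2 ^ k)⁻¹ := hω.nonneg _ (by positivity)
  calc |dyadicSum ω ψ m x| ≤ ∑ k ∈ Finset.range m, |ω (2 ^ k)⁻¹ * ψ ((2 ^ k : ℝ) • x)| :=
        Finset.abs_sum_le_sum_abs _ _
    _ ≤ ∑ k ∈ Finset.range m, ω (2 ^ k)⁻¹ * A := by
        gcongr with k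
        rw [abs_mul, abs_of_nonneg (ω_nonneg k)]
        exact mul_le_mul_of_nonneg_left (hsup _) (ω_nonneg k)
    _ ≤ C * A := by
        rw [← Finset.sum_mul]
        exact mul_le_mul_of_nonneg_right (hsum m) hA

lemma exists_dyadicSum_bound (hω : IsRegularModulus ω n) (d : ℕ) :
    ∃ C > 0, ∀ (ψ : 𝔼 d → ℝ) (A : ℝ), ContDiff ℝ (n + 1) ψ → (∀ u, |ψ u| ≤ A) →
      (∀ u, ‖iteratedFDeriv ℝ (n + 1) ψ u‖ ≤ A) → ∀ (D : Set (𝔼 d)) (m : ℕ) (x₀ : 𝔼 d),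
      zygSeminorm ω n D (fun x => dyadicSum ω ψ m (x - x₀)) ≤ ENNReal.ofReal (C * A) ∧
        ∀ x, |dyadicSum ω ψ m x| ≤ C * A := by
  obtain ⟨C₁, hC₁, happrox⟩ := hω.exists_dyadicSum_approx d
  obtain ⟨C₂, hsup_sum⟩ := hω.exists_abs_dyadicSum_le d
  refine ⟨max C₁ C₂, lt_max_of_lt_left hC₁, fun ψ A hψ hsup hderiv D m x₀ => ⟨?_, fun x => ?_⟩⟩
  all_goals have hA : 0 ≤ A := (abs_nonneg _).trans (hsup 0)
  · refine (zygSeminorm_le (fun t ht => hω.nonneg t ht.le)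
      (happrox ψ A hψ hsup hderiv m x₀)).trans (ENNReal.ofReal_le_ofReal ?_)
    gcongr
    exact le_max_left _ _
  · refine (hsup_sum ψ A hsup m x).trans ?_
    gcongr
    exact le_max_right _ _

end IsRegularModulus

/-! ### Principal values -/

lemma aestronglyMeasurable_of_continuousOn_compl_singleton {X F : Type*} [TopologicalSpace X]
    [T1Space X] [MeasurableSpace X] [OpensMeasurableSpace X] [SecondCountableTopology X]
    [TopologicalSpace F] [TopologicalSpace.PseudoMetrizableSpace F] {μ : Measure X} {f : X → F}
    {a : X} (hf : ContinuousOn f {a}ᶜ) : AEStronglyMeasurable f μ := by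
  rw [← μ.restrict_univ, ← compl_union_self {a}, aestronglyMeasurable_union_iff]
  exact ⟨hf.aestronglyMeasurable (measurableSet_singleton a).compl,
    (continuousOn_singleton f a).aestronglyMeasurable (measurableSet_singleton a)⟩

namespace IsSingularKernel

variable {d k : ℕ} {K : 𝔼 d → ℝ} {D : Set (𝔼 d)} {u h P : 𝔼 d → ℝ} {M : ℝ}

lemma integrableOn_smul_iteratedFDeriv (hK : IsSingularKernel k K) {m : ℕ} (hm : m ≤ k)
    (hD : MeasurableSet D) (hDv : volume D ≠ ⊤) (hu : Measurable u) (huM : ∀ x ∈ D, |u x| ≤ M)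
    {ε : ℝ} (hε : 0 < ε) {y : 𝔼 d} (hfar : ∀ x ∈ D, u x ≠ 0 → ε ≤ ‖y - x‖) :
    IntegrableOn (fun x => u x • iteratedFDeriv ℝ m K (y - x)) D := by
  obtain ⟨C, hC, bound⟩ := hK.exists_bound m hm
  have kernel_continuous : ContinuousOn (fun x => iteratedFDeriv ℝ m K (y - x)) {y}ᶜ :=
    (hK.continuousOn_iteratedFDeriv hm).comp (by fun_prop) fun x hx => sub_ne_zero.2 (Ne.symm hx)
  refine Measure.integrableOn_of_bounded (M := M * (C * (ε ^ (d + m))⁻¹)) hDv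
    (hu.aestronglyMeasurable.smul
      (aestronglyMeasurable_of_continuousOn_compl_singleton kernel_continuous)) ?_
  filter_upwards [ae_restrict_mem hD] with x hx
  have hM : 0 ≤ M := (abs_nonneg _).trans (huM x hx)
  rcases eq_or_ne (u x) 0 with hux | hux
  · rw [hux, zero_smul, norm_zero]
    positivity
  have hle := hfar x hx hux
  rw [norm_smul, Real.norm_eq_abs]
  calc |u x| * ‖iteratedFDeriv ℝ m K (y - x)‖ ≤ M * (C * (‖y - x‖ ^ (d + m))⁻¹) := by
        gcongr
        · exact huM x hx
        · exact bound _ (norm_pos_iff.1 (hε.trans_le hle))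
    _ ≤ M * (C * (ε ^ (d + m))⁻¹) := by gcongr

lemma integrableOn_mul (hK : IsSingularKernel k K) (hD : MeasurableSet D) (hDv : volume D ≠ ⊤)
    (hu : Measurable u) (huM : ∀ x ∈ D, |u x| ≤ M) {ε : ℝ} (hε : 0 < ε) {y : 𝔼 d}
    (hfar : ∀ x ∈ D, u x ≠ 0 → ε ≤ ‖y - x‖) : IntegrableOn (fun x => u x * K (y - x)) D := by
  have := (ContinuousMultilinearMap.apply ℝ (fun _ : Fin 0 => 𝔼 d) ℝ 0).integrable_comp
    (hK.integrableOn_smul_iteratedFDeriv k.zero_le hD hDv hu huM hε hfar)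
  simpa [IntegrableOn] using this

lemma integrableOn_commutator (hK : IsSingularKernel k K) (hD : MeasurableSet D)
    (hDb : Bornology.IsBounded D) {L : NNReal} (hh : LipschitzWith L h) (hP : Measurable P)
    (hPM : ∀ x ∈ D, |P x| ≤ M) (y : 𝔼 d) :
    IntegrableOn (fun x => (h x - h y) * P x * K (y - x)) D := by
  obtain ⟨C, -, bound⟩ := hK.exists_abs_le
  obtain ⟨R, hR⟩ := hDb.subset_ball y
  have majorant := ((integrableOn_ball_norm_mul_norm_pow_inv volume y R).mono_set hR).const_mul
    (L * M * C)
  have meas : Measurable fun x => (h x - h y) * P x * K (y - x) :=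
    ((hh.continuous.measurable.sub_const _).mul hP).mul
      (hK.measurable.comp (measurable_const.sub measurable_id))
  refine majorant.mono' meas.aestronglyMeasurable ?_
  filter_upwards [ae_restrict_mem hD] with x hx
  rcases eq_or_ne x y with rfl | hxy
  · simp
  have lip : |h x - h y| ≤ L * ‖x - y‖ := hh.norm_sub_le x y
  have kernel_le := bound (y - x) (sub_ne_zero.2 hxy.symm)
  rw [norm_sub_rev] at kernel_le
  rw [Real.norm_eq_abs, abs_mul, abs_mul, finrank_euclideanSpace_fin]
  calc |h x - h y| * |P x| * |K (y - x)|
      ≤ L * ‖x - y‖ * M * (C * (‖x - y‖ ^ d)⁻¹) := by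
        gcongr
        · exact mul_nonneg (by positivity) ((abs_nonneg _).trans (hPM x hx))
        · exact hPM x hx
    _ = L * M * C * (‖x - y‖ * (‖x - y‖ ^ d)⁻¹) := by ring

end IsSingularKernel

lemma tendsto_setIntegral_lt_dist {X : Type*} [MetricSpace X] [MeasurableSpace X]
    [OpensMeasurableSpace X] {μ : Measure X} {D : Set X} {G : X → ℝ} (hG : IntegrableOn G D μ)
    {y : X} (hy : G y = 0) :
    Tendsto (fun ε => ∫ x in {x ∈ D | ε < dist y x}, G x ∂μ) (𝓝[>] 0) (𝓝 (∫ x in D, G x ∂μ)) := by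
  have hmeas (ε : ℝ) : MeasurableSet {x | ε < dist y x} :=
    (isOpen_lt continuous_const (continuous_const.dist continuous_id)).measurableSet
  have as_indicator (ε : ℝ) : ∫ x in {x ∈ D | ε < dist y x}, G x ∂μ =
      ∫ x in D, {x | ε < dist y x}.indicator G x ∂μ :=
    (setIntegral_indicator (hmeas ε)).symm
  simp only [as_indicator]
  refine tendsto_integral_filter_of_dominated_convergence (fun x => ‖G x‖)
    (.of_forall fun ε => hG.1.indicator (hmeas ε))
    (.of_forall fun ε => ae_of_all _ fun x => norm_indicator_le_norm_self G x) hG.norm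
    (ae_of_all _ fun x => ?_)
  rcases eq_or_ne y x with rfl | hyx
  · simp [indicator, hy]
  refine tendsto_const_nhds.congr' ?_
  filter_upwards [mem_nhdsWithin_of_mem_nhds (Iio_mem_nhds (dist_pos.2 hyx))] with ε hε
  exact (indicator_of_mem (s := {x | ε < dist y x}) hε G).symm

namespace IsRestrictedCZ

variable {d k : ℕ} {K : 𝔼 d → ℝ} {D : Set (𝔼 d)} {h P g : 𝔼 d → ℝ} {M : ℝ}

lemma lipschitz_mul (hg : IsRestrictedCZ D K P g) (hK : IsSingularKernel k K)
    (hD : MeasurableSet D) (hDb : Bornology.IsBounded D) {L : NNReal} (hh : LipschitzWith L h)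
    (hP : Measurable P) (hPM : ∀ x ∈ D, |P x| ≤ M) :
    IsRestrictedCZ D K (fun x => h x * P x)
      (D.indicator fun y => h y * g y + ∫ x in D, (h x - h y) * P x * K (y - x)) := by
  refine ⟨fun y hy => indicator_of_notMem hy _, ?_⟩
  filter_upwards [hg.2, ae_restrict_mem hD] with y hy hyD
  rw [indicator_of_mem hyD]
  have commutator_integrable := hK.integrableOn_commutator hD hDb hh hP hPM y
  have commutator_tendsto :=
    tendsto_setIntegral_lt_dist (y := y) commutator_integrable (by simp)
  refine ((hy.const_mul (h y)).add commutator_tendsto).congr' ?_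
  filter_upwards [self_mem_nhdsWithin] with ε (hε : 0 < ε)
  have trunc_meas : MeasurableSet {x ∈ D | ε < dist y x} :=
    hD.inter (isOpen_lt continuous_const (continuous_const.dist continuous_id)).measurableSet
  have trunc_finite : volume {x ∈ D | ε < dist y x} ≠ ⊤ :=
    measure_ne_top_of_subset (fun x hx => hx.1) hDb.measure_lt_top.ne
  have trunc_integrable : IntegrableOn (fun x => P x * K (y - x)) {x ∈ D | ε < dist y x} :=
    hK.integrableOn_mul trunc_meas trunc_finite hP (fun x hx => hPM x hx.1) hε
      fun x hx _ => (dist_eq_norm y x).ge.trans' hx.2.le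
  rw [← integral_const_mul, ← integral_add (trunc_integrable.const_mul _)
    (commutator_integrable.mono_set fun x hx => hx.1)]
  exact integral_congr_ae (ae_of_all _ fun x => by ring)

lemma ae_eq_zero (hg : IsRestrictedCZ D K P g) (hP : ∀ x ∈ D, P x = 0) :
    ∀ᵐ y ∂volume.restrict D, g y = 0 := by
  filter_upwards [hg.2] with y hy
  refine tendsto_nhds_unique hy (tendsto_const_nhds.congr fun ε => ?_)
  exact (setIntegral_eq_zero_of_forall_eq_zero fun x hx => by rw [hP x hx.1, zero_mul]).symm

end IsRestrictedCZ

/-! ### Potentials of densities supported away from a point -/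

lemma half_norm_le_norm_add_smul {E : Type*} [NormedAddCommGroup E] [NormedSpace ℝ E] {z v : E}
    (hv : ‖v‖ ≤ ‖z‖ / 2) {t : ℝ} (ht : t ∈ Icc (0 : ℝ) 1) : ‖z‖ / 2 ≤ ‖z + t • v‖ := by
  have smul_le : ‖t • v‖ ≤ ‖v‖ := by
    rw [norm_smul, Real.norm_of_nonneg ht.1]
    exact mul_le_of_le_one_left (norm_nonneg _) ht.2
  linarith [norm_sub_le_norm_add z (t • v)]

lemma exists_polyLE_eq_integral_taylorPoly {X : Type*} [MeasurableSpace X] {μ : Measure X}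
    {d n : ℕ} {F : 𝔼 d → ℝ} {u : X → ℝ} {a : X → 𝔼 d}
    (hint : ∀ k ≤ n, Integrable (fun x => u x • iteratedFDeriv ℝ k F (a x)) μ) :
    ∃ S ∈ PolyLE d n, ∀ v, Integrable (fun x => u x * taylorPoly n F (a x) v) μ ∧
      S v = ∫ x, u x * taylorPoly n F (a x) v ∂μ := by
  have mul_eq (x : X) (v : 𝔼 d) : u x * taylorPoly n F (a x) v = ∑ k ∈ Finset.range (n + 1),
      (k.factorial : ℝ)⁻¹ • (u x • iteratedFDeriv ℝ k F (a x)) fun _ => v := by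
    simp only [taylorPoly, Finset.mul_sum, smul_apply, smul_eq_mul, mul_left_comm]
  have term_integrable (v : 𝔼 d) (k : ℕ) (hk : k ∈ Finset.range (n + 1)) :
      Integrable (fun x => (k.factorial : ℝ)⁻¹ •
        (u x • iteratedFDeriv ℝ k F (a x)) fun _ => v) μ :=
    ((ContinuousMultilinearMap.apply ℝ (fun _ : Fin k => 𝔼 d) ℝ fun _ => v).integrable_comp
      (hint k (Finset.mem_range_succ_iff.1 hk))).smul (k.factorial : ℝ)⁻¹
  refine ⟨∑ k ∈ Finset.range (n + 1), (k.factorial : ℝ)⁻¹ •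
    fun v => (∫ x, u x • iteratedFDeriv ℝ k F (a x) ∂μ) fun _ => v,
    PolyLE.sum fun k hk => PolyLE.smul _ <|
      PolyLE.multilinear_diag (Finset.mem_range_succ_iff.1 hk)
        (∫ x, u x • iteratedFDeriv ℝ k F (a x) ∂μ).toMultilinearMap,
    fun v => ⟨?_, ?_⟩⟩
  · simp only [mul_eq]
    exact integrable_finsetSum _ (term_integrable v)
  · simp only [mul_eq]
    rw [integral_finsetSum _ (term_integrable v), Finset.sum_apply]
    refine Finset.sum_congr rfl fun k hk => ?_
    rw [integral_smul, Pi.smul_apply,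
      ContinuousMultilinearMap.integral_apply (hint k (Finset.mem_range_succ_iff.1 hk))]

lemma exists_setIntegral_tail_sum_le {E ι : Type*} [NormedAddCommGroup E] [NormedSpace ℝ E]
    [FiniteDimensional ℝ E] [MeasurableSpace E] [BorelSpace E] (μ : Measure E)
    [μ.IsAddHaarMeasure] :
    ∃ C > 0, ∀ (D : Set E) (x₀ : E) (s : Finset ι) (b r : ι → ℝ),
      (∀ k ∈ s, 0 ≤ b k) → (∀ k ∈ s, 0 < r k) →
      IntegrableOn (fun x => ∑ k ∈ s, {x | r k ≤ ‖x - x₀‖}.indicator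
        (fun x => b k * (‖x - x₀‖ ^ (Module.finrank ℝ E + 1))⁻¹) x) D μ ∧
      ∫ x in D, ∑ k ∈ s, {x | r k ≤ ‖x - x₀‖}.indicator
        (fun x => b k * (‖x - x₀‖ ^ (Module.finrank ℝ E + 1))⁻¹) x ∂μ ≤
          C * ∑ k ∈ s, b k * (r k)⁻¹ := by
  obtain ⟨C, hC, tail⟩ := exists_tail_integral_le μ
  refine ⟨C, hC, fun D x₀ s b r hb hr => ?_⟩
  set j := Module.finrank ℝ E + 1
  let w (k : ι) : E → ℝ := {x | r k ≤ ‖x - x₀‖}.indicator fun x => b k * (‖x - x₀‖ ^ j)⁻¹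
  have far_meas (k : ι) : MeasurableSet {x : E | r k ≤ ‖x - x₀‖} :=
    measurableSet_le measurable_const (by fun_prop)
  have w_integrable (k : ι) (hk : k ∈ s) : Integrable (w k) μ :=
    (integrable_indicator_iff (far_meas k)).2 ((tail x₀ (r k) (hr k hk)).1.const_mul (b k))
  have w_nonneg (k : ι) (hk : k ∈ s) (x : E) : 0 ≤ w k x :=
    indicator_nonneg (fun x _ => mul_nonneg (hb k hk) (by positivity)) x
  refine ⟨(integrable_finsetSum _ w_integrable).integrableOn, ?_⟩
  rw [integral_finsetSum _ fun k hk => (w_integrable k hk).integrableOn, Finset.mul_sum]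
  refine Finset.sum_le_sum fun k hk => ?_
  calc ∫ x in D, w k x ∂μ ≤ ∫ x, w k x ∂μ :=
        setIntegral_le_integral (w_integrable k hk) (ae_of_all _ (w_nonneg k hk))
    _ = b k * ∫ x in {x | r k ≤ ‖x - x₀‖}, (‖x - x₀‖ ^ j)⁻¹ ∂μ := by
        rw [integral_indicator (far_meas k), integral_const_mul]
    _ ≤ b k * (C * (r k)⁻¹) :=
        mul_le_mul_of_nonneg_left (tail x₀ (r k) (hr k hk)).2 (hb k hk)
    _ = C * (b k * (r k)⁻¹) := mul_left_comm _ _ _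

namespace IsSingularKernel

variable {d n : ℕ} {K : 𝔼 d → ℝ}

lemma exists_abs_sub_taylorPoly_le (hK : IsSingularKernel (n + 1) K) :
    ∃ C > 0, ∀ z v, z ≠ 0 → ‖v‖ ≤ ‖z‖ / 2 →
      |K (z + v) - taylorPoly n K z v| ≤ C * ‖v‖ ^ (n + 1) * (‖z‖ ^ (d + (n + 1)))⁻¹ := by
  obtain ⟨C, hC, bound⟩ := hK.exists_bound (n + 1) le_rfl
  refine ⟨C * 2 ^ (d + (n + 1)), by positivity, fun z v hz hv => ?_⟩
  have hz' : 0 < ‖z‖ := norm_pos_iff.2 hz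
  have segment_ne (t : ℝ) (ht : t ∈ Icc (0 : ℝ) 1) : z + t • v ≠ 0 :=
    norm_pos_iff.1 ((half_pos hz').trans_le (half_norm_le_norm_add_smul hv ht))
  have deriv_le (t : ℝ) (ht : t ∈ Icc (0 : ℝ) 1) :
      ‖iteratedFDeriv ℝ (n + 1) K (z + t • v)‖ ≤ C * ((‖z‖ / 2) ^ (d + (n + 1)))⁻¹ := by
    refine (bound _ (segment_ne t ht)).trans ?_
    gcongr
    exact half_norm_le_norm_add_smul hv ht
  refine (norm_sub_taylorPoly_le (fun t ht => mod_cast hK.contDiffAt _ (segment_ne t ht))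
    deriv_le).trans_eq ?_
  rw [div_pow, inv_div]
  ring

lemma exists_polyLE_approx_integral (hK : IsSingularKernel (n + 1) K) :
    ∃ C > 0, ∀ (D : Set (𝔼 d)), MeasurableSet D → volume D ≠ ⊤ →
      ∀ (u w : 𝔼 d → ℝ) (M : ℝ), Measurable u → (∀ x ∈ D, |u x| ≤ M) → IntegrableOn w D →
      ∀ (x₀ : 𝔼 d) (ρ : ℝ), 0 < ρ → (∀ x ∈ D, u x ≠ 0 → ρ ≤ ‖x - x₀‖) →
      (∀ x ∈ D, |u x| * (‖x - x₀‖ ^ (d + (n + 1)))⁻¹ ≤ w x) →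
      ∃ S ∈ PolyLE d n, ∀ y, ‖y - x₀‖ ≤ ρ / 2 → |(∫ x in D, u x * K (y - x)) - S y| ≤
        C * ‖y - x₀‖ ^ (n + 1) * ∫ x in D, w x := by
  obtain ⟨C, hC, taylor⟩ := hK.exists_abs_sub_taylorPoly_le
  refine ⟨C, hC, fun D hD hDv u w M hu huM hw x₀ ρ hρ hfar huw => ?_⟩
  have coeff_integrable (k : ℕ) (hk : k ≤ n) :=
    hK.integrableOn_smul_iteratedFDeriv (hk.trans n.le_succ) hD hDv hu huM hρ (y := x₀)
      fun x hx hux => (norm_sub_rev x₀ x).ge.trans' (hfar x hx hux)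
  obtain ⟨S, hS, S_spec⟩ := exists_polyLE_eq_integral_taylorPoly coeff_integrable
  refine ⟨fun y => S ((1 : ℝ) • (y - x₀)), PolyLE.comp_smul_sub hS 1 x₀, fun y hy => ?_⟩
  have potential_integrable : IntegrableOn (fun x => u x * K (y - x)) D := by
    refine hK.integrableOn_mul hD hDv hu huM (half_pos hρ) fun x hx hux => ?_
    linarith [hfar x hx hux, norm_sub_le_norm_sub_add_norm_sub x y x₀, norm_sub_rev x y]
  simp only [one_smul]
  rw [(S_spec _).2, ← integral_sub potential_integrable (S_spec _).1, ← integral_const_mul,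
    ← Real.norm_eq_abs]
  refine norm_integral_le_of_norm_le (hw.const_mul (C * ‖y - x₀‖ ^ (n + 1))) ?_
  filter_upwards [ae_restrict_mem hD] with x hx
  rw [← mul_sub, norm_mul, Real.norm_eq_abs, Real.norm_eq_abs]
  rcases eq_or_ne (u x) 0 with hux | hux
  · have := huw x hx
    rw [hux, abs_zero, zero_mul] at this ⊢
    positivity
  have hle := hfar x hx hux
  have taylor_le := taylor (x₀ - x) (y - x₀)
    (norm_pos_iff.1 (by rw [norm_sub_rev]; exact hρ.trans_le hle))
    (by rw [norm_sub_rev x₀]; linarith)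
  rw [sub_add_sub_cancel', norm_sub_rev x₀] at taylor_le
  calc |u x| * |K (y - x) - taylorPoly n K (x₀ - x) (y - x₀)|
      ≤ |u x| * (C * ‖y - x₀‖ ^ (n + 1) * (‖x - x₀‖ ^ (d + (n + 1)))⁻¹) := by gcongr
    _ = C * ‖y - x₀‖ ^ (n + 1) * (|u x| * (‖x - x₀‖ ^ (d + (n + 1)))⁻¹) := by ring
    _ ≤ C * ‖y - x₀‖ ^ (n + 1) * w x := by gcongr; exact huw x hx

lemma exists_polyLE_approx_integral_of_le_sum (hK : IsSingularKernel (n + 1) K) :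
    ∃ C > 0, ∀ (D : Set (𝔼 d)), MeasurableSet D → volume D ≠ ⊤ →
      ∀ (u : 𝔼 d → ℝ) (M : ℝ), Measurable u → (∀ x ∈ D, |u x| ≤ M) →
      ∀ (x₀ : 𝔼 d) (ρ : ℝ) (s : Finset ℕ) (b r : ℕ → ℝ), 0 < ρ → (∀ k ∈ s, 0 ≤ b k) →
      (∀ k ∈ s, ρ ≤ r k) →
      (∀ x, |u x| ≤ ∑ k ∈ s, {x | r k ≤ ‖x - x₀‖}.indicator (fun x => b k * ‖x - x₀‖ ^ n) x) →
      ∃ S ∈ PolyLE d n, ∀ y, ‖y - x₀‖ ≤ ρ / 2 → |(∫ x in D, u x * K (y - x)) - S y| ≤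
        C * ‖y - x₀‖ ^ (n + 1) * ∑ k ∈ s, b k * (r k)⁻¹ := by
  obtain ⟨C₁, hC₁, approx⟩ := hK.exists_polyLE_approx_integral
  obtain ⟨C₂, hC₂, tail⟩ := exists_setIntegral_tail_sum_le (volume : Measure (𝔼 d))
  rw [finrank_euclideanSpace_fin] at tail
  refine ⟨C₁ * C₂, by positivity, fun D hD hDv u M hu huM x₀ ρ s b r hρ hb hr hub => ?_⟩
  have hr' (k : ℕ) (hk : k ∈ s) : 0 < r k := hρ.trans_le (hr k hk)
  obtain ⟨w_integrable, w_integral_le⟩ := tail D x₀ s b r hb hr'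
  have hfar (x : 𝔼 d) (hux : u x ≠ 0) : ρ ≤ ‖x - x₀‖ := by
    obtain ⟨k, hk, hne⟩ := Finset.exists_ne_zero_of_sum_ne_zero
      ((abs_pos.2 hux).trans_le (hub x)).ne'
    exact (hr k hk).trans (mem_of_indicator_ne_zero (s := {x | r k ≤ ‖x - x₀‖}) hne)
  have u_le (x : 𝔼 d) : |u x| * (‖x - x₀‖ ^ (d + (n + 1)))⁻¹ ≤ ∑ k ∈ s,
      {x | r k ≤ ‖x - x₀‖}.indicator (fun x => b k * (‖x - x₀‖ ^ (d + 1))⁻¹) x := by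
    refine (mul_le_mul_of_nonneg_right (hub x) (by positivity)).trans_eq ?_
    rw [Finset.sum_mul]
    refine Finset.sum_congr rfl fun k hk => ?_
    simp only [indicator_apply, mem_ofPred_eq]
    split_ifs with hx
    · have : 0 < ‖x - x₀‖ := (hr' k hk).trans_le hx
      rw [← add_assoc, add_right_comm, pow_add _ (d + 1)]
      field_simp
    · exact zero_mul _
  obtain ⟨S, hS, hSu⟩ := approx D hD hDv u _ M hu huM w_integrable x₀ ρ hρ (fun x _ => hfar x)
    fun x _ => u_le x
  refine ⟨S, hS, fun y hy => ?_⟩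
  calc _ ≤ C₁ * ‖y - x₀‖ ^ (n + 1) * ∫ x in D, ∑ k ∈ s, {x | r k ≤ ‖x - x₀‖}.indicator
          (fun x => b k * (‖x - x₀‖ ^ (d + 1))⁻¹) x := hSu y hy
    _ ≤ C₁ * ‖y - x₀‖ ^ (n + 1) * (C₂ * ∑ k ∈ s, b k * (r k)⁻¹) := by gcongr
    _ = C₁ * C₂ * ‖y - x₀‖ ^ (n + 1) * ∑ k ∈ s, b k * (r k)⁻¹ := by ring

end IsSingularKernel

/-! ### The test functions -/

/-- `q` is (the function of) a homogeneous polynomial of degree `n` on `ℝ^d`. -/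
structure IsHomogeneousPoly {d : ℕ} (n : ℕ) (q : 𝔼 d → ℝ) : Prop where
  mem_polyLE : q ∈ PolyLE d n
  map_smul : ∀ (c : ℝ) x, q (c • x) = c ^ n * q x

/-- A smooth cutoff on `ℝ^d`, equal to `1` on the ball of radius `d + 1`. -/
def cutoff (d : ℕ) : 𝔼 d → ℝ :=
  (⟨d + 1, 2 * (d + 1), by positivity, by linarith [(Nat.cast_nonneg d : (0 : ℝ) ≤ d)]⟩ :
    ContDiffBump (0 : 𝔼 d))

/-- The multiplier `∑_{k < m} ω(2⁻ᵏ) 2ᵏⁿ φ(2ᵏ x)` with `φ = cutoff d`: its product with a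
homogeneous polynomial `q` of degree `n` is the superposition of the dyadic dilates of `q φ`, and
near the origin it equals `dyadicXi ω n m`. -/
def dyadicCutoff {d : ℕ} (ω : ℝ → ℝ) (n m : ℕ) (x : 𝔼 d) : ℝ :=
  ∑ k ∈ Finset.range m, ω (2 ^ k)⁻¹ * (2 ^ k) ^ n * cutoff d ((2 ^ k : ℝ) • x)

lemma isHomogeneousPoly_eval {d n : ℕ} {p : MvPolynomial (Fin d) ℝ} (hp : p.IsHomogeneous n) :
    IsHomogeneousPoly n fun x : 𝔼 d => MvPolynomial.eval (fun i => x i) p where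
  mem_polyLE := ⟨p, hp.totalDegree_le, fun _ => rfl⟩
  map_smul c _ := eval_smul_of_isHomogeneous hp c _

section Cutoff

variable {d : ℕ}

lemma contDiff_cutoff {k : ℕ∞} : ContDiff ℝ k (cutoff d) := ContDiffBump.contDiff _

lemma hasCompactSupport_cutoff : HasCompactSupport (cutoff d) := ContDiffBump.hasCompactSupport _

lemma cutoff_eq_one {x : 𝔼 d} (hx : ‖x‖ ≤ d + 1) : cutoff d x = 1 :=
  ContDiffBump.one_of_mem_closedBall _ (by simpa using hx)

lemma abs_cutoff_sub_one_le (x : 𝔼 d) : |cutoff d x - 1| ≤ 1 := by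
  have nonneg : 0 ≤ cutoff d x := ContDiffBump.nonneg _
  have le_one : cutoff d x ≤ 1 := ContDiffBump.le_one _
  rw [abs_le]
  constructor <;> linarith

lemma exists_lipschitzWith_dyadicCutoff (ω : ℝ → ℝ) (n m : ℕ) (x₀ : 𝔼 d) :
    ∃ L, LipschitzWith L fun x => dyadicCutoff ω n m (x - x₀) := by
  obtain ⟨L, hL⟩ := (contDiff_cutoff (d := d) (k := 1)).lipschitzWith_of_hasCompactSupport
    hasCompactSupport_cutoff (by simp)
  induction m with
  | zero => exact ⟨0, by simp [dyadicCutoff]⟩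
  | succ m ih =>
    obtain ⟨L', hL'⟩ := ih
    simp only [dyadicCutoff, Finset.sum_range_succ] at hL' ⊢
    exact ⟨_, hL'.add <| (lipschitzWith_smul (ω (2 ^ m)⁻¹ * (2 ^ m) ^ n)).comp <| hL.comp <|
      (lipschitzWith_smul (2 ^ m : ℝ)).comp <| LipschitzWith.id.sub (LipschitzWith.const x₀)⟩

lemma dyadicCutoff_mul {n : ℕ} {q : 𝔼 d → ℝ} (hq : IsHomogeneousPoly n q) (ω : ℝ → ℝ) (m : ℕ)
    (x : 𝔼 d) : dyadicCutoff ω n m x * q x = dyadicSum ω (q * cutoff d) m x := by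
  rw [dyadicCutoff, dyadicSum, Finset.sum_mul]
  refine Finset.sum_congr rfl fun k _ => ?_
  rw [Pi.mul_apply, hq.map_smul]
  ring

lemma dyadicCutoff_eq_dyadicXi (ω : ℝ → ℝ) (n : ℕ) {m : ℕ} {l : ℝ} {x₀ y : 𝔼 d}
    (hm : ∀ k < m, 2 ^ k * l ≤ 1) (hy : y ∈ cube x₀ l) :
    dyadicCutoff ω n m (y - x₀) = dyadicXi ω n m := by
  refine Finset.sum_congr rfl fun k hk => ?_
  rw [cutoff_eq_one, mul_one]
  rw [norm_smul, norm_pow, Real.norm_ofNat]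
  calc (2 : ℝ) ^ k * ‖y - x₀‖ ≤ 2 ^ k * (d * (l / 2)) := by
        gcongr
        exact norm_sub_le_of_mem_cube hy
    _ = d / 2 * (2 ^ k * l) := by ring
    _ ≤ d / 2 * 1 := by
        gcongr
        exact hm k (Finset.mem_range.1 hk)
    _ ≤ d + 1 := by linarith [(Nat.cast_nonneg d : (0 : ℝ) ≤ d)]

lemma abs_dyadicCutoff_sub_dyadicXi_mul_le {ω : ℝ → ℝ} {n : ℕ} (hω : IsRegularModulus ω n)
    (m : ℕ) {q : 𝔼 d → ℝ} {B : ℝ} {x : 𝔼 d} (hq : |q x| ≤ B * ‖x‖ ^ n) :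
    |(dyadicCutoff ω n m x - dyadicXi ω n m) * q x| ≤ ∑ k ∈ Finset.range m,
      {x : 𝔼 d | (d + 1) * (2 ^ k : ℝ)⁻¹ ≤ ‖x‖}.indicator
        (fun x => ω (2 ^ k)⁻¹ * (2 ^ k) ^ n * B * ‖x‖ ^ n) x := by
  rw [dyadicCutoff, dyadicXi, ← Finset.sum_sub_distrib, Finset.sum_mul]
  refine (Finset.abs_sum_le_sum_abs _ _).trans (Finset.sum_le_sum fun k _ => ?_)
  have coeff_nonneg : 0 ≤ ω (2 ^ k)⁻¹ * (2 ^ k) ^ n :=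
    mul_nonneg (hω.nonneg _ (by positivity)) (by positivity)
  rw [← mul_sub_one, mul_assoc, abs_mul, abs_of_nonneg coeff_nonneg, abs_mul, indicator_apply]
  split_ifs with hx
  · rw [mul_assoc _ B]
    refine mul_le_mul_of_nonneg_left ?_ coeff_nonneg
    exact (mul_le_of_le_one_left (abs_nonneg _) (abs_cutoff_sub_one_le _)).trans hq
  · have norm_le : ‖(2 ^ k : ℝ) • x‖ ≤ d + 1 := by
      rw [norm_smul, norm_pow, Real.norm_ofNat, ← le_div_iff₀' (by positivity), div_eq_mul_inv]
      exact (not_le.1 hx).le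
    rw [cutoff_eq_one norm_le, sub_self, abs_zero, zero_mul, mul_zero]

end Cutoff

lemma exists_homogeneousPoly_bound {d : ℕ} (n : ℕ) {D : Set (𝔼 d)} (hD : IsOpen D)
    (hne : D.Nonempty) (hDb : Bornology.IsBounded D) :
    ∃ C > 0, ∀ q : 𝔼 d → ℝ, IsHomogeneousPoly n q → ∀ x₀ ∈ D, ∀ M,
      (∀ x ∈ D, |q (x - x₀)| ≤ M) →
      (∀ u, |q u| ≤ C * M * ‖u‖ ^ n) ∧ (∀ u, |(q * cutoff d) u| ≤ C * M) ∧
        ∀ u, ‖iteratedFDeriv ℝ (n + 1) (q * cutoff d) u‖ ≤ C * M := by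
  obtain ⟨C₀, hC₀, le_nhd⟩ := PolyLE.exists_abs_le_of_isBounded n hD hne
    (hDb.cthickening (δ := 1))
  have ball_nonempty : (ball (0 : 𝔼 d) 1).Nonempty := nonempty_ball.2 one_pos
  obtain ⟨C₁, -, le_sup⟩ := PolyLE.exists_norm_iteratedFDeriv_mul_le n (m := 0) isOpen_ball
    ball_nonempty (contDiff_cutoff (d := d)) hasCompactSupport_cutoff
  obtain ⟨C₂, -, le_deriv⟩ := PolyLE.exists_norm_iteratedFDeriv_mul_le n (m := n + 1) isOpen_ball
    ball_nonempty (contDiff_cutoff (d := d)) hasCompactSupport_cutoff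
  refine ⟨max 1 (max C₁ C₂) * C₀, by positivity, fun q hq x₀ hx₀ M hM => ?_⟩
  have le_unit (u : 𝔼 d) (hu : ‖u‖ ≤ 1) : |q u| ≤ C₀ * M := by
    have := le_nhd _ (PolyLE.comp_smul_sub hq.mem_polyLE 1 x₀) M (by simpa using hM) (x₀ + u)
      (mem_cthickening_of_dist_le _ x₀ _ _ hx₀ (by simpa using hu))
    simpa using this
  have hM₀ : 0 ≤ C₀ * M := (abs_nonneg _).trans (le_unit 0 (by simp))
  have le_unit_ball (u : 𝔼 d) (hu : u ∈ ball (0 : 𝔼 d) 1) : |q u| ≤ C₀ * M :=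
    le_unit u (mem_ball_zero_iff.1 hu).le
  have enlarge {c : ℝ} (hc : c ≤ max 1 (max C₁ C₂)) :
      c * (C₀ * M) ≤ max 1 (max C₁ C₂) * C₀ * M := by
    rw [mul_assoc _ C₀]
    exact mul_le_mul_of_nonneg_right hc hM₀
  refine ⟨fun u => ?_, fun u => ?_, fun u => ?_⟩
  · refine (abs_le_mul_norm_pow_of_homogeneous hq.map_smul le_unit u).trans ?_
    exact mul_le_mul_of_nonneg_right (by simpa using enlarge (le_max_left _ _)) (by positivity)
  · rw [← Real.norm_eq_abs, ← norm_iteratedFDeriv_zero (𝕜 := ℝ)]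
    exact (le_sup q hq.mem_polyLE _ le_unit_ball u).trans (enlarge (by simp))
  · exact (le_deriv q hq.mem_polyLE _ le_unit_ball u).trans (enlarge (by simp))

/-! ### Action of the operator on homogeneous polynomials -/

section HomogeneousPoly

variable {d n : ℕ} {ω : ℝ → ℝ} {D : Set (𝔼 d)} {K : 𝔼 d → ℝ}

lemma cubeMeanDist_le_of_mul_add_eq {x₀ : 𝔼 d} {l H a b : ℝ} {f g e S₁ S₂ : 𝔼 d → ℝ}
    (hl : 0 < l) (hH : 0 < H) (ha : 0 ≤ a) (hb : 0 ≤ b)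
    (hf : ∀ y ∈ cube x₀ l, f y = H * g y + e y) (hS₁ : cubeMeanDist x₀ l f S₁ ≤ ENNReal.ofReal a)
    (hS₂ : ∀ y ∈ cube x₀ l, |e y - S₂ y| ≤ b) :
    cubeMeanDist x₀ l g (H⁻¹ • (S₁ - S₂)) ≤ ENNReal.ofReal (H⁻¹ * (a + b)) := by
  have pointwise (y : 𝔼 d) (hy : y ∈ cube x₀ l) : ENNReal.ofReal |g y - (H⁻¹ • (S₁ - S₂)) y| ≤
      ENNReal.ofReal H⁻¹ * (ENNReal.ofReal |f y - S₁ y| + ENNReal.ofReal b) := by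
    rw [← ENNReal.ofReal_add (abs_nonneg _) hb, ← ENNReal.ofReal_mul (by positivity)]
    refine ENNReal.ofReal_le_ofReal ?_
    have sub_eq : g y - (H⁻¹ • (S₁ - S₂)) y = H⁻¹ * ((f y - S₁ y) - (e y - S₂ y)) := by
      rw [hf y hy, Pi.smul_apply, Pi.sub_apply, smul_eq_mul]
      field_simp
      ring
    rw [sub_eq, abs_mul, abs_of_pos (inv_pos.2 hH)]
    gcongr
    exact (abs_sub _ _).trans (by gcongr; exact hS₂ y hy)
  have volume_ne_zero : ENNReal.ofReal (l ^ d) ≠ 0 := (ENNReal.ofReal_pos.2 (by positivity)).ne'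
  calc cubeMeanDist x₀ l g (H⁻¹ • (S₁ - S₂))
      ≤ (ENNReal.ofReal (l ^ d))⁻¹ * ∫⁻ y in cube x₀ l,
          ENNReal.ofReal H⁻¹ * (ENNReal.ofReal |f y - S₁ y| + ENNReal.ofReal b) := by
        rw [cubeMeanDist]
        gcongr 1
        exact setLIntegral_mono' (isClosed_cube x₀ l).measurableSet pointwise
    _ = ENNReal.ofReal H⁻¹ * (cubeMeanDist x₀ l f S₁ + ENNReal.ofReal b) := by
        rw [lintegral_const_mul' _ _ ENNReal.ofReal_ne_top, lintegral_add_right _ measurable_const,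
          setLIntegral_const, volume_cube x₀ hl.le, mul_left_comm, mul_add, mul_left_comm _ _
          (ENNReal.ofReal (l ^ d)), ENNReal.inv_mul_cancel volume_ne_zero ENNReal.ofReal_ne_top,
          mul_one, cubeMeanDist]
    _ ≤ ENNReal.ofReal (H⁻¹ * (a + b)) := by
        rw [ENNReal.ofReal_mul (by positivity), ENNReal.ofReal_add ha hb]
        gcongr

lemma IsBoundedOnZygmund.exists_testFunction_bound (hω : IsRegularModulus ω n)
    (hT : IsBoundedOnZygmund ω n D K) (hD : MeasurableSet D) (hDb : Bornology.IsBounded D) :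
    ∃ C > 0, ∀ (q : 𝔼 d → ℝ) (A : ℝ), IsHomogeneousPoly n q → 0 < A →
      (∀ u, |(q * cutoff d) u| ≤ A) → (∀ u, ‖iteratedFDeriv ℝ (n + 1) (q * cutoff d) u‖ ≤ A) →
      ∀ (m : ℕ) (x₀ : 𝔼 d) (l : ℝ) (g : 𝔼 d → ℝ), 0 < l → cube x₀ l ⊆ D →
      IsRestrictedCZ D K (fun x => dyadicCutoff ω n m (x - x₀) * q (x - x₀)) g →
      ∃ S ∈ PolyLE d n, cubeMeanDist x₀ l g S ≤ ENNReal.ofReal (C * A * ω l) := by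
  obtain ⟨C₁, hC₁, sum_bound⟩ := hω.exists_dyadicSum_bound d
  obtain ⟨C₂, hC₂, zyg_lt⟩ := hT.exists_zygSeminorm_lt hD hDb
  refine ⟨C₂ * C₁, by positivity, fun q A hq hA hsup hderiv m x₀ l g hl hcube hg => ?_⟩
  have profile_contDiff : ContDiff ℝ (n + 1) (q * cutoff d) :=
    (PolyLE.contDiff hq.mem_polyLE).mul (mod_cast contDiff_cutoff (k := (n + 1 : ℕ)))
  obtain ⟨zyg_le, sup_le⟩ := sum_bound _ A profile_contDiff hsup hderiv D m x₀
  have test_continuous : Continuous fun x => dyadicSum ω (q * cutoff d) m (x - x₀) := by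
    have := profile_contDiff.continuous
    simp only [dyadicSum]
    fun_prop
  simp only [dyadicCutoff_mul hq] at hg
  rw [mul_assoc C₂]
  exact exists_cubeMeanDist_le_of_zygSeminorm_lt
    (zyg_lt _ g (C₁ * A) (by positivity) test_continuous zyg_le (fun x _ => sup_le _) hg).2
    hl hcube (hω.nonneg l hl.le)

lemma IsRegularModulus.exists_pow_mul_sum_le (hω : IsRegularModulus ω n) {N : ℝ} (hN : 0 < N) :
    ∃ C > 0, ∀ (m : ℕ) (l B : ℝ), 0 < l → 0 ≤ B → (∀ k < m, 2 ^ k * l ≤ 1) →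
      (N * l) ^ (n + 1) * ∑ k ∈ Finset.range m,
        ω (2 ^ k)⁻¹ * (2 ^ k) ^ n * B * (N * (2 ^ k)⁻¹)⁻¹ ≤ C * B * ω l := by
  obtain ⟨C, hC, sum_le⟩ := hω.exists_sum_mul_min_le
  refine ⟨N ^ n * C, by positivity, fun m l B hl hB hm => ?_⟩
  calc _ = N ^ n * B *
          ∑ k ∈ Finset.range m, ω (2 ^ k)⁻¹ * min 1 ((2 ^ k * l) ^ (n + 1)) := by
        simp only [Finset.mul_sum]
        refine Finset.sum_congr rfl fun k hk => ?_
        rw [min_eq_right (pow_le_one₀ (by positivity) (hm k (Finset.mem_range.1 hk)))]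
        field_simp
        ring
    _ ≤ N ^ n * B * (C * ω l) := by
        gcongr
        exact sum_le l hl m
    _ = N ^ n * C * B * ω l := by ring

lemma IsSingularKernel.exists_polyLE_approx_farField (hK : IsSingularKernel (n + 1) K)
    (hω : IsRegularModulus ω n) (hD : MeasurableSet D) (hDb : Bornology.IsBounded D) :
    ∃ C > 0, ∀ (q : 𝔼 d → ℝ) (B : ℝ), IsHomogeneousPoly n q → 0 ≤ B →
      (∀ u, |q u| ≤ B * ‖u‖ ^ n) →
      ∀ (m : ℕ) (x₀ : 𝔼 d) (l : ℝ), 0 < l → (∀ k < m, 2 ^ k * l ≤ 1) →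
      ∃ S ∈ PolyLE d n, ∀ y ∈ cube x₀ l,
        |(∫ x in D, (dyadicCutoff ω n m (x - x₀) - dyadicXi ω n m) * q (x - x₀) * K (y - x)) -
          S y| ≤ C * B * ω l := by
  obtain ⟨C₁, hC₁, approx⟩ := hK.exists_polyLE_approx_integral_of_le_sum
  obtain ⟨C₂, hC₂, sum_le⟩ := hω.exists_pow_mul_sum_le
    (N := d + 1) (by positivity)
  refine ⟨C₁ * C₂, by positivity, fun q B hq hB hqB m x₀ l hl hm => ?_⟩
  have ω_nonneg (k : ℕ) : 0 ≤ ω (2 ^ k)⁻¹ := hω.nonneg _ (by positivity)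
  obtain ⟨L, hL⟩ := exists_lipschitzWith_dyadicCutoff ω n m x₀
  have density_continuous : Continuous fun x =>
      (dyadicCutoff ω n m (x - x₀) - dyadicXi ω n m) * q (x - x₀) :=
    (hL.continuous.sub continuous_const).mul
      ((PolyLE.continuous hq.mem_polyLE).comp (continuous_sub_right x₀))
  obtain ⟨M, hM⟩ := hDb.isCompact_closure.exists_bound_of_continuousOn
    density_continuous.continuousOn
  obtain ⟨S, hS, hS_approx⟩ := approx D hD hDb.measure_lt_top.ne _ M density_continuous.measurable
    (fun x hx => hM x (subset_closure hx)) x₀ ((d + 1) * l) (Finset.range m)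
    (fun k => ω (2 ^ k)⁻¹ * (2 ^ k) ^ n * B) (fun k => (d + 1) * (2 ^ k)⁻¹) (by positivity)
    (fun k _ => mul_nonneg (mul_nonneg (ω_nonneg k) (by positivity)) hB)
    (fun k hk => by
      gcongr
      rw [← one_div, le_div_iff₀' (by positivity)]
      exact hm k (Finset.mem_range.1 hk))
    fun x => abs_dyadicCutoff_sub_dyadicXi_mul_le hω m (hqB (x - x₀))
  refine ⟨S, hS, fun y hy => ?_⟩
  have norm_le : ‖y - x₀‖ ≤ (d + 1) * l / 2 :=
    (norm_sub_le_of_mem_cube hy).trans (by linarith)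
  refine (hS_approx y norm_le).trans ?_
  rw [mul_assoc, mul_assoc C₁, mul_assoc C₁]
  refine mul_le_mul_of_nonneg_left ?_ hC₁.le
  refine (mul_le_mul_of_nonneg_right ?_ ?_).trans (sum_le m l B hl hB hm)
  · gcongr
    exact norm_le.trans (half_le_self (by positivity))
  · exact Finset.sum_nonneg fun k _ => by have := ω_nonneg k; positivity

lemma IsBoundedOnZygmund.exists_approx_omegaTilde_of_lt_one (hT : IsBoundedOnZygmund ω n D K)
    (hω : IsRegularModulus ω n) (hω1 : 0 < ω 1) (hD : IsOpen D) (hne : D.Nonempty)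
    (hDb : Bornology.IsBounded D) (hK : IsSingularKernel (n + 1) K) :
    ∃ C > 0, ∀ (q g : 𝔼 d → ℝ) (M : ℝ) (x₀ : 𝔼 d) (l : ℝ), IsHomogeneousPoly n q → 0 < M →
      0 < l → l < 1 → cube x₀ l ⊆ D → (∀ x ∈ D, |q (x - x₀)| ≤ M) →
      IsRestrictedCZ D K (fun x => q (x - x₀)) g →
      ∃ S ∈ PolyLE d n, cubeMeanDist x₀ l g S ≤ ENNReal.ofReal (C * M * omegaTilde ω n l) := by
  obtain ⟨C₀, hC₀, poly_bound⟩ := exists_homogeneousPoly_bound n hD hne hDb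
  obtain ⟨C₁, hC₁, test_bound⟩ := hT.exists_testFunction_bound hω hD.measurableSet hDb
  obtain ⟨C₂, hC₂, far_bound⟩ := hK.exists_polyLE_approx_farField hω hD.measurableSet hDb
  obtain ⟨C₃, hC₃, max_le⟩ := hω.exists_max_one_xi_le hω1
  refine ⟨C₃ * (C₁ + C₂) * C₀, by positivity, fun q g M x₀ l hq hM hl hl1 hcube hqM hg => ?_⟩
  obtain ⟨m, hm, l_ge, hml⟩ := exists_dyadic_scale hl hl1
  have hωl : 0 ≤ ω l := hω.nonneg l hl.le
  have mass_pos : 0 < dyadicXi ω n m := hω1.trans_le (hω.le_dyadicXi hm)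
  obtain ⟨q_le, profile_le, profile_deriv_le⟩ :=
    poly_bound q hq x₀ (hcube (self_mem_cube hl.le)) M hqM
  obtain ⟨L, hL⟩ := exists_lipschitzWith_dyadicCutoff ω n m x₀
  have q_measurable : Measurable fun x => q (x - x₀) :=
    ((PolyLE.continuous hq.mem_polyLE).comp (continuous_sub_right x₀)).measurable
  obtain ⟨S₁, hS₁, near⟩ := test_bound q (C₀ * M) hq (by positivity) profile_le profile_deriv_le
    m x₀ l _ hl hcube (hg.lipschitz_mul hK hD.measurableSet hDb hL q_measurable hqM)
  obtain ⟨S₂, hS₂, far⟩ := far_bound q (C₀ * M) hq (by positivity) q_le m x₀ l hl hml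
  refine ⟨(dyadicXi ω n m)⁻¹ • (S₁ - S₂), PolyLE.smul _ (PolyLE.sub hS₁ hS₂),
    (cubeMeanDist_le_of_mul_add_eq hl mass_pos (by positivity) (by positivity) (fun y hy => by
      rw [indicator_of_mem (hcube hy), dyadicCutoff_eq_dyadicXi ω n hml hy]) near far).trans
    (ENNReal.ofReal_le_ofReal ?_)⟩
  calc (dyadicXi ω n m)⁻¹ * (C₁ * (C₀ * M) * ω l + C₂ * (C₀ * M) * ω l)
      ≤ C₃ * (max 1 (xi ω n l))⁻¹ * (C₁ * (C₀ * M) * ω l + C₂ * (C₀ * M) * ω l) := by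
        gcongr
        rw [← div_eq_mul_inv, inv_le_comm₀ mass_pos (by positivity), inv_div,
          div_le_iff₀' hC₃]
        exact max_le m l hm l_ge
    _ = C₃ * (C₁ + C₂) * C₀ * M * omegaTilde ω n l := by
        rw [omegaTilde, div_eq_mul_inv]
        ring

end HomogeneousPoly

section MainTheorem

variable {d n : ℕ} {ω : ℝ → ℝ} {D : Set (𝔼 d)} {K : 𝔼 d → ℝ}

lemma abs_le_sSup_abs_image {P : 𝔼 d → ℝ} (hP : Continuous P) (hDb : Bornology.IsBounded D)
    {x : 𝔼 d} (hx : x ∈ D) : |P x| ≤ sSup ((fun x => |P x|) '' D) :=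
  le_csSup ((hDb.isCompact_closure.bddAbove_image hP.abs.continuousOn).mono
    (image_mono subset_closure)) (mem_image_of_mem _ hx)

lemma cubeMeanDist_zero_eq_zero {g : 𝔼 d → ℝ} {x₀ : 𝔼 d} {l : ℝ} (hcube : cube x₀ l ⊆ D)
    (hg : ∀ᵐ y ∂volume.restrict D, g y = 0) : cubeMeanDist x₀ l g 0 = 0 := by
  have integral_eq_zero : ∫⁻ x in cube x₀ l, ENNReal.ofReal |g x - (0 : 𝔼 d → ℝ) x| = 0 :=
    lintegral_eq_zero_of_ae_eq_zero <| by
      filter_upwards [ae_restrict_of_ae_restrict_of_subset hcube hg] with y hy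
      simp [hy]
  rw [cubeMeanDist, integral_eq_zero, mul_zero]

lemma omegaTilde_eq_self_of_one_le (ω : ℝ → ℝ) (n : ℕ) {l : ℝ} (hl : 1 ≤ l) :
    omegaTilde ω n l = ω l := by
  simp [omegaTilde, xi_of_one_le ω n hl]

lemma IsBoundedOnZygmund.exists_zygSeminorm_polyLE_lt (hT : IsBoundedOnZygmund ω n D K)
    (hD : MeasurableSet D) (hDb : Bornology.IsBounded D) :
    ∃ C > 0, ∀ P ∈ PolyLE d n, ∀ (g : 𝔼 d → ℝ) (M : ℝ), 0 < M → (∀ x ∈ D, |P x| ≤ M) →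
      IsRestrictedCZ D K P g →
      LocallyIntegrableOn g D ∧ zygSeminorm ω n D g < ENNReal.ofReal (C * M) := by
  obtain ⟨C, hC, zyg_lt⟩ := hT.exists_zygSeminorm_lt hD hDb
  refine ⟨C, hC, fun P hP g M hM hPM hg => zyg_lt P g M hM (PolyLE.continuous hP) ?_ hPM hg⟩
  rw [zygSeminorm_eq_zero_of_mem_polyLE ω D hP]
  exact zero_le

lemma IsBoundedOnZygmund.exists_approx_omegaTilde (hT : IsBoundedOnZygmund ω n D K)
    (hω : IsRegularModulus ω n) (hD : IsOpen D) (hne : D.Nonempty)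
    (hDb : Bornology.IsBounded D) (hK : IsSingularKernel (n + 1) K) :
    ∃ C > 0, ∀ (q g : 𝔼 d → ℝ) (M : ℝ) (x₀ : 𝔼 d) (l : ℝ), IsHomogeneousPoly n q → 0 < M →
      0 < l → cube x₀ l ⊆ D → (∀ x ∈ D, |q (x - x₀)| ≤ M) →
      IsRestrictedCZ D K (fun x => q (x - x₀)) g →
      ∃ S ∈ PolyLE d n, cubeMeanDist x₀ l g S ≤ ENNReal.ofReal (C * M * omegaTilde ω n l) := by
  obtain ⟨C₁, hC₁, zyg_lt⟩ := hT.exists_zygSeminorm_polyLE_lt hD.measurableSet hDb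
  have approx_of_omegaTilde_eq (q g : 𝔼 d → ℝ) (M : ℝ) (x₀ : 𝔼 d) (l : ℝ)
      (hq : IsHomogeneousPoly n q) (hM : 0 < M) (hl : 0 < l) (hcube : cube x₀ l ⊆ D)
      (hqM : ∀ x ∈ D, |q (x - x₀)| ≤ M) (hg : IsRestrictedCZ D K (fun x => q (x - x₀)) g)
      (heq : omegaTilde ω n l = ω l) :
      ∃ S ∈ PolyLE d n,
        cubeMeanDist x₀ l g S ≤ ENNReal.ofReal (C₁ * M * omegaTilde ω n l) := by
    have q_mem : (fun x => q (x - x₀)) ∈ PolyLE d n := by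
      simpa using PolyLE.comp_smul_sub hq.mem_polyLE 1 x₀
    rw [heq]
    exact exists_cubeMeanDist_le_of_zygSeminorm_lt (zyg_lt _ q_mem g M hM hqM hg).2 hl hcube
      (hω.nonneg l hl.le)
  obtain ω_pos | ω_zero := hω.pos_or_eq_zero
  · obtain ⟨C₂, _, small⟩ :=
      hT.exists_approx_omegaTilde_of_lt_one hω (ω_pos 1 one_pos) hD hne hDb hK
    refine ⟨max C₁ C₂, lt_max_of_lt_left hC₁, fun q g M x₀ l hq hM hl hcube hqM hg => ?_⟩
    have tilde_nonneg : 0 ≤ omegaTilde ω n l := div_nonneg (hω.nonneg l hl.le) (by positivity)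
    obtain hl1 | hl1 := lt_or_ge l 1
    · obtain ⟨S, hS, hgS⟩ := small q g M x₀ l hq hM hl hl1 hcube hqM hg
      exact ⟨S, hS, hgS.trans (by gcongr; exact le_max_right _ _)⟩
    · obtain ⟨S, hS, hgS⟩ := approx_of_omegaTilde_eq q g M x₀ l hq hM hl hcube hqM hg
        (omegaTilde_eq_self_of_one_le ω n hl1)
      exact ⟨S, hS, hgS.trans (by gcongr; exact le_max_left _ _)⟩
  · exact ⟨C₁, hC₁, fun q g M x₀ l hq hM hl hcube hqM hg =>
      approx_of_omegaTilde_eq q g M x₀ l hq hM hl hcube hqM hg (by simp [omegaTilde, ω_zero l hl])⟩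

end MainTheorem

theorem statement_1_general {d n : ℕ} {ω : ℝ → ℝ} (hω : IsRegularModulus ω n)
    {D : Set (𝔼 d)} (hD : IsOpen D) (hne : D.Nonempty) (hDb : Bornology.IsBounded D)
    {K : 𝔼 d → ℝ} (hK : IsSingularKernel (n + 1) K) (hT : IsBoundedOnZygmund ω n D K) :
    (∀ P ∈ PolyLE d n, ∀ g : 𝔼 d → ℝ, IsRestrictedCZ D K P g →
      LocallyIntegrableOn g D ∧ zygSeminorm ω n D g < ⊤) ∧
    ∃ C : ℝ, 0 < C ∧ ∀ (x₀ : 𝔼 d) (l : ℝ), 0 < l → cube x₀ l ⊆ D → ∀ P : 𝔼 d → ℝ,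
      (∃ p : MvPolynomial (Fin d) ℝ, p.IsHomogeneous n ∧
        ∀ x, P x = MvPolynomial.eval (fun i => x i - x₀ i) p) →
      ∀ g : 𝔼 d → ℝ, IsRestrictedCZ D K P g →
        ∃ S ∈ PolyLE d n, cubeMeanDist x₀ l g S ≤
          ENNReal.ofReal (C * sSup ((fun x => |P x|) '' D) * omegaTilde ω n l) := by
  constructor
  · intro P hP g hg
    obtain ⟨C, _, zyg_lt⟩ := hT.exists_zygSeminorm_polyLE_lt hD.measurableSet hDb
    have P_le (x : 𝔼 d) (hx : x ∈ D) : |P x| ≤ max 1 (sSup ((fun x => |P x|) '' D)) :=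
      (abs_le_sSup_abs_image (PolyLE.continuous hP) hDb hx).trans (le_max_right _ _)
    exact (zyg_lt P hP g _ (by positivity) P_le hg).imp_right fun h => h.trans ENNReal.ofReal_lt_top
  · obtain ⟨C, hC, approx⟩ := hT.exists_approx_omegaTilde hω hD hne hDb hK
    refine ⟨C, hC, fun x₀ l hl hcube P ⟨p, hp, hpP⟩ g hg => ?_⟩
    have hq := isHomogeneousPoly_eval hp
    obtain rfl : P = fun x => MvPolynomial.eval (fun i => (x - x₀) i) p := funext hpP
    have P_le := fun x hx => abs_le_sSup_abs_image (D := D) (x := x)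
      ((PolyLE.continuous hq.mem_polyLE).comp (continuous_sub_right x₀)) hDb hx
    obtain M_zero | M_pos := ((abs_nonneg _).trans (P_le _ hne.some_mem)).eq_or_lt
    · have P_zero (x) (hx : x ∈ D) := abs_nonpos_iff.1 ((P_le x hx).trans M_zero.ge)
      exact ⟨0, (polyLESubmodule d n).zero_mem,
        (cubeMeanDist_zero_eq_zero hcube (hg.ae_eq_zero P_zero)).trans_le zero_le⟩
    · exact approx _ g _ x₀ l hq M_pos hl hcube P_le hg

/-- **T(P) theorem for Zygmund spaces (necessity).** If the restricted operator `T_D` is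
bounded on `𝒞_ω(D)`, then (i) `T_D P ∈ 𝒞_ω(D)` for every polynomial `P ∈ 𝒫_n(D)` and
(ii) the quantitative bound for homogeneous polynomials of degree `n` holds. -/
theorem statement_1 {d n : ℕ} (ω : ℝ → ℝ) (hω : IsModulusOfOrder ω n)
    (D : Set (EuclideanSpace ℝ (Fin d))) (hD : IsLipschitzDomain D)
    (Ω K : EuclideanSpace ℝ (Fin d) → ℝ)
    (hΩ : IsCZDensity d ((n : ℕ∞) + 1) Ω)
    (hK : K = fun x => Ω x / ‖x‖ ^ d)
    (hbdd : ∃ C' : ℝ, 0 < C' ∧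
      ∀ f g : EuclideanSpace ℝ (Fin d) → ℝ,
        LocallyIntegrableOn f D → zygSeminorm ω n D f < ⊤ → l1Norm D f < ⊤ →
        IsRestrictedCZ D K f g →
        LocallyIntegrableOn g D ∧
          zygSeminorm ω n D g + l1Norm D g ≤
            ENNReal.ofReal C' * (zygSeminorm ω n D f + l1Norm D f)) :
    (∀ P ∈ PolyLE d n, ∀ g : EuclideanSpace ℝ (Fin d) → ℝ,
      IsRestrictedCZ D K P g →
        LocallyIntegrableOn g D ∧ zygSeminorm ω n D g < ⊤) ∧
    (∃ C : ℝ, 0 < C ∧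
      ∀ (x₀ : EuclideanSpace ℝ (Fin d)) (l : ℝ), 0 < l → cube x₀ l ⊆ D →
        ∀ P : EuclideanSpace ℝ (Fin d) → ℝ,
          (∃ p : MvPolynomial (Fin d) ℝ, p.IsHomogeneous n ∧
            ∀ x, P x = MvPolynomial.eval (fun i => x i - x₀ i) p) →
          ∀ g : EuclideanSpace ℝ (Fin d) → ℝ, IsRestrictedCZ D K P g →
            ∃ S ∈ PolyLE d n,
              (ENNReal.ofReal (l ^ d))⁻¹ *
                  ∫⁻ x in cube x₀ l, ENNReal.ofReal |g x - S x| ≤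
                ENNReal.ofReal (C * sSup ((fun x => |P x|) '' D) * omegaTilde ω n l)) := by
  subst hK
  exact statement_1_general hω.isRegularModulus hD.1 hD.2.1.nonempty hD.2.2.1
    (hΩ.isSingularKernel (k := n + 1)) hbdd

end
end

section
/- Let ω be a modulus of continuity of order n ∈ ℕ and let D ⊂ ℝ^d be a bounded Lipschitz domain. Then every f ∈ L¹_loc(D) with finite interior Zygmund seminorm ‖f‖^{int}_{ω,D} < ∞ belongs to L¹(D). -/
open MeasureTheory Filter Set Metric
open scoped ENNReal Topology InnerProductSpace

noncomputable section

/-- The interior Zygmund seminorm `‖f‖^{int}_{ω,D}`: the supremum is taken only over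
cubes `Q` with `2Q ⊂ D`. -/
def zygSeminormInt {d : ℕ} (ω : ℝ → ℝ) (n : ℕ) (D : Set (EuclideanSpace ℝ (Fin d)))
    (f : EuclideanSpace ℝ (Fin d) → ℝ) : ℝ≥0∞ :=
  ⨆ (x₀ : EuclideanSpace ℝ (Fin d)) (l : ℝ) (_ : 0 < l) (_ : cube x₀ (2 * l) ⊆ D),
    ⨅ (P : EuclideanSpace ℝ (Fin d) → ℝ) (_ : P ∈ PolyLE d n),
      (ENNReal.ofReal (ω l * l ^ d))⁻¹ * ∫⁻ x in cube x₀ l, ENNReal.ofReal |f x - P x|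

/-!
Near a boundary point, `D` is the set `{t > 0}` for a Lipschitz height function `t` which grows at
unit speed in a fixed direction `v`. The vertical dilation `φ` by a factor `q > 1` about the graph
`{t = 0}` multiplies `t` by `q` and has Jacobian `q`, so `T g = g ∘ φ` contracts the `L¹` norm by
`q⁻¹`. The `q`-difference `∏_{k ≤ n} (T - q ^ k)` annihilates polynomials of degree at most `n`.
Taking `q` close to `1`, the `q`-difference of `f` therefore has bounded mean on Whitney balls, and
by a Vitali covering it is integrable up to the boundary. Since `‖T‖ < 1 ≤ q ^ k`, each factor can
be undone by absorbing the `L¹` norm of `T g` into that of `q ^ k g`; so `f` is integrable near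
the boundary point, and compactness of `closure D` finishes the proof.
-/

open scoped NNReal

section MeasureLemmas

variable {α : Type*} [MeasurableSpace α] {μ : Measure α}

lemma setLIntegral_comp_le_of_map_le {φ : α → α} {c : ℝ≥0∞} (hφ : Measurable φ)
    (hmap : μ.map φ ≤ c • μ) {F : α → ℝ≥0∞} (hF : Measurable F) {S U : Set α}
    (hU : MeasurableSet U) (hSU : MapsTo φ S U) :
    ∫⁻ x in S, F (φ x) ∂μ ≤ c * ∫⁻ x in U, F x ∂μ :=
  calc ∫⁻ x in S, F (φ x) ∂μ
      ≤ ∫⁻ x in φ ⁻¹' U, F (φ x) ∂μ := lintegral_mono_set hSU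
    _ = ∫⁻ x in U, F x ∂(μ.map φ) := (setLIntegral_map hU hF hφ).symm
    _ ≤ ∫⁻ x in U, F x ∂(c • μ) := lintegral_mono' (Measure.restrict_mono_measure hmap U) le_rfl
    _ = c * ∫⁻ x in U, F x ∂μ := by
      rw [Measure.restrict_smul, lintegral_smul_measure, smul_eq_mul]

lemma integrableOn_comp_of_map_le {φ : α → α} {c : ℝ≥0∞} (hc : c ≠ ⊤) (hφ : Measurable φ)
    (hmap : μ.map φ ≤ c • μ) {f : α → ℝ} (hf : Measurable f) {S U : Set α}
    (hU : MeasurableSet U) (hSU : MapsTo φ S U) (hfU : IntegrableOn f U μ) :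
    IntegrableOn (fun x => f (φ x)) S μ :=
  ⟨(hf.comp hφ).aestronglyMeasurable,
    (setLIntegral_comp_le_of_map_le hφ hmap hf.enorm hU hSU).trans_lt
      (ENNReal.mul_lt_top hc.lt_top hfU.2)⟩

lemma le_div_one_sub_of_le_mul_add {θ G C : ℝ≥0∞} (hθ : θ < 1) (hG : G ≠ ⊤)
    (h : G ≤ θ * G + C) : G ≤ C / (1 - θ) := by
  have hθ' : 1 - θ ≠ 0 := (tsub_pos_of_lt hθ).ne'
  rw [ENNReal.le_div_iff_mul_le (Or.inl hθ') (Or.inl (ENNReal.sub_ne_top ENNReal.one_ne_top)),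
    mul_comm, ENNReal.sub_mul fun _ _ => hG, one_mul]
  exact tsub_le_iff_left.2 h

lemma integrableOn_preimage_Ioo_of_lintegral_le {W : Set α} {t : α → ℝ} {τ : ℝ} {B : ℝ≥0∞}
    (hB : B ≠ ⊤) {f : α → ℝ} (hf : Measurable f)
    (hle : ∀ ε > 0, ∫⁻ x in W ∩ t ⁻¹' Ioo ε τ, ‖f x‖ₑ ∂μ ≤ B) :
    IntegrableOn f (W ∩ t ⁻¹' Ioo 0 τ) μ := by
  set S : ℕ → Set α := fun n => W ∩ t ⁻¹' Ioo (1 / ((n : ℝ) + 1)) τ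
  have hmono : Monotone S := fun n k hnk =>
    inter_subset_inter_right _ <| preimage_mono <| Ioo_subset_Ioo_left <|
      Nat.one_div_le_one_div hnk
  have hcover : W ∩ t ⁻¹' Ioo 0 τ ⊆ ⋃ n, S n := by
    rintro x ⟨hxW, hx⟩
    obtain ⟨n, hn⟩ := exists_nat_one_div_lt hx.1
    exact mem_iUnion.2 ⟨n, hxW, hn, hx.2⟩
  refine ⟨hf.aestronglyMeasurable, ?_⟩
  calc ∫⁻ x in W ∩ t ⁻¹' Ioo 0 τ, ‖f x‖ₑ ∂μ
      ≤ ∫⁻ x in ⋃ n, S n, ‖f x‖ₑ ∂μ := lintegral_mono_set hcover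
    _ = ⨆ n, ∫⁻ x in S n, ‖f x‖ₑ ∂μ := setLIntegral_iUnion_of_directed _ hmono.directed_le
    _ ≤ B := iSup_le fun n => hle _ Nat.one_div_pos_of_nat
    _ < ⊤ := hB.lt_top

lemma integrableOn_of_forall_closure_integrableAtFilter {X : Type*} [PseudoMetricSpace X]
    [ProperSpace X] [MeasurableSpace X] {ν : Measure X} {f : X → ℝ} {D : Set X}
    (hD : Bornology.IsBounded D) (hf : ∀ x ∈ closure D, IntegrableAtFilter f (𝓝[D] x) ν) :
    IntegrableOn f D ν := by
  suffices h : IntegrableOn f (closure D ∩ D) ν from h.mono_set fun x hx => ⟨subset_closure hx, hx⟩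
  refine hD.isCompact_closure.induction_on (p := fun s => IntegrableOn f (s ∩ D) ν) ?_ ?_ ?_ ?_
  · simp
  · exact fun s u hsu hu => hu.mono_set (inter_subset_inter_left D hsu)
  · exact fun s u hs hu => by simpa only [union_inter_distrib_right] using hs.union hu
  · intro x hx
    obtain ⟨s, hs, hfs⟩ := hf x hx
    obtain ⟨u, hu, hus⟩ := mem_nhdsWithin_iff_exists_mem_nhds_inter.1 hs
    exact ⟨u, mem_nhdsWithin_of_mem_nhds hu, hfs.mono_set hus⟩

lemma setLIntegral_le_of_forall_closedBall {X : Type*} [PseudoMetricSpace X]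
    [TopologicalSpace.SeparableSpace X] [MeasurableSpace X] [OpensMeasurableSpace X]
    {ν : Measure X} {S U : Set X} {r : X → ℝ} {R : ℝ} {K : ℝ≥0∞} {F : X → ℝ≥0∞}
    (hr : ∀ x ∈ S, 0 < r x) (hrR : ∀ x ∈ S, r x ≤ R) (hU : ∀ x ∈ S, closedBall x (r x) ⊆ U)
    (hF : ∀ x ∈ S, ∫⁻ y in closedBall x (5 * r x), F y ∂ν ≤ K * ν (closedBall x (r x))) :
    ∫⁻ x in S, F x ∂ν ≤ K * ν U := by
  obtain ⟨u, huS, hdisj, hcover⟩ :=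
    Vitali.exists_disjoint_subfamily_covering_enlargement_closedBall S id r R hrR 5 (by norm_num)
  simp only [id] at hdisj hcover
  have hcount : u.Countable := hdisj.countable_of_nonempty_interior fun x hx =>
    ⟨x, ball_subset_interior_closedBall (mem_ball_self (hr x (huS hx)))⟩
  have := hcount.to_subtype
  have hS : S ⊆ ⋃ x : u, closedBall (x : X) (5 * r x) := fun x hx => by
    obtain ⟨y, hy, hxy⟩ := hcover x hx
    exact mem_iUnion.2 ⟨⟨y, hy⟩, hxy (mem_closedBall_self (hr x hx).le)⟩
  calc ∫⁻ x in S, F x ∂ν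
      ≤ ∫⁻ x in ⋃ x : u, closedBall (x : X) (5 * r x), F x ∂ν := lintegral_mono_set hS
    _ ≤ ∑' x : u, ∫⁻ y in closedBall (x : X) (5 * r x), F y ∂ν := lintegral_iUnion_le _ _
    _ ≤ ∑' x : u, K * ν (closedBall (x : X) (r x)) :=
      ENNReal.tsum_le_tsum fun x => hF x (huS x.2)
    _ = K * ν (⋃ x ∈ u, closedBall x (r x)) := by
      rw [ENNReal.tsum_mul_left,
        measure_biUnion hcount hdisj fun _ _ => isClosed_closedBall.measurableSet]
    _ ≤ K * ν U := by
      gcongr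
      exact iUnion₂_subset fun x hx => hU x (huS hx)

end MeasureLemmas

/-- The `k`-th `q`-difference `∏_{j < k} (T - q ^ j) f` of `f`, where `T g = g ∘ φ`. If `φ`
multiplies a coordinate by `q`, it annihilates the polynomials in that coordinate of degree
less than `k`. -/
def qDiff {α : Type*} (q : ℝ) (φ : α → α) : ℕ → (α → ℝ) → α → ℝ
  | 0, f => f
  | k + 1, f => qDiff q φ k fun x => f (φ x) - q ^ k * f x

section qDiff

variable {α : Type*} {q : ℝ} {φ : α → α}

lemma qDiff_sub (k : ℕ) (f g : α → ℝ) :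
    qDiff q φ k (f - g) = qDiff q φ k f - qDiff q φ k g := by
  induction k generalizing f g with
  | zero => rfl
  | succ k ih =>
    simp only [qDiff, ← ih]
    congr 1
    ext x
    simp only [Pi.sub_apply]
    ring

lemma qDiff_eval_eq_zero {t : α → ℝ} (ht : ∀ x, t (φ x) = q * t x) {k : ℕ}
    {A : α → Polynomial ℝ} (hA : ∀ x, A (φ x) = A x) (hdeg : ∀ x, (A x).degree < k) :
    qDiff q φ k (fun x => (A x).eval (t x)) = 0 := by
  induction k generalizing A with
  | zero =>
    have hA0 : ∀ x, A x = 0 := fun x => Polynomial.ext fun i =>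
      (Polynomial.degree_lt_iff_coeff_zero _ _).1 (hdeg x) i i.zero_le
    ext x
    simp [qDiff, hA0]
  | succ k ih =>
    set B : α → Polynomial ℝ := fun x =>
      (A x).comp (Polynomial.C q * Polynomial.X) - Polynomial.C (q ^ k) * A x with hB
    have hBdeg : ∀ x, (B x).degree < k := fun x => by
      refine (Polynomial.degree_lt_iff_coeff_zero _ _).2 fun i hi => ?_
      rw [hB, Polynomial.coeff_sub, Polynomial.comp_C_mul_X_coeff, Polynomial.coeff_C_mul]
      rcases hi.eq_or_lt with rfl | hki
      · ring
      · rw [(Polynomial.degree_lt_iff_coeff_zero _ _).1 (hdeg x) i hki]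
        ring
    have hBeval : (fun x => (A (φ x)).eval (t (φ x)) - q ^ k * (A x).eval (t x)) =
        fun x => (B x).eval (t x) := by
      ext x
      simp [hB, hA, ht]
    rw [qDiff, hBeval]
    exact ih (fun x => by simp only [hB, hA]) hBdeg

variable [MeasurableSpace α]

lemma measurable_qDiff (hφ : Measurable φ) (k : ℕ) {f : α → ℝ} (hf : Measurable f) :
    Measurable (qDiff q φ k f) := by
  induction k generalizing f with
  | zero => exact hf
  | succ k ih => exact ih ((hf.comp hφ).sub (hf.const_mul _))

lemma setLIntegral_enorm_qDiff_le {μ : Measure α} (hφ : Measurable φ) (hmap : μ.map φ ≤ μ)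
    {S : ℕ → Set α} {k : ℕ} (hS : ∀ j, MeasurableSet (S j)) (hmono : ∀ j < k, S j ⊆ S (j + 1))
    (hmaps : ∀ j < k, MapsTo φ (S j) (S (j + 1))) {f : α → ℝ} (hf : Measurable f) :
    ∫⁻ x in S 0, ‖qDiff q φ k f x‖ₑ ∂μ ≤
      (∏ j ∈ Finset.range k, (1 + ‖q ^ j‖ₑ)) * ∫⁻ x in S k, ‖f x‖ₑ ∂μ := by
  induction k generalizing f with
  | zero => simp [qDiff]
  | succ k ih =>
    have hfφ : Measurable fun x => f (φ x) := hf.comp hφ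
    have hcomp : ∫⁻ x in S k, ‖f (φ x)‖ₑ ∂μ ≤ ∫⁻ x in S (k + 1), ‖f x‖ₑ ∂μ := by
      simpa using setLIntegral_comp_le_of_map_le hφ (by simpa using hmap) hf.enorm (hS (k + 1))
        (hmaps k k.lt_succ_self) (c := 1)
    have hstep : ∫⁻ x in S k, ‖f (φ x) - q ^ k * f x‖ₑ ∂μ ≤
        (1 + ‖q ^ k‖ₑ) * ∫⁻ x in S (k + 1), ‖f x‖ₑ ∂μ :=
      calc ∫⁻ x in S k, ‖f (φ x) - q ^ k * f x‖ₑ ∂μ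
          ≤ ∫⁻ x in S k, (‖f (φ x)‖ₑ + ‖q ^ k‖ₑ * ‖f x‖ₑ) ∂μ :=
            lintegral_mono fun x => enorm_sub_le.trans_eq (by rw [enorm_mul])
        _ = ∫⁻ x in S k, ‖f (φ x)‖ₑ ∂μ + ‖q ^ k‖ₑ * ∫⁻ x in S k, ‖f x‖ₑ ∂μ := by
            rw [lintegral_add_left hfφ.enorm, lintegral_const_mul _ hf.enorm]
        _ ≤ (1 + ‖q ^ k‖ₑ) * ∫⁻ x in S (k + 1), ‖f x‖ₑ ∂μ := by
            rw [add_mul, one_mul]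
            gcongr
            exact hmono k k.lt_succ_self
    rw [qDiff, Finset.prod_range_succ, mul_assoc]
    refine (ih (fun j hj => hmono j (hj.trans k.lt_succ_self))
      (fun j hj => hmaps j (hj.trans k.lt_succ_self)) (hfφ.sub (hf.const_mul _))).trans ?_
    gcongr
    exact hstep

end qDiff

/-- The map `φ` of the region `W` into itself multiplies the height `t` by `q > 1` and
increases volume by a factor of at least `q`; the latter is expressed by the push-forward bound
`map_le`. -/
structure IsHeightScaling {α : Type*} [MeasurableSpace α] (μ : Measure α) (q : ℝ) (φ : α → α)
    (t : α → ℝ) (W : Set α) : Prop where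
  one_lt : 1 < q
  measurable_map : Measurable φ
  measurable_height : Measurable t
  measurableSet_region : MeasurableSet W
  mapsTo : MapsTo φ W W
  height_map : ∀ x, t (φ x) = q * t x
  map_le : μ.map φ ≤ ENNReal.ofReal q⁻¹ • μ

namespace IsHeightScaling

variable {α : Type*} [MeasurableSpace α] {μ : Measure α} {q : ℝ} {φ : α → α} {t : α → ℝ}
  {W : Set α} {f : α → ℝ} {τ : ℝ}

lemma measurableSet_slab (h : IsHeightScaling μ q φ t W) (a b : ℝ) :
    MeasurableSet (W ∩ t ⁻¹' Ioo a b) :=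
  h.measurableSet_region.inter (h.measurable_height measurableSet_Ioo)

lemma mapsTo_slab (h : IsHeightScaling μ q φ t W) (a b : ℝ) :
    MapsTo φ (W ∩ t ⁻¹' Ioo a (b / q)) (W ∩ t ⁻¹' Ioo (q * a) b) := by
  have hq : 0 < q := one_pos.trans h.one_lt
  rintro x ⟨hxW, hax, hxb⟩
  refine ⟨h.mapsTo hxW, ?_⟩
  rw [mem_preimage, h.height_map]
  exact ⟨by gcongr, by rwa [lt_div_iff₀' hq] at hxb⟩

lemma ofReal_inv_lt_one (h : IsHeightScaling μ q φ t W) : ENNReal.ofReal q⁻¹ < 1 :=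
  ENNReal.ofReal_lt_one.2 (inv_lt_one_of_one_lt₀ h.one_lt)

lemma lintegral_slab_le (h : IsHeightScaling μ q φ t W) (hf : Measurable f) {c ε : ℝ}
    (hc : 1 ≤ c) (hε : 0 < ε) :
    ∫⁻ x in W ∩ t ⁻¹' Ioo ε (τ / q), ‖f x‖ₑ ∂μ ≤
      ENNReal.ofReal q⁻¹ * ∫⁻ x in W ∩ t ⁻¹' Ioo ε τ, ‖f x‖ₑ ∂μ +
        ∫⁻ x in W ∩ t ⁻¹' Ioo 0 (τ / q), ‖f (φ x) - c * f x‖ₑ ∂μ := by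
  have hmaps : MapsTo φ (W ∩ t ⁻¹' Ioo ε (τ / q)) (W ∩ t ⁻¹' Ioo ε τ) :=
    (h.mapsTo_slab ε τ).mono_right <| inter_subset_inter_right _ <| preimage_mono <|
      Ioo_subset_Ioo_left (le_mul_of_one_le_left hε.le h.one_lt.le)
  have hpoint : ∀ x, ‖f x‖ₑ ≤ ‖f (φ x)‖ₑ + ‖f (φ x) - c * f x‖ₑ := fun x =>
    calc ‖f x‖ₑ ≤ ‖c * f x‖ₑ := by
          rw [enorm_le_iff_norm_le, norm_mul]
          exact le_mul_of_one_le_left (norm_nonneg _) (hc.trans (Real.le_norm_self c))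
      _ = ‖f (φ x) - (f (φ x) - c * f x)‖ₑ := by rw [sub_sub_cancel]
      _ ≤ ‖f (φ x)‖ₑ + ‖f (φ x) - c * f x‖ₑ := enorm_sub_le
  calc ∫⁻ x in W ∩ t ⁻¹' Ioo ε (τ / q), ‖f x‖ₑ ∂μ
      ≤ ∫⁻ x in W ∩ t ⁻¹' Ioo ε (τ / q), (‖f (φ x)‖ₑ + ‖f (φ x) - c * f x‖ₑ) ∂μ :=
        lintegral_mono hpoint
    _ = ∫⁻ x in W ∩ t ⁻¹' Ioo ε (τ / q), ‖f (φ x)‖ₑ ∂μ +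
          ∫⁻ x in W ∩ t ⁻¹' Ioo ε (τ / q), ‖f (φ x) - c * f x‖ₑ ∂μ :=
        lintegral_add_left (hf.comp h.measurable_map).enorm _
    _ ≤ _ := by
        refine add_le_add (setLIntegral_comp_le_of_map_le h.measurable_map h.map_le hf.enorm
          (h.measurableSet_slab ε τ) hmaps) (lintegral_mono_set ?_)
        gcongr

-- The `L¹` norm of `f` near height zero is absorbed: `g ↦ g ∘ φ` contracts it by `q⁻¹`, while
-- `c ≥ 1`.
lemma integrableOn_of_integrableOn_comp_sub (h : IsHeightScaling μ q φ t W) (hτ : 0 < τ)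
    (hf : Measurable f) (hpos : ∀ ε > 0, IntegrableOn f (W ∩ t ⁻¹' Ioo ε τ) μ) {c : ℝ}
    (hc : 1 ≤ c)
    (hdiff : IntegrableOn (fun x => f (φ x) - c * f x) (W ∩ t ⁻¹' Ioo 0 (τ / q)) μ) :
    IntegrableOn f (W ∩ t ⁻¹' Ioo 0 τ) μ := by
  have hq : 0 < q := one_pos.trans h.one_lt
  set δ := τ / q / 2
  set C : ℝ≥0∞ := ∫⁻ x in W ∩ t ⁻¹' Ioo 0 (τ / q), ‖f (φ x) - c * f x‖ₑ ∂μ +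
    ∫⁻ x in W ∩ t ⁻¹' Ioo δ τ, ‖f x‖ₑ ∂μ with hC
  have hCtop : C ≠ ⊤ := ENNReal.add_ne_top.2 ⟨hdiff.2.ne, (hpos δ (by positivity)).2.ne⟩
  have hδlt : δ < τ / q := half_lt_self (by positivity)
  have hsplit : ∀ ε, W ∩ t ⁻¹' Ioo ε τ ⊆ W ∩ t ⁻¹' Ioo ε (τ / q) ∪ W ∩ t ⁻¹' Ioo δ τ := by
    rintro ε x ⟨hxW, hεx, hxτ⟩
    rcases lt_or_ge (t x) (τ / q) with hx | hx
    · exact Or.inl ⟨hxW, hεx, hx⟩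
    · exact Or.inr ⟨hxW, hδlt.trans_le hx, hxτ⟩
  refine integrableOn_preimage_Ioo_of_lintegral_le (B := C / (1 - ENNReal.ofReal q⁻¹))
    (ENNReal.div_ne_top hCtop (tsub_pos_of_lt h.ofReal_inv_lt_one).ne') hf fun ε hε => ?_
  refine le_div_one_sub_of_le_mul_add h.ofReal_inv_lt_one (hpos ε hε).2.ne ?_
  calc ∫⁻ x in W ∩ t ⁻¹' Ioo ε τ, ‖f x‖ₑ ∂μ
      ≤ ∫⁻ x in W ∩ t ⁻¹' Ioo ε (τ / q), ‖f x‖ₑ ∂μ + ∫⁻ x in W ∩ t ⁻¹' Ioo δ τ, ‖f x‖ₑ ∂μ :=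
        (lintegral_mono_set (hsplit ε)).trans (lintegral_union_le _ _ _)
    _ ≤ _ := by
        rw [hC, ← add_assoc]
        gcongr
        exact h.lintegral_slab_le hf hc hε

lemma integrableOn_of_integrableOn_qDiff (h : IsHeightScaling μ q φ t W) (hτ : 0 < τ)
    (hf : Measurable f) (hpos : ∀ ε > 0, IntegrableOn f (W ∩ t ⁻¹' Ioo ε τ) μ) {k : ℕ}
    (hdiff : IntegrableOn (qDiff q φ k f) (W ∩ t ⁻¹' Ioo 0 (τ / q ^ k)) μ) :
    IntegrableOn f (W ∩ t ⁻¹' Ioo 0 τ) μ := by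
  have hq : 0 < q := one_pos.trans h.one_lt
  induction k generalizing f τ with
  | zero => simpa [qDiff] using hdiff
  | succ k ih =>
    refine h.integrableOn_of_integrableOn_comp_sub hτ hf hpos (c := q ^ k)
      (one_le_pow₀ h.one_lt.le) ?_
    refine ih (τ := τ / q) (by positivity)
      ((hf.comp h.measurable_map).sub (hf.const_mul _)) (fun ε hε => ?_) ?_
    · have hcomp : IntegrableOn (fun x => f (φ x)) (W ∩ t ⁻¹' Ioo ε (τ / q)) μ :=
        integrableOn_comp_of_map_le ENNReal.ofReal_ne_top h.measurable_map h.map_le hf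
          (h.measurableSet_slab _ _) (h.mapsTo_slab ε τ) (hpos _ (by positivity))
      have hsub : W ∩ t ⁻¹' Ioo ε (τ / q) ⊆ W ∩ t ⁻¹' Ioo ε τ := by
        gcongr
        exact div_le_self hτ.le h.one_lt.le
      exact hcomp.sub (((hpos ε hε).mono_set hsub).const_mul _)
    · rwa [div_div, ← pow_succ']

end IsHeightScaling

/-- `t` is a Lipschitz height function with respect to the vertical direction `v`: moving a
point by `c • v` raises its height by `c`. The set `{x | 0 < t x}` is then a Lipschitz epigraph
in the direction `v`. -/
structure IsHeight {E : Type*} [NormedAddCommGroup E] [NormedSpace ℝ E] (v : E) (t : E → ℝ)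
    (L : ℝ≥0) : Prop where
  norm_le : ‖v‖ ≤ 1
  lipschitz : LipschitzWith L t
  shift : ∀ x (c : ℝ), t (x + c • v) = t x + c

/-- The vertical dilation by the factor `q` about the graph `{x | t x = 0}`. For `q = 0` it is the
vertical projection to the graph. -/
def heightDilation {E : Type*} [AddCommGroup E] [Module ℝ E] (v : E) (t : E → ℝ) (q : ℝ)
    (x : E) : E :=
  x + ((q - 1) * t x) • v

lemma heightDilation_zero_add_smul {E : Type*} [AddCommGroup E] [Module ℝ E] (v : E) (t : E → ℝ)
    (x : E) : heightDilation v t 0 x + t x • v = x := by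
  simp [heightDilation]

/-- The vertical cylinder of points lying over (or under) the ball of radius `r` about `a` in the
graph `{x | t x = 0}`. -/
def heightCylinder {E : Type*} [NormedAddCommGroup E] [NormedSpace ℝ E] (v : E) (t : E → ℝ) (a : E)
    (r : ℝ) : Set E :=
  {x | dist (heightDilation v t 0 x) a < r}

namespace IsHeight

section Geometry

variable {E : Type*} [NormedAddCommGroup E] [NormedSpace ℝ E] {v : E} {t : E → ℝ} {L : ℝ≥0}
  {q r : ℝ} {a x : E}

lemma one_le (h : IsHeight v t L) : 1 ≤ (L : ℝ) :=
  calc (1 : ℝ) = dist (t (0 + (1 : ℝ) • v)) (t 0) := by rw [h.shift]; simp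
    _ ≤ L * dist (0 + (1 : ℝ) • v) 0 := h.lipschitz.dist_le_mul _ _
    _ = L * ‖v‖ := by simp
    _ ≤ L := mul_le_of_le_one_right L.2 h.norm_le

lemma abs_sub_le (h : IsHeight v t L) (x y : E) : |t x - t y| ≤ L * dist x y :=
  h.lipschitz.dist_le_mul x y

lemma height_heightDilation (h : IsHeight v t L) (q : ℝ) (x : E) :
    t (heightDilation v t q x) = q * t x := by
  rw [heightDilation, h.shift]
  ring

lemma heightDilation_heightDilation (h : IsHeight v t L) (p q : ℝ) (x : E) :
    heightDilation v t p (heightDilation v t q x) = heightDilation v t (p * q) x := by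
  rw [heightDilation, h.height_heightDilation, heightDilation, heightDilation, add_assoc,
    ← add_smul]
  ring_nf

lemma heightDilation_injective (h : IsHeight v t L) (hq : q ≠ 0) :
    Function.Injective (heightDilation v t q) :=
  Function.LeftInverse.injective (g := heightDilation v t q⁻¹) fun x => by
    rw [h.heightDilation_heightDilation, inv_mul_cancel₀ hq, heightDilation]
    simp

lemma continuous_heightDilation (h : IsHeight v t L) (q : ℝ) :
    Continuous (heightDilation v t q) := by
  have := h.lipschitz.continuous
  unfold heightDilation
  fun_prop

lemma dist_heightDilation_le (h : IsHeight v t L) (q : ℝ) (x : E) :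
    dist (heightDilation v t q x) x ≤ |q - 1| * |t x| := by
  rw [heightDilation, dist_self_add_left, norm_smul, Real.norm_eq_abs, abs_mul]
  exact mul_le_of_le_one_right (by positivity) h.norm_le

lemma mapsTo_heightDilation_ball (h : IsHeight v t L) (hr : L * r ≤ t x) (hq : 1 ≤ q) :
    MapsTo (heightDilation v t q) (ball x r) (ball x (r + (q - 1) * (2 * t x))) := by
  intro y hy
  rw [mem_ball] at hy ⊢
  have hxy : |t y - t x| ≤ t x :=
    (h.abs_sub_le y x).trans ((mul_le_mul_of_nonneg_left hy.le L.2).trans hr)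
  have hty : |t y| ≤ 2 * t x := by
    rw [abs_le] at hxy ⊢
    constructor <;> linarith
  calc dist (heightDilation v t q y) x
      ≤ dist y x + dist (heightDilation v t q y) y := by
        rw [add_comm]
        exact dist_triangle _ _ _
    _ ≤ dist y x + (q - 1) * (2 * t x) := by
        gcongr
        refine (h.dist_heightDilation_le q y).trans ?_
        rw [abs_of_nonneg (sub_nonneg.2 hq)]
        exact mul_le_mul_of_nonneg_left hty (sub_nonneg.2 hq)
    _ < r + (q - 1) * (2 * t x) := by gcongr

lemma dist_lt_of_mem_heightCylinder (h : IsHeight v t L) (hx : x ∈ heightCylinder v t a r) :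
    dist x a < r + |t x| :=
  calc dist x a ≤ dist (heightDilation v t 0 x) x + dist (heightDilation v t 0 x) a :=
        dist_triangle_left _ _ _
    _ < r + |t x| := by
        have hproj := h.dist_heightDilation_le 0 x
        rw [zero_sub, abs_neg, abs_one, one_mul] at hproj
        rw [add_comm]
        exact add_lt_add_of_lt_of_le hx hproj

lemma ball_subset_of_mem_heightCylinder (h : IsHeight v t L)
    (hx : x ∈ heightCylinder v t a (r / 4) ∩ t ⁻¹' Ioo 0 (r / 4)) {s : ℝ} (hs : L * s ≤ t x) :
    ball x s ⊆ {y ∈ ball a r | 0 < t y} := by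
  intro y hy
  rw [mem_ball] at hy
  have hL := h.one_le
  have hty := abs_le.1 (h.abs_sub_le y x)
  have hxa := h.dist_lt_of_mem_heightCylinder hx.1
  rw [abs_of_pos hx.2.1] at hxa
  have hLy : L * dist y x < t x := (mul_lt_mul_of_pos_left hy (by positivity)).trans_le hs
  have hyx : dist y x ≤ L * dist y x := le_mul_of_one_le_left dist_nonneg hL
  refine ⟨mem_ball.2 ?_, by linarith⟩
  linarith [dist_triangle y x a, hx.2.2]

lemma fderiv_apply (h : IsHeight v t L) (hx : DifferentiableAt ℝ t x) :
    fderiv ℝ t x v = 1 := by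
  have hline : HasLineDerivAt ℝ t 1 x v := by
    simpa only [HasLineDerivAt, h.shift] using (hasDerivAt_id' (0 : ℝ)).const_add (t x)
  exact hx.hasFDerivAt.hasLineDerivAt v |>.unique hline

lemma det_fderiv_heightDilation [FiniteDimensional ℝ E] (h : IsHeight v t L)
    (hx : DifferentiableAt ℝ t x) :
    (ContinuousLinearMap.id ℝ E + ((q - 1) • fderiv ℝ t x).smulRight v).det = q := by
  have htransvection : ((ContinuousLinearMap.id ℝ E + ((q - 1) • fderiv ℝ t x).smulRight v :
      E →L[ℝ] E) : E →ₗ[ℝ] E) = LinearMap.transvection ((q - 1) • fderiv ℝ t x).toLinearMap v := by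
    ext y
    simp [LinearMap.transvection.apply]
  rw [ContinuousLinearMap.det, htransvection, LinearMap.transvection.det]
  simp [h.fderiv_apply hx]

end Geometry

section Measure

variable {E : Type*} [NormedAddCommGroup E] [NormedSpace ℝ E] [FiniteDimensional ℝ E]
  [MeasurableSpace E] [BorelSpace E] {μ : Measure E} [μ.IsAddHaarMeasure] {v : E} {t : E → ℝ}
  {L : ℝ≥0} {q : ℝ}

-- Rademacher's theorem makes the change of variables formula available.
lemma map_heightDilation_le (h : IsHeight v t L) (hq : 0 < q) :
    μ.map (heightDilation v t q) ≤ ENNReal.ofReal q⁻¹ • μ := by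
  set φ := heightDilation v t q
  have hφ : Measurable φ := (h.continuous_heightDilation q).measurable
  refine Measure.le_iff.2 fun A hA => ?_
  set s := φ ⁻¹' A ∩ {x | DifferentiableAt ℝ t x} with hs_def
  have hs : MeasurableSet s := (hφ hA).inter (measurableSet_of_differentiableAt ℝ t)
  have hderiv : ∀ x ∈ s, HasFDerivWithinAt φ
      (ContinuousLinearMap.id ℝ E + ((q - 1) • fderiv ℝ t x).smulRight v) s x := fun x hx =>
    ((hasFDerivAt_id x).add ((hx.2.hasFDerivAt.const_mul (q - 1)).smul_const v)).hasFDerivWithinAt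
  have himage : ENNReal.ofReal q * μ s = μ (φ '' s) := by
    rw [← lintegral_abs_det_fderiv_eq_addHaar_image μ hs hderiv
      (h.heightDilation_injective hq.ne').injOn, ← setLIntegral_const]
    refine setLIntegral_congr_fun hs fun x hx => ?_
    rw [h.det_fderiv_heightDilation hx.2, abs_of_pos hq]
  calc μ.map φ A = μ s := by
        rw [Measure.map_apply hφ hA, hs_def]
        exact (measure_inter_conull h.lipschitz.ae_differentiableAt).symm
    _ = ENNReal.ofReal q⁻¹ * (ENNReal.ofReal q * μ s) := by
        rw [← mul_assoc, ← ENNReal.ofReal_mul (inv_nonneg.2 hq.le), inv_mul_cancel₀ hq.ne',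
          ENNReal.ofReal_one, one_mul]
    _ ≤ ENNReal.ofReal q⁻¹ * μ A := by
        rw [himage]
        gcongr
        exact image_subset_iff.2 inter_subset_left

lemma map_heightDilation_le_self (h : IsHeight v t L) (hq : 1 ≤ q) :
    μ.map (heightDilation v t q) ≤ μ := by
  refine (h.map_heightDilation_le (one_pos.trans_le hq)).trans (Measure.le_iff'.2 fun s => ?_)
  exact mul_le_of_le_one_left' (ENNReal.ofReal_le_one.2 (inv_le_one_of_one_le₀ hq))

lemma lintegral_qDiff_ball_le (h : IsHeight v t L) (hq : 1 ≤ q) {f : E → ℝ} (hf : Measurable f)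
    {x : E} (hx : 0 ≤ t x) {s : ℝ} {k : ℕ} (hs : L * (s + k * ((q - 1) * (2 * t x))) ≤ t x) :
    ∫⁻ y in ball x s, ‖qDiff q (heightDilation v t q) k f y‖ₑ ∂μ ≤
      (∏ j ∈ Finset.range k, (1 + ‖q ^ j‖ₑ)) *
        ∫⁻ y in ball x (s + k * ((q - 1) * (2 * t x))), ‖f y‖ₑ ∂μ := by
  set δ := (q - 1) * (2 * t x)
  have : 0 ≤ δ := mul_nonneg (sub_nonneg.2 hq) (by positivity)
  set S : ℕ → Set E := fun j => ball x (s + j * δ)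
  have hmono : ∀ j < k, S j ⊆ S (j + 1) := fun j _ => ball_subset_ball (by gcongr; simp)
  have hmaps : ∀ j < k, MapsTo (heightDilation v t q) (S j) (S (j + 1)) := fun j hj => by
    have hj : L * (s + j * δ) ≤ t x := hs.trans' (by gcongr)
    convert h.mapsTo_heightDilation_ball hj hq using 2
    push_cast
    ring
  simpa [S] using setLIntegral_enorm_qDiff_le (h.continuous_heightDilation q).measurable
    (h.map_heightDilation_le_self hq) (fun _ => isOpen_ball.measurableSet) hmono hmaps hf

lemma isHeightScaling (h : IsHeight v t L) (hq : 1 < q) (a : E) (r : ℝ) :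
    IsHeightScaling μ q (heightDilation v t q) t (heightCylinder v t a r) where
  one_lt := hq
  measurable_map := (h.continuous_heightDilation q).measurable
  measurable_height := h.lipschitz.continuous.measurable
  measurableSet_region :=
    (isOpen_lt ((h.continuous_heightDilation 0).dist continuous_const)
      continuous_const).measurableSet
  mapsTo x hx := by
    rwa [heightCylinder, mem_ofPred_eq, h.heightDilation_heightDilation, zero_mul]
  height_map := h.height_heightDilation q
  map_le := h.map_heightDilation_le (one_pos.trans hq)

end Measure

end IsHeight

section Polynomials

variable {d n : ℕ} {P : EuclideanSpace ℝ (Fin d) → ℝ}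

lemma measurable_of_mem_polyLE (hP : P ∈ PolyLE d n) : Measurable P := by
  obtain ⟨p, -, hpP⟩ := hP
  rw [← funext hpP]
  exact ((MvPolynomial.continuous_eval p).comp (by fun_prop)).measurable

lemma exists_polynomial_eval_line (hP : P ∈ PolyLE d n) (x w : EuclideanSpace ℝ (Fin d)) :
    ∃ A : Polynomial ℝ, A.degree < (n + 1 : ℕ) ∧ ∀ s : ℝ, P (x + s • w) = A.eval s := by
  obtain ⟨p, hp, hpP⟩ := hP
  set line : Fin d → Polynomial ℝ := fun i => Polynomial.C (x i) + Polynomial.X * Polynomial.C (w i)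
  refine ⟨MvPolynomial.aeval line p, ?_, fun s => ?_⟩
  · have hdeg := MvPolynomial.aeval_natDegree_le p hp line (n := 1) fun i => by
      simp only [line]
      compute_degree
    rw [mul_one] at hdeg
    exact Polynomial.degree_le_natDegree.trans_lt (by exact_mod_cast Nat.lt_succ_of_le hdeg)
  · rw [← hpP, ← Polynomial.coe_evalRingHom, MvPolynomial.aeval_def, MvPolynomial.eval₂_comp_left,
      MvPolynomial.eval, MvPolynomial.coe_eval₂Hom]
    congr 1
    · ext
      simp
    · funext i
      simpa [line] using mul_comm s (w i)

lemma IsHeight.qDiff_heightDilation_eq_zero {v : EuclideanSpace ℝ (Fin d)}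
    {t : EuclideanSpace ℝ (Fin d) → ℝ} {L : ℝ≥0} (h : IsHeight v t L) (q : ℝ)
    (hP : P ∈ PolyLE d n) : qDiff q (heightDilation v t q) (n + 1) P = 0 := by
  choose A hdeg hA using fun x => exists_polynomial_eval_line hP x v
  have hPA : P = fun x => (A (heightDilation v t 0 x)).eval (t x) := funext fun x => by
    rw [← hA, heightDilation_zero_add_smul]
  rw [hPA]
  refine qDiff_eval_eq_zero (h.height_heightDilation q) (fun x => ?_) fun x => hdeg _
  rw [h.heightDilation_heightDilation, zero_mul]

end Polynomials

section Cubes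

variable {d : ℕ}

lemma ball_subset_cube (y : EuclideanSpace ℝ (Fin d)) (ρ : ℝ) : ball y ρ ⊆ cube y (2 * ρ) := by
  intro x hx i
  rw [mul_div_cancel_left₀ ρ two_ne_zero]
  exact (PiLp.norm_apply_le (x - y) i).trans (mem_ball_iff_norm.1 hx).le

lemma cube_subset_ball (y : EuclideanSpace ℝ (Fin d)) {ρ : ℝ} (hρ : 0 < ρ) :
    cube y (2 * (2 * ρ)) ⊆ ball y ((2 * d + 1) * ρ) := by
  intro x hx
  have hcoord : ∀ i, dist (x i) (y i) ≤ 2 * ρ := fun i => (hx i).trans_eq (by ring)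
  rw [mem_ball]
  calc dist x y = √(∑ i, dist (x i) (y i) ^ 2) := EuclideanSpace.dist_eq x y
    _ ≤ ∑ i, dist (x i) (y i) := by
        rw [Real.sqrt_le_left (Finset.sum_nonneg fun i _ => dist_nonneg)]
        exact Finset.sum_sq_le_sq_sum_of_nonneg fun i _ => dist_nonneg
    _ ≤ ∑ _i : Fin d, 2 * ρ := Finset.sum_le_sum fun i _ => hcoord i
    _ = 2 * d * ρ := by
        rw [Finset.sum_const, Finset.card_univ, Fintype.card_fin, nsmul_eq_mul]
        ring
    _ < (2 * d + 1) * ρ := by linarith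

end Cubes

section Seminorm

variable {d n : ℕ} {ω : ℝ → ℝ} {D : Set (EuclideanSpace ℝ (Fin d))}
  {f g : EuclideanSpace ℝ (Fin d) → ℝ}

lemma zygSeminormInt_congr_ae (hfg : f =ᵐ[volume.restrict D] g) :
    zygSeminormInt ω n D f = zygSeminormInt ω n D g := by
  unfold zygSeminormInt
  refine iSup_congr fun y => iSup_congr fun l => iSup_congr fun hl => iSup_congr fun hQ => ?_
  have hQD : cube y l ⊆ D := fun x hx => hQ fun i => (hx i).trans (by linarith)
  refine iInf_congr fun P => iInf_congr fun _ => congrArg _ (lintegral_congr_ae ?_)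
  filter_upwards [ae_restrict_of_ae_restrict_of_subset hQD hfg] with x hx
  rw [hx]

lemma exists_mem_polyLE_lintegral_cube_le {S : ℝ≥0∞} (hS : zygSeminormInt ω n D f < S)
    (hStop : S ≠ ⊤) {y : EuclideanSpace ℝ (Fin d)} {l : ℝ} (hl : 0 < l)
    (hQ : cube y (2 * l) ⊆ D) :
    ∃ P ∈ PolyLE d n, ∫⁻ x in cube y l, ‖f x - P x‖ₑ ≤ S * ENNReal.ofReal (ω l * l ^ d) := by
  have hlt := (le_iSup₂_of_le y l (le_iSup₂_of_le hl hQ le_rfl)).trans_lt hS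
  simp only [iInf_lt_iff] at hlt
  obtain ⟨P, hP, hPlt⟩ := hlt
  refine ⟨P, hP, ?_⟩
  rw [mul_comm, ← div_eq_mul_inv] at hPlt
  simpa only [Real.enorm_eq_ofReal_abs] using
    (ENNReal.div_le_iff_le_mul (Or.inr hStop) (Or.inl ENNReal.ofReal_ne_top)).1 hPlt.le

/-- Campanato-type approximability of `f` by polynomials: on each ball of radius `ρ ≤ R`
whose `κ`-fold enlargement lies in `D`, the mean distance of `f` to the polynomials of degree at
most `n` is at most `K`. -/
def HasPolyApproxOnBalls (n : ℕ) (D : Set (EuclideanSpace ℝ (Fin d))) (K : ℝ≥0∞) (κ R : ℝ)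
    (f : EuclideanSpace ℝ (Fin d) → ℝ) : Prop :=
  ∀ y ρ, 0 < ρ → ρ ≤ R → ball y (κ * ρ) ⊆ D →
    ∃ P ∈ PolyLE d n, ∫⁻ x in ball y ρ, ‖f x - P x‖ₑ ≤ K * volume (ball y ρ)

lemma exists_hasPolyApproxOnBalls (hω_nonneg : ∀ l > 0, 0 ≤ ω l)
    (hω : IsBoundedUnder (· ≤ ·) (𝓝[>] 0) ω) (hfin : zygSeminormInt ω n D f < ⊤) :
    ∃ K ≠ ⊤, ∃ R > 0, HasPolyApproxOnBalls n D K (2 * d + 1) R f := by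
  obtain ⟨M, hM⟩ := hω
  obtain ⟨R, hR, hωM⟩ := mem_nhdsGT_iff_exists_Ioo_subset.1 (eventually_map.1 hM)
  obtain ⟨S, hS, hStop⟩ := exists_between hfin
  set V := volume (ball (0 : EuclideanSpace ℝ (Fin d)) 1)
  have hV0 : V ≠ 0 := (measure_ball_pos _ _ one_pos).ne'
  have hVtop : V ≠ ⊤ := measure_ball_lt_top.ne
  set C := S * (ENNReal.ofReal M * ENNReal.ofReal (2 ^ d)) with hC
  have hCtop : C ≠ ⊤ := by finiteness
  refine ⟨C / V, ENNReal.div_ne_top hCtop hV0, R / 4, div_pos hR four_pos,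
    fun y ρ hρ hρR hball => ?_⟩
  obtain ⟨P, hP, hPle⟩ := exists_mem_polyLE_lintegral_cube_le hS hStop.ne (mul_pos two_pos hρ)
    ((cube_subset_ball y hρ).trans hball)
  refine ⟨P, hP, ?_⟩
  have hωρ : ω (2 * ρ) ≤ M := hωM ⟨by positivity, by linarith [mem_Ioi.1 hR]⟩
  calc ∫⁻ x in ball y ρ, ‖f x - P x‖ₑ
      ≤ ∫⁻ x in cube y (2 * ρ), ‖f x - P x‖ₑ := lintegral_mono_set (ball_subset_cube y ρ)
    _ ≤ S * ENNReal.ofReal (ω (2 * ρ) * (2 * ρ) ^ d) := hPle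
    _ ≤ C * ENNReal.ofReal (ρ ^ d) := by
        rw [hC, ENNReal.ofReal_mul (hω_nonneg _ (by positivity)), mul_pow,
          ENNReal.ofReal_mul (by positivity), mul_assoc S, mul_assoc (ENNReal.ofReal M)]
        gcongr
    _ = C / V * volume (ball y ρ) := by
        rw [Measure.addHaar_ball_of_pos _ _ hρ, finrank_euclideanSpace_fin,
          mul_comm (ENNReal.ofReal (ρ ^ d)), ← mul_assoc (C / V), ENNReal.div_mul_cancel hV0 hVtop]

end Seminorm

lemma addHaar_ball_mul_le {E : Type*} [NormedAddCommGroup E] [NormedSpace ℝ E]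
    [FiniteDimensional ℝ E] [MeasurableSpace E] [BorelSpace E] (μ : Measure E)
    [μ.IsAddHaarMeasure] (x : E) (ρ : ℝ) {m : ℝ} (hm : 0 < m) :
    μ (ball x (m * ρ)) ≤ ENNReal.ofReal (m ^ Module.finrank ℝ E) * μ (closedBall x ρ) := by
  rw [Measure.addHaar_ball_mul_of_pos _ _ hm, ← Measure.addHaar_ball_center μ x]
  gcongr
  exact ball_subset_closedBall

namespace IsHeight

variable {d n : ℕ} {D : Set (EuclideanSpace ℝ (Fin d))} {K : ℝ≥0∞} {κ c r : ℝ}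
  {f t : EuclideanSpace ℝ (Fin d) → ℝ} {v a x : EuclideanSpace ℝ (Fin d)} {L : ℝ≥0}

-- The radius grows from `6 * (c * t x)` to `(n + 7) * (c * t x)` under the `n + 1` dilations
-- composed in the `q`-difference; `5` is the Vitali enlargement factor.
lemma lintegral_qDiff_closedBall_le (h : IsHeight v t L) (hf : Measurable f)
    (happrox : HasPolyApproxOnBalls n D K κ r f) (hc : 0 < c) (hcL : L * ((n + 7) * c) ≤ 1)
    (hx : 0 < t x) (hxr : (n + 7) * (c * t x) ≤ r)
    (hxD : ball x (κ * ((n + 7) * (c * t x))) ⊆ D) :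
    ∫⁻ y in closedBall x (5 * (c * t x)),
        ‖qDiff (1 + c / 2) (heightDilation v t (1 + c / 2)) (n + 1) f y‖ₑ ≤
      (∏ j ∈ Finset.range (n + 1), (1 + ‖(1 + c / 2) ^ j‖ₑ)) * K *
        ENNReal.ofReal ((n + 7) ^ d) * volume (closedBall x (c * t x)) := by
  set q := 1 + c / 2 with hq
  set φ := heightDilation v t q
  set ρ := c * t x with hρ
  have hρ0 : 0 < ρ := mul_pos hc hx
  obtain ⟨P, hP, hPle⟩ := happrox x ((n + 7) * ρ) (by positivity) hxr hxD
  have hqP : qDiff q φ (n + 1) f = qDiff q φ (n + 1) (f - P) := by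
    rw [qDiff_sub, h.qDiff_heightDilation_eq_zero q hP, sub_zero]
  have hradius : 6 * ρ + (n + 1 : ℕ) * ((q - 1) * (2 * t x)) = (n + 7) * ρ := by
    rw [hq, hρ]
    push_cast
    ring
  have hLρ : L * ((n + 7) * ρ) ≤ t x :=
    calc L * ((n + 7) * ρ) = L * ((n + 7) * c) * t x := by ring
      _ ≤ t x := mul_le_of_le_one_left hx.le hcL
  calc ∫⁻ y in closedBall x (5 * ρ), ‖qDiff q φ (n + 1) f y‖ₑ
      ≤ ∫⁻ y in ball x (6 * ρ), ‖qDiff q φ (n + 1) (f - P) y‖ₑ := by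
        rw [hqP]
        exact lintegral_mono_set (closedBall_subset_ball (by linarith))
    _ ≤ (∏ j ∈ Finset.range (n + 1), (1 + ‖q ^ j‖ₑ)) *
          ∫⁻ y in ball x ((n + 7) * ρ), ‖(f - P) y‖ₑ := by
        rw [← hradius] at hLρ ⊢
        exact h.lintegral_qDiff_ball_le (by linarith) (hf.sub (measurable_of_mem_polyLE hP)) hx.le
          hLρ
    _ ≤ (∏ j ∈ Finset.range (n + 1), (1 + ‖q ^ j‖ₑ)) *
          (K * (ENNReal.ofReal ((n + 7) ^ d) * volume (closedBall x ρ))) := by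
        gcongr
        refine hPle.trans (mul_le_mul_right ?_ K)
        simpa using addHaar_ball_mul_le volume x ρ (m := n + 7) (by positivity)
    _ = _ := by ring

lemma integrableOn_qDiff_heightCylinder (h : IsHeight v t L) (hf : Measurable f) (hK : K ≠ ⊤)
    (hκ : 1 ≤ κ) (happrox : HasPolyApproxOnBalls n D K κ r f)
    (hD : ∀ x ∈ ball a r, 0 < t x → x ∈ D) (hc : 0 < c) (hκc : L * (κ * ((n + 7) * c)) = 1) :
    IntegrableOn (qDiff (1 + c / 2) (heightDilation v t (1 + c / 2)) (n + 1) f)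
      (heightCylinder v t a (r / 4) ∩ t ⁻¹' Ioo 0 (r / 4)) := by
  have hL := h.one_le
  have hn7 : (1 : ℝ) < n + 7 := by linarith [n.cast_nonneg (α := ℝ)]
  have hLc : L * ((n + 7) * c) ≤ 1 := by
    rw [← hκc]
    exact mul_le_mul_of_nonneg_left (le_mul_of_one_le_left (by positivity) hκ) L.2
  have hnc : (n + 7) * c ≤ 1 := (le_mul_of_one_le_left (by positivity) hL).trans hLc
  have hc1 : c ≤ 1 := (le_mul_of_one_le_left hc.le hn7.le).trans hnc
  set S := heightCylinder v t a (r / 4) ∩ t ⁻¹' Ioo 0 (r / 4)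
  have hball : ∀ x ∈ S, ball x (κ * ((n + 7) * (c * t x))) ⊆ {y ∈ ball a r | 0 < t y} :=
    fun x hx => h.ball_subset_of_mem_heightCylinder hx <| le_of_eq <|
      calc L * (κ * ((n + 7) * (c * t x))) = L * (κ * ((n + 7) * c)) * t x := by ring
        _ = t x := by rw [hκc, one_mul]
  have hlt : ∀ x ∈ S, c * t x < κ * ((n + 7) * (c * t x)) := fun x hx => by
    have hρ : 0 < c * t x := mul_pos hc hx.2.1
    exact (lt_mul_of_one_lt_left hρ hn7).trans_le (le_mul_of_one_le_left (by positivity) hκ)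
  have hprod : ∏ j ∈ Finset.range (n + 1), (1 + ‖(1 + c / 2) ^ j‖ₑ) ≠ ⊤ :=
    ENNReal.prod_ne_top fun j _ => by finiteness
  refine ⟨(measurable_qDiff (h.continuous_heightDilation _).measurable _ hf).aestronglyMeasurable,
    ?_⟩
  refine (setLIntegral_le_of_forall_closedBall (r := fun x => c * t x) (R := r / 4)
    (U := ball a r) (fun x hx => mul_pos hc hx.2.1) (fun x hx => ?_) (fun x hx => ?_)
    fun x hx => h.lintegral_qDiff_closedBall_le hf happrox hc hLc hx.2.1 ?_ ?_).trans_lt ?_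
  · exact (mul_le_of_le_one_left hx.2.1.le hc1).trans hx.2.2.le
  · exact (closedBall_subset_ball (hlt x hx)).trans ((hball x hx).trans (sep_subset _ _))
  · rw [← mul_assoc]
    linarith [mul_le_of_le_one_left hx.2.1.le hnc, hx.2.1, hx.2.2]
  · exact (hball x hx).trans fun y hy => hD y hy.1 hy.2
  · finiteness

lemma integrableOn_heightCylinder_of_pos (h : IsHeight v t L) (hr : 0 < r)
    (hloc : LocallyIntegrableOn f D) (hD : ∀ x ∈ ball a r, 0 < t x → x ∈ D) {ε : ℝ} (hε : 0 < ε) :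
    IntegrableOn f (heightCylinder v t a (r / 4) ∩ t ⁻¹' Ioo ε (r / 4)) := by
  have hcompact : IsCompact (closedBall a (r / 2) ∩ t ⁻¹' Ici ε) :=
    (isCompact_closedBall a _).inter_right (isClosed_Ici.preimage h.lipschitz.continuous)
  refine (hloc.integrableOn_compact_subset ?_ hcompact).mono_set ?_
  · exact fun x hx => hD x (closedBall_subset_ball (half_lt_self hr) hx.1) (hε.trans_le hx.2)
  · rintro x ⟨hxa, hεx, hxr⟩
    have hxa' := h.dist_lt_of_mem_heightCylinder hxa
    rw [abs_of_pos (hε.trans hεx)] at hxa'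
    exact ⟨mem_closedBall.2 (by linarith), hεx.le⟩

theorem integrableAtFilter_nhdsWithin (h : IsHeight v t L) (hf : Measurable f) (hK : K ≠ ⊤)
    (hκ : 1 ≤ κ) (hr : 0 < r) (happrox : HasPolyApproxOnBalls n D K κ r f)
    (hloc : LocallyIntegrableOn f D) (hD : ∀ x ∈ ball a r, x ∈ D ↔ 0 < t x) (ha : a ∉ D) :
    IntegrableAtFilter f (𝓝[D] a) := by
  have hL := h.one_le
  set c : ℝ := (κ * L * (n + 7))⁻¹ with hc_def
  have hc : 0 < c := by positivity
  have hκc : L * (κ * ((n + 7) * c)) = 1 := by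
    rw [hc_def]
    field_simp
  have hq : 1 < 1 + c / 2 := by linarith
  have hslab : IntegrableOn f (heightCylinder v t a (r / 4) ∩ t ⁻¹' Ioo 0 (r / 4)) := by
    refine (h.isHeightScaling hq a (r / 4)).integrableOn_of_integrableOn_qDiff (by positivity) hf
      (fun ε hε => h.integrableOn_heightCylinder_of_pos hr hloc (fun x hx => (hD x hx).2) hε)
      ((h.integrableOn_qDiff_heightCylinder hf hK hκ happrox (fun x hx => (hD x hx).2) hc
        hκc).mono_set ?_)
    refine inter_subset_inter_right _ (preimage_mono (Ioo_subset_Ioo_right ?_))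
    exact div_le_self (by positivity) (one_le_pow₀ hq.le)
  have hta : t a ≤ 0 := not_lt.1 fun hta => ha ((hD a (mem_ball_self hr)).2 hta)
  refine ⟨_, inter_mem_nhdsWithin D (ball_mem_nhds a (show 0 < r / (8 * L) by positivity)),
    hslab.mono_set ?_⟩
  rintro x ⟨hxD, hxa⟩
  have hLx : L * dist x a < r / 8 := by
    rw [mem_ball, lt_div_iff₀ (by positivity)] at hxa
    linarith
  have hxr : dist x a < r / 8 := (le_mul_of_one_le_left dist_nonneg hL).trans_lt hLx
  have htx : 0 < t x := (hD x (mem_ball.2 (by linarith))).1 hxD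
  have htx' := (abs_le.1 (h.abs_sub_le x a)).2
  have hproj := h.dist_heightDilation_le 0 x
  rw [zero_sub, abs_neg, abs_one, one_mul, abs_of_pos htx] at hproj
  refine ⟨?_, htx, by linarith⟩
  exact (dist_triangle _ x a).trans_lt (by linarith)

end IsHeight

/-- Near `a`, the set `D` is the region above the graph of a Lipschitz function, in some
direction; `t` is the height above that graph. -/
def IsLipschitzEpigraphAt {E : Type*} [NormedAddCommGroup E] [NormedSpace ℝ E] (D : Set E)
    (a : E) : Prop :=
  ∃ (v : E) (t : E → ℝ) (L : ℝ≥0), IsHeight v t L ∧ ∀ᶠ x in 𝓝 a, (x ∈ D ↔ 0 < t x)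

section LipschitzDomain

variable {d : ℕ} {D : Set (EuclideanSpace ℝ (Fin d))}

lemma isHeight_comp_isometryEquiv
    (g : EuclideanSpace ℝ (Fin d) ≃ᵢ EuclideanSpace ℝ (Fin d)) {j : Fin d} {K : ℝ≥0}
    {A : EuclideanSpace ℝ (Fin d) → ℝ} (hA : LipschitzWith K A)
    (hAj : ∀ x y : EuclideanSpace ℝ (Fin d), (∀ i, i ≠ j → x i = y i) → A x = A y) :
    IsHeight (g.toRealAffineIsometryEquiv.linearIsometryEquiv.symm (EuclideanSpace.single j 1))
      (fun x => g x j - A (g x)) (1 + K) where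
  norm_le := by simp
  lipschitz := by
    have hcoord : LipschitzWith 1 fun x => g x j := LipschitzWith.of_dist_le_mul fun x y => by
      rw [NNReal.coe_one, one_mul, ← g.dist_eq, dist_eq_norm (g x)]
      exact PiLp.norm_apply_le (g x - g y) j
    simpa using hcoord.sub (hA.comp g.isometry.lipschitz)
  shift x c := by
    set e := g.toRealAffineIsometryEquiv
    set v := e.linearIsometryEquiv.symm (EuclideanSpace.single j 1) with hv
    have hgv : g (x + c • v) = g x + c • EuclideanSpace.single j 1 := by
      have hmap : e (c • v +ᵥ x) = e.linearIsometryEquiv (c • v) +ᵥ e x := e.map_vadd x (c • v)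
      rwa [vadd_eq_add, vadd_eq_add, add_comm, map_smul, hv,
        LinearIsometryEquiv.apply_symm_apply, add_comm _ (e x)] at hmap
    have hAg : A (g x + c • EuclideanSpace.single j 1) = A (g x) :=
      hAj _ _ fun i hi => by simp [hi]
    rw [hgv, hAg]
    simp only [PiLp.add_apply, PiLp.smul_apply, PiLp.single_apply, if_true, smul_eq_mul]
    ring

lemma isLipschitzEpigraphAt_of_isLipschitzDomain (hD : IsLipschitzDomain D)
    {a : EuclideanSpace ℝ (Fin d)} (ha : a ∈ frontier D) : IsLipschitzEpigraphAt D a := by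
  obtain ⟨-, -, -, δ, R, -, hR, hchart⟩ := hD
  obtain ⟨g, j, A, hga, hA, hAj, hgD⟩ := hchart a ha
  refine ⟨_, _, _, isHeight_comp_isometryEquiv g hA hAj, ?_⟩
  filter_upwards [ball_mem_nhds a (half_pos hR)] with x hx
  have hcube : g x ∈ cube 0 R := by
    have hgx : g x ∈ ball 0 (R / 2) := by rwa [mem_ball, ← hga, g.dist_eq]
    simpa only [mul_div_cancel₀ R two_ne_zero] using ball_subset_cube _ _ hgx
  calc x ∈ D ↔ g x ∈ g '' D ∩ cube 0 R := by
        rw [mem_inter_iff, g.injective.mem_set_image, and_iff_left hcube]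
    _ ↔ 0 < g x j - A (g x) := by
        rw [hgD, mem_sep_iff, and_iff_right hcube, sub_pos]

end LipschitzDomain

section Integrability

variable {d n : ℕ} {ω : ℝ → ℝ} {D : Set (EuclideanSpace ℝ (Fin d))}
  {f : EuclideanSpace ℝ (Fin d) → ℝ}

lemma IsLipschitzEpigraphAt.integrableAtFilter_nhdsWithin {a : EuclideanSpace ℝ (Fin d)}
    (hDa : IsLipschitzEpigraphAt D a) (ha : a ∉ D) (hf : Measurable f)
    (hloc : LocallyIntegrableOn f D) (hω_nonneg : ∀ l > 0, 0 ≤ ω l)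
    (hω : IsBoundedUnder (· ≤ ·) (𝓝[>] 0) ω) (hfin : zygSeminormInt ω n D f < ⊤) :
    IntegrableAtFilter f (𝓝[D] a) := by
  obtain ⟨v, t, L, h, hDt⟩ := hDa
  obtain ⟨r, hr, hDt⟩ := Metric.eventually_nhds_iff_ball.1 hDt
  obtain ⟨K, hK, R, hR, happrox⟩ := exists_hasPolyApproxOnBalls hω_nonneg hω hfin
  refine h.integrableAtFilter_nhdsWithin hf hK (by linarith [d.cast_nonneg (α := ℝ)])
    (lt_min hr hR) (fun y ρ hρ hρr => happrox y ρ hρ (hρr.trans (min_le_right r R))) hloc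
    (fun x hx => hDt x (ball_subset_ball (min_le_left r R) hx)) ha

theorem statement_9_general (hω_nonneg : ∀ l > 0, 0 ≤ ω l)
    (hω : IsBoundedUnder (· ≤ ·) (𝓝[>] 0) ω) (hDo : IsOpen D) (hDb : Bornology.IsBounded D)
    (hDfr : ∀ a ∈ frontier D, IsLipschitzEpigraphAt D a) (hloc : LocallyIntegrableOn f D)
    (hfin : zygSeminormInt ω n D f < ⊤) : IntegrableOn f D := by
  obtain ⟨g, hg, hfg⟩ := hloc.aestronglyMeasurable
  have hgfin : zygSeminormInt ω n D g < ⊤ := by rwa [← zygSeminormInt_congr_ae hfg]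
  have hgloc : LocallyIntegrableOn g D := hloc.congr hfg
  refine (integrable_congr hfg).2 (integrableOn_of_forall_closure_integrableAtFilter hDb ?_)
  intro a ha
  by_cases haD : a ∈ D
  · exact hgloc a haD
  · have hafr : a ∈ frontier D := hDo.frontier_eq ▸ ⟨ha, haD⟩
    exact (hDfr a hafr).integrableAtFilter_nhdsWithin haD hg.measurable hgloc hω_nonneg hω hgfin

end Integrability

/-- On a bounded Lipschitz domain, any locally integrable `f` with finite interior
Zygmund seminorm belongs to `L¹(D)`. -/
theorem statement_9 {d : ℕ} (n : ℕ) (ω : ℝ → ℝ) (hω : IsModulusOfOrder ω n)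
    (D : Set (EuclideanSpace ℝ (Fin d))) (hD : IsLipschitzDomain D)
    (f : EuclideanSpace ℝ (Fin d) → ℝ)
    (hloc : LocallyIntegrableOn f D)
    (hfin : zygSeminormInt ω n D f < ⊤) :
    IntegrableOn f D := by
  have hωbdd : IsBoundedUnder (· ≤ ·) (𝓝[>] 0) ω :=
    ⟨ω 1, eventually_map.2 <| mem_of_superset (Ioo_mem_nhdsGT one_pos) fun _ hl =>
      hω.monotoneOn (mem_Ici.2 hl.1.le) (mem_Ici.2 zero_le_one) hl.2.le⟩
  exact statement_9_general (fun l hl => hω.nonneg l hl.le) hωbdd hD.1 hD.2.2.1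
    (fun _ ha => isLipschitzEpigraphAt_of_isLipschitzDomain hD ha) hloc hfin

end
end
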